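/- arXiv:1802.06253 — 2 statements merged into one kernel-verified Lean document; each statement's English description precedes it below -/
import Mathlib

section
/- Let $I = (q_0,\ldots,q_m) \subset \mathbb{C}[x_0,\ldots,x_m]$ be a complete intersection ideal generated by forms of degree $d \geq 2$ (i.e., the $q_i$ have no common projective zero). Then the set of points $[Q] \in \mathbb{P}(I_d)$ such that $Q = z^d$ for some linear form $z$ is finite. -/
open MvPolynomial

noncomputable section

/-- The linear form with coefficient vector `p`. -/
def linform {n : ℕ} (p : Fin n → ℂ) : MvPolynomial (Fin n) ℂ :=
  ∑ i, MvPolynomial.C (p i) * MvPolynomial.X i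

/-- The apolarity pairing `⟨f, g⟩ = ∑_α f_α g_α α!` between polynomial spaces
(`f` viewed in `S^d U^*`, `g` in `S^d U`). -/
def apolar {n : ℕ} (f g : MvPolynomial (Fin n) ℂ) : ℂ :=
  ∑ α ∈ f.support, f.coeff α * g.coeff α * ∏ i, ((α i).factorial : ℂ)

namespace Derivation

/-- A derivation over a domain of characteristic zero vanishes on algebraic elements. -/
theorem eq_zero_of_isAlgebraic {A B : Type*} [CommRing A] [CommRing B] [IsDomain B] [Algebra A B]
    [FaithfulSMul A B] [CharZero A] [IsDomain A] (D : Derivation A B B) {x : B}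
    (hx : IsAlgebraic A x) : D x = 0 := by
  obtain ⟨p, hp0, hpx⟩ := hx
  induction hn : p.natDegree using Nat.strong_induction_on generalizing p with
  | _ n ih =>
    have hn0 : p.natDegree ≠ 0 := fun h => by
      rw [Polynomial.eq_C_of_natDegree_eq_zero h, Polynomial.aeval_C,
        FaithfulSMul.algebraMap_eq_zero_iff] at hpx
      rw [Polynomial.eq_C_of_natDegree_eq_zero h, hpx, Polynomial.C_0] at hp0
      exact hp0 rfl
    by_cases hd : Polynomial.aeval x (Polynomial.derivative p) = 0
    · refine ih _ (hn ▸ Polynomial.natDegree_derivative_lt hn0) _ (fun h => ?_) hd rfl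
      exact hn0 (Polynomial.derivative_eq_zero.mp h)
    · have h := D.map_aeval p x
      rw [hpx, map_zero, smul_eq_mul] at h
      exact (mul_eq_zero.mp h.symm).resolve_left hd

end Derivation

namespace MvPolynomial

variable {σ K : Type*} [Field K]

theorem homogeneousComponent_mul_of_isHomogeneous_right {R : Type*} [CommSemiring R]
    {f g : MvPolynomial σ R} {d e : ℕ} (hg : g.IsHomogeneous d) (hde : d ≤ e) :
    homogeneousComponent e (f * g) = homogeneousComponent (e - d) f * g := by
  let := gradedAlgebra (σ := σ) (R := R)
  rw [← decomposition.decompose'_apply, ← decomposition.decompose'_apply]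
  exact DirectSum.coe_decompose_mul_of_right_mem_of_le (homogeneousSubmodule σ R) hg hde

theorem IsHomogeneous.degree_eq {R : Type*} [CommSemiring R] {f : MvPolynomial σ R} {e : ℕ}
    (hf : f.IsHomogeneous e) {α : σ →₀ ℕ} (hα : α ∈ f.support) : α.degree = e := by
  rw [Finsupp.degree_eq_weight_one (R := ℕ)]
  exact hf (mem_support_iff.mp hα)

/-- Polynomials without a common zero outside the origin generate an ideal containing a power of
the irrelevant ideal. -/
theorem exists_pow_idealOfVars_le [IsAlgClosed K] [Finite σ] {ι : Type*}
    {q : ι → MvPolynomial σ K} (hq : ∀ p : σ → K, (∀ i, eval p (q i) = 0) → p = 0) :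
    ∃ N : ℕ, idealOfVars σ K ^ N ≤ Ideal.span (Set.range q) := by
  refine Ideal.exists_pow_le_of_le_radical_of_fg ?_ (idealOfVars_fg σ K)
  rw [← vanishingIdeal_zeroLocus_eq_radical (K := K), Ideal.span_le]
  rintro _ ⟨j, rfl⟩ p hp
  have hp0 : p = 0 := hq p fun i => by
    simpa [aeval_eq_eval] using hp (q i) (Ideal.subset_span ⟨i, rfl⟩)
  simp [hp0]

/-- The polynomial ring is finite over the subalgebra generated by forms without a common
projective zero. -/
theorem finite_adjoin_of_isHomogeneous [IsAlgClosed K] [Finite σ] {ι : Type*} [Fintype ι]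
    {q : ι → MvPolynomial σ K} {d : ℕ} (hd : 0 < d) (hhom : ∀ i, (q i).IsHomogeneous d)
    (hq : ∀ p : σ → K, (∀ i, eval p (q i) = 0) → p = 0) :
    Module.Finite (Algebra.adjoin K (Set.range q)) (MvPolynomial σ K) := by
  obtain ⟨N, hN⟩ := exists_pow_idealOfVars_le hq
  set A := Algebra.adjoin K (Set.range q)
  set M : Submodule A (MvPolynomial σ K) :=
    Submodule.span A ((fun α => monomial α (1 : K)) '' {α | α.degree ≤ N + d})
  have mem_of_homogeneous : ∀ e (f : MvPolynomial σ K), f.IsHomogeneous e → f ∈ M := by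
    intro e
    induction e using Nat.strong_induction_on with
    | _ e ih =>
      intro f hf
      by_cases he : e ≤ N + d
      · rw [f.as_sum]
        refine Submodule.sum_mem _ fun α hα => ?_
        have hα' : α.degree ≤ N + d := by
          rw [hf.degree_eq hα]
          exact he
        have := M.smul_mem (algebraMap K A (coeff α f)) (Submodule.subset_span ⟨α, hα', rfl⟩)
        rwa [algebraMap_smul, smul_monomial, smul_eq_mul, mul_one] at this
      · have hfN : f ∈ idealOfVars σ K ^ N := by
          rw [mem_pow_idealOfVars_iff]
          intro α hα
          rw [hf.degree_eq hα]
          lia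
        obtain ⟨g, hg⟩ := Ideal.mem_span_range_iff_exists_fun.mp (hN hfN)
        have hfe : f = ∑ i, homogeneousComponent (e - d) (g i) * q i := by
          rw [← (homogeneousComponent_of_mem hf).trans (if_pos rfl), ← hg, map_sum]
          exact Finset.sum_congr rfl fun i _ =>
            homogeneousComponent_mul_of_isHomogeneous_right (hhom i) (by lia)
        rw [hfe]
        refine Submodule.sum_mem _ fun i _ => ?_
        have := M.smul_mem (⟨q i, Algebra.subset_adjoin ⟨i, rfl⟩⟩ : A)
          (ih (e - d) (by lia) _ (homogeneousComponent_isHomogeneous (e - d) (g i)))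
        rwa [Subalgebra.smul_def, smul_eq_mul, mul_comm] at this
  have hM : M = ⊤ := eq_top_iff.mpr fun f _ => ?_
  · exact ⟨hM ▸ Submodule.fg_span ((Finsupp.finite_of_degree_le (N + d)).image _)⟩
  rw [← sum_homogeneousComponent f]
  exact Submodule.sum_mem _ fun i _ =>
    mem_of_homogeneous i _ (homogeneousComponent_isHomogeneous i f)

theorem mkDerivation_apply_eq_sum {R : Type*} [CommRing R] [Fintype σ] (v : σ → MvPolynomial σ R)
    (f : MvPolynomial σ R) : mkDerivation R v f = ∑ j, pderiv j f * v j := by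
  classical
  induction f using MvPolynomial.induction_on with
  | C a => simp
  | add f g hf hg => simp [hf, hg, add_mul, Finset.sum_add_distrib]
  | mul_X f i hf =>
    simp [hf, mkDerivation_X, Derivation.leibniz, pderiv_X, Pi.single_apply, add_mul,
      Finset.sum_add_distrib, Finset.mul_sum, mul_assoc]

/-- The Jacobian matrix of a family of polynomials. -/
def jacobianMatrix {ι R : Type*} [CommSemiring R] (q : ι → MvPolynomial σ R) :
    Matrix ι σ (MvPolynomial σ R) :=
  Matrix.of fun i j => pderiv j (q i)

/-- The Jacobian determinant of forms without a common projective zero does not vanish. -/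
theorem det_jacobianMatrix_ne_zero [IsAlgClosed K] [CharZero K] [Fintype σ] [DecidableEq σ]
    {q : σ → MvPolynomial σ K} {d : ℕ} (hd : 0 < d) (hhom : ∀ i, (q i).IsHomogeneous d)
    (hq : ∀ p : σ → K, (∀ i, eval p (q i) = 0) → p = 0) :
    (jacobianMatrix q).det ≠ 0 := by
  intro hdet
  obtain ⟨v, hv, hJv⟩ := Matrix.exists_mulVec_eq_zero_iff.mpr hdet
  have := finite_adjoin_of_isHomogeneous hd hhom hq
  have hker : ∀ a ∈ Algebra.adjoin K (Set.range q), mkDerivation K v a = 0 := by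
    intro a ha
    induction ha using Algebra.adjoin_induction with
    | mem x hx =>
      obtain ⟨i, rfl⟩ := hx
      rw [mkDerivation_apply_eq_sum]
      exact congrFun hJv i
    | algebraMap r => simp
    | add x y _ _ hx hy => simp [hx, hy]
    | mul x y _ _ hx hy => simp [hx, hy]
  let D : Derivation (Algebra.adjoin K (Set.range q)) (MvPolynomial σ K) (MvPolynomial σ K) :=
    { toFun := mkDerivation K v
      map_add' := map_add _
      map_smul' := fun a f => by
        simp [Subalgebra.smul_def, hker a a.2]
      map_one_eq_zero' := by simp
      leibniz' := fun f g => by simp }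
  refine hv ?_
  ext1 j
  rw [← mkDerivation_X K v j]
  exact D.eq_zero_of_isAlgebraic (Algebra.IsIntegral.isIntegral (X j)).isAlgebraic

/-- If a `d`-th power, `2 ≤ d`, is a nontrivial linear combination of the `q i`, then its root
divides the Jacobian determinant of `q`. -/
theorem dvd_det_jacobianMatrix [Fintype σ] [DecidableEq σ] {q : σ → MvPolynomial σ K} {d : ℕ}
    (hd : 2 ≤ d) {l : MvPolynomial σ K} (hl : l ≠ 0) (h : l ^ d ∈ Submodule.span K (Set.range q)) :
    l ∣ (jacobianMatrix q).det := by
  obtain ⟨a, ha⟩ := (Submodule.mem_span_range_iff_exists_fun K).mp h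
  obtain ⟨i, hi⟩ : ∃ i, a i ≠ 0 := by
    by_contra! h0
    exact pow_ne_zero d hl (by simp [← ha, h0])
  have hdvd : ∀ j, l ∣ Matrix.vecMul (fun i => C (a i)) (jacobianMatrix q) j := by
    intro j
    have : Matrix.vecMul (fun i => C (a i)) (jacobianMatrix q) j = pderiv j (l ^ d) := by
      simp [← ha, Matrix.vecMul, dotProduct, jacobianMatrix, smul_eq_C_mul]
    rw [this, Derivation.leibniz_pow]
    have hl : l ∣ l ^ (d - 1) := dvd_pow_self l (by lia)
    rw [smul_eq_mul, nsmul_eq_mul]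
    exact (hl.mul_right _).mul_left _
  have key : l ∣ C (a i) * (jacobianMatrix q).det := by
    have : C (a i) * (jacobianMatrix q).det =
        Matrix.vecMul (Matrix.vecMul (fun i => C (a i)) (jacobianMatrix q))
          (jacobianMatrix q).adjugate i := by
      rw [Matrix.vecMul_vecMul, Matrix.mul_adjugate, Matrix.vecMul_smul, Matrix.vecMul_one]
      simp [mul_comm]
    rw [this]
    exact Finset.dvd_sum fun j _ => (hdvd j).mul_right _
  exact ((isUnit_iff_ne_zero.mpr hi).map C).dvd_mul_left.mp key

/-- Up to scaling, a nonzero polynomial has finitely many divisors. -/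
theorem finite_setOf_rep_dvd {f : MvPolynomial σ K} (hf : f ≠ 0) :
    {x : Projectivization K (MvPolynomial σ K) | x.rep ∣ f}.Finite := by
  have hfin : {y : Associates (MvPolynomial σ K) | y ∣ Associates.mk f}.Finite :=
    @Set.toFinite _ _ (@Finite.of_fintype _ (UniqueFactorizationMonoid.fintypeSubtypeDvd
      (Associates.mk f) (Associates.mk_ne_zero.mpr hf)))
  refine Set.Finite.of_injOn (f := fun x => Associates.mk x.rep)
    (fun x hx => Associates.mk_dvd_mk.mpr hx) ?_ hfin
  intro x _ y _ hxy
  obtain ⟨u, hu⟩ := (Associates.mk_eq_mk_iff_associated.mp hxy).symm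
  obtain ⟨r, -, hr⟩ := isUnit_iff_eq_C_of_isReduced.mp u.isUnit
  rw [← x.mk_rep, ← y.mk_rep, Projectivization.mk_eq_mk_iff']
  exact ⟨r, by rw [← hu, hr, smul_eq_C_mul, mul_comm]⟩

end MvPolynomial

/-- for a complete intersection ideal generated by forms of degree `d ≥ 2`,
the set of points of `ℙ(I_d)` lying on the Veronese variety (i.e. classes of `d`-th powers
of linear forms) is finite. -/
theorem stmt2 (m d : ℕ) (hd : 2 ≤ d)
    (q : Fin (m + 1) → MvPolynomial (Fin (m + 1)) ℂ)
    (hhom : ∀ i, (q i).IsHomogeneous d)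
    (hci : ∀ p : Fin (m + 1) → ℂ, (∀ i, MvPolynomial.eval p (q i) = 0) → p = 0) :
    {x : Projectivization ℂ (MvPolynomial (Fin (m + 1)) ℂ) |
      x.rep ∈ Submodule.span ℂ (Set.range q) ∧
        ∃ z : Fin (m + 1) → ℂ, x.rep = linform z ^ d}.Finite := by
  have hJ := det_jacobianMatrix_ne_zero (by lia) hhom hci
  refine (finite_setOf_rep_dvd (pow_ne_zero d hJ)).subset ?_
  rintro x ⟨hx, z, hz⟩
  have hz0 : linform z ≠ 0 := fun h => x.rep_nonzero (by rw [hz, h, zero_pow (by lia)])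
  rw [Set.mem_ofPred_eq, hz]
  exact pow_dvd_pow_of_dvd (dvd_det_jacobianMatrix hd hz0 (hz ▸ hx)) d
end
end

section
/- Let $A = \mathbb{C}[x_0,\ldots,x_4]/I$ be an artinian complete intersection algebra with $I$ generated by $5$ quadrics (a regular sequence). Then $A$ has the Weak Lefschetz Property: for a general linear form $L \in A_1$ and every $k \geq 0$, the multiplication map $\mu_L : A_k \to A_{k+1}$ has maximal rank (injective or surjective). -/
open MvPolynomial

noncomputable section

/-- The degree-`k` graded piece of `ℂ[x₀,…,x_{n-1}]/I`. -/
def gradedPiece {n : ℕ} (I : Ideal (MvPolynomial (Fin n) ℂ)) (k : ℕ) :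
    Submodule ℂ (MvPolynomial (Fin n) ℂ ⧸ I) :=
  Submodule.map (Ideal.Quotient.mkₐ ℂ I).toLinearMap
    (MvPolynomial.homogeneousSubmodule (Fin n) ℂ k)

namespace QuadricCI

section Graded

variable {σ k : Type*} [Field k]

/-- An ideal of a polynomial ring that contains the homogeneous components of its elements. -/
def IsGraded (I : Ideal (MvPolynomial σ k)) : Prop :=
  ∀ p ∈ I, ∀ n, homogeneousComponent n p ∈ I

attribute [local instance] MvPolynomial.gradedAlgebra in
theorem isGraded_span {s : Set (MvPolynomial σ k)} (hs : ∀ p ∈ s, ∃ d, p.IsHomogeneous d) :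
    IsGraded (Ideal.span s) := by
  intro p hp n
  refine homogeneousComponent_mem_of_mem (Ideal.homogeneous_span _ _ ?_) hp n
  intro x hx
  obtain ⟨d, hd⟩ := hs x hx
  exact ⟨d, hd⟩

attribute [local instance] MvPolynomial.gradedAlgebra in
theorem homogeneousComponent_mul_of_le {y : MvPolynomial σ k} {d n : ℕ} (hy : y.IsHomogeneous d)
    (h : d ≤ n) (a : MvPolynomial σ k) :
    homogeneousComponent n (a * y) = homogeneousComponent (n - d) a * y := by
  have := DirectSum.coe_decompose_mul_of_right_mem_of_le (homogeneousSubmodule σ k) (a := a) hy h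
  rw [← decomposition.decompose'_apply, ← decomposition.decompose'_apply]
  exact this

attribute [local instance] MvPolynomial.gradedAlgebra in
theorem homogeneousComponent_mul_of_not_le {y : MvPolynomial σ k} {d n : ℕ}
    (hy : y.IsHomogeneous d) (h : ¬ d ≤ n) (a : MvPolynomial σ k) :
    homogeneousComponent n (a * y) = 0 := by
  have := DirectSum.coe_decompose_mul_of_right_mem_of_not_le (homogeneousSubmodule σ k) (a := a)
    hy h
  rw [← decomposition.decompose'_apply]
  exact this

theorem mem_of_forall_homogeneousComponent_mem {I : Ideal (MvPolynomial σ k)}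
    {p : MvPolynomial σ k} (h : ∀ n, homogeneousComponent n p ∈ I) : p ∈ I := by
  rw [← sum_homogeneousComponent p]
  exact Ideal.sum_mem _ fun i _ => h i

/-- A homogeneous element of `I + (y)` is congruent mod `I` to a homogeneous multiple of `y`. -/
theorem IsGraded.exists_homogeneous_sub_mul_mem {I : Ideal (MvPolynomial σ k)} (hI : IsGraded I)
    {y p a : MvPolynomial σ k} {d e : ℕ} (hy : y.IsHomogeneous d) (hp : p.IsHomogeneous e)
    (h : p - a * y ∈ I) :
    ∃ b : MvPolynomial σ k, b.IsHomogeneous (e - d) ∧ p - b * y ∈ I ∧ (e < d → b = 0) := by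
  have h1 := hI _ h e
  rw [map_sub, homogeneousComponent_eq_self hp] at h1
  by_cases hde : d ≤ e
  · rw [homogeneousComponent_mul_of_le hy hde] at h1
    exact ⟨_, homogeneousComponent_isHomogeneous _ _, h1, fun h => absurd hde (not_le.2 h)⟩
  · rw [homogeneousComponent_mul_of_not_le hy hde] at h1
    exact ⟨0, isHomogeneous_zero _ _ _, by simpa using h1, fun _ => rfl⟩

theorem eval_smul_of_isHomogeneous {y : MvPolynomial σ k} {d : ℕ} (hy : y.IsHomogeneous d)
    (r : k) (p : σ → k) : eval (r • p) y = r ^ d * eval p y := by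
  rw [eval_eq, eval_eq, Finset.mul_sum]
  refine Finset.sum_congr rfl fun m hm => ?_
  have hd := hy (mem_support_iff.1 hm)
  rw [← hd, Finsupp.weight_apply, Finsupp.sum]
  simp only [Pi.smul_apply, smul_eq_mul, mul_pow, Finset.prod_mul_distrib, Pi.one_apply, mul_one]
  rw [Finset.prod_pow_eq_pow_sum]
  ring

end Graded

section Regular

variable {σ k ι : Type*} [Field k]

/-- Every member of the family is a nonzerodivisor modulo any set of other members. -/
def IsReg (y : ι → MvPolynomial σ k) : Prop :=
  ∀ T : Set ι, ∀ j ∉ T, ∀ a, a * y j ∈ Ideal.span (y '' T) → a ∈ Ideal.span (y '' T)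

theorem mem_span_image_insert {y : ι → MvPolynomial σ k} {j : ι} {T : Set ι}
    {p : MvPolynomial σ k} :
    p ∈ Ideal.span (y '' insert j T) ↔ ∃ a, p - a * y j ∈ Ideal.span (y '' T) := by
  rw [Set.image_insert_eq, Ideal.mem_span_insert]
  constructor
  · rintro ⟨a, z, hz, rfl⟩
    exact ⟨a, by simpa using hz⟩
  · rintro ⟨a, ha⟩
    exact ⟨a, _, ha, by ring⟩

theorem isGraded_span_image {y : ι → MvPolynomial σ k} {d : ι → ℕ}
    (hy : ∀ i, (y i).IsHomogeneous (d i)) (T : Set ι) : IsGraded (Ideal.span (y '' T)) :=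
  isGraded_span (by rintro _ ⟨i, -, rfl⟩; exact ⟨_, hy i⟩)

variable [Finite ι]

theorem IsReg.mem_of_mul_mem_of_exchange {y y' : ι → MvPolynomial σ k} {d : ι → ℕ}
    (hy : ∀ i, (y i).IsHomogeneous (d i)) (hd : ∀ i, 1 ≤ d i) {i₀ : ι}
    (hyy : ∀ i ≠ i₀, y' i = y i) (hreg : IsReg y') {N : ℕ}
    (hN : y' i₀ ^ N ∈ Ideal.span (Set.range y)) (T : Set ι) (hT : i₀ ∉ T) :
    ∀ a, a * y i₀ ∈ Ideal.span (y '' T) → a ∈ Ideal.span (y '' T) := by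
  have himg : ∀ T : Set ι, i₀ ∉ T → y' '' T = y '' T := fun T hT =>
    Set.image_congr fun i hi => hyy i fun h => hT (h ▸ hi)
  induction T using WellFoundedGT.induction with
  | ind T ih =>
  by_cases hall : ∀ j, j ∉ T → j = i₀
  · intro a ha
    have huniv : Set.range y = y '' insert i₀ T := by
      rw [← Set.image_univ]
      congr 1
      symm
      rw [Set.eq_univ_iff_forall]
      intro j
      by_cases hj : j ∈ T
      · exact Or.inr hj
      · exact Or.inl (hall j hj)
    rw [huniv, mem_span_image_insert] at hN
    obtain ⟨c, hc⟩ := hN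
    have h1 : a * y' i₀ ^ N ∈ Ideal.span (y '' T) := by
      have e : a * y' i₀ ^ N = a * (y' i₀ ^ N - c * y i₀) + c * (a * y i₀) := by ring
      rw [e]
      exact add_mem (Ideal.mul_mem_left _ _ hc) (Ideal.mul_mem_left _ _ ha)
    clear hc ha
    induction N with
    | zero => simpa using h1
    | succ N ihN =>
      apply ihN
      rw [← himg T hT]
      apply hreg T i₀ hT
      rw [himg T hT]
      convert h1 using 1
      ring
  · push Not at hall
    obtain ⟨j, hjT, hji⟩ := hall
    have ih' := ih (insert j T) (Set.ssubset_insert hjT) (by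
      rintro (h | h)
      · exact hji h.symm
      · exact hT h)
    have hgr := isGraded_span_image hy T
    have key : ∀ n, ∀ a : MvPolynomial σ k, a.IsHomogeneous n →
        a * y i₀ ∈ Ideal.span (y '' T) → a ∈ Ideal.span (y '' T) := by
      intro n
      induction n using Nat.strong_induction_on with
      | _ n ihn =>
      intro a han ha
      obtain ⟨b, hb⟩ := mem_span_image_insert.1
        (ih' a (Ideal.span_mono (Set.image_mono (Set.subset_insert _ _)) ha))
      obtain ⟨b, hbh, hb, hb0⟩ := hgr.exists_homogeneous_sub_mul_mem (hy j) han hb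
      have hbT : b ∈ Ideal.span (y '' T) := by
        rcases lt_or_ge n (d j) with h | h
        · rw [hb0 h]; exact zero_mem _
        · refine ihn (n - d j) (by have := hd j; omega) b hbh ?_
          rw [← himg T hT]
          apply hreg T j hjT
          rw [himg T hT, hyy j hji]
          have e : b * y i₀ * y j = a * y i₀ - y i₀ * (a - b * y j) := by ring
          rw [e]
          exact sub_mem ha (Ideal.mul_mem_left _ _ hb)
      have e : a = (a - b * y j) + y j * b := by ring
      rw [e]
      exact add_mem hb (Ideal.mul_mem_left _ _ hbT)
    intro a ha
    refine mem_of_forall_homogeneousComponent_mem fun n => key n _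
      (homogeneousComponent_isHomogeneous _ _) ?_
    have := hgr _ ha (n + d i₀)
    rwa [homogeneousComponent_mul_of_le (hy i₀) (by omega), Nat.add_sub_cancel] at this

theorem IsReg.exchange {y y' : ι → MvPolynomial σ k} {d : ι → ℕ}
    (hy : ∀ i, (y i).IsHomogeneous (d i)) (hd : ∀ i, 1 ≤ d i) {i₀ : ι}
    (hyy : ∀ i ≠ i₀, y' i = y i) (hreg : IsReg y') {N : ℕ}
    (hN : y' i₀ ^ N ∈ Ideal.span (Set.range y)) : IsReg y := by
  have himg : ∀ T : Set ι, i₀ ∉ T → y' '' T = y '' T := fun T hT =>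
    Set.image_congr fun i hi => hyy i fun h => hT (h ▸ hi)
  have key := hreg.mem_of_mul_mem_of_exchange hy hd hyy hN
  have hreg' : ∀ T : Set ι, i₀ ∉ T → ∀ j ∉ T, j ≠ i₀ → ∀ a, a * y j ∈ Ideal.span (y '' T) →
      a ∈ Ideal.span (y '' T) := by
    intro T hT j hj hji a ha
    rw [← himg T hT] at ha ⊢
    rw [← hyy j hji] at ha
    exact hreg T j hj a ha
  intro T j hj a ha
  by_cases hi : i₀ ∈ T
  · have hji : j ≠ i₀ := fun h => hj (h ▸ hi)
    obtain ⟨T₀, hT₀, rfl⟩ : ∃ T₀ : Set ι, i₀ ∉ T₀ ∧ insert i₀ T₀ = T :=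
      ⟨T \ {i₀}, by simp, by simp [hi]⟩
    have hj0 : j ∉ T₀ := fun h => hj (Or.inr h)
    obtain ⟨b, hb⟩ := mem_span_image_insert.1 ha
    have h1 : b * y i₀ ∈ Ideal.span (y '' insert j T₀) := by
      rw [mem_span_image_insert]
      refine ⟨a, ?_⟩
      rw [← neg_mem_iff]
      convert hb using 1
      ring
    have h2 := key (insert j T₀) (by
      rintro (h | h)
      · exact hji h.symm
      · exact hT₀ h) b h1
    obtain ⟨c, hc⟩ := mem_span_image_insert.1 h2
    rw [mem_span_image_insert]
    refine ⟨c, hreg' T₀ hT₀ j hj0 hji _ ?_⟩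
    have e : (a - c * y i₀) * y j = (a * y j - b * y i₀) + y i₀ * (b - c * y j) := by ring
    rw [e]
    exact add_mem hb (Ideal.mul_mem_left _ _ hc)
  · by_cases hji : j = i₀
    · subst hji
      exact key T hi a ha
    · exact hreg' T hi j hj hji a ha

end Regular

section Socle

variable {σ k : Type*} [Field k]

/-- The graded algebra defined by `I` has one-dimensional socle concentrated in degree `s`
(or is zero). -/
def HasSocle (I : Ideal (MvPolynomial σ k)) (s : ℕ) : Prop :=
  (∀ i, ∀ a : MvPolynomial σ k, a.IsHomogeneous i → (∀ j, X j * a ∈ I) → i ≠ s → a ∈ I) ∧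
  ∀ a b : MvPolynomial σ k, a.IsHomogeneous s → b.IsHomogeneous s → (∀ j, X j * a ∈ I) →
    (∀ j, X j * b ∈ I) → ∃ α β : k, (α ≠ 0 ∨ β ≠ 0) ∧ C α * a + C β * b ∈ I

theorem mul_mem_of_forall_X_mul_mem {I : Ideal (MvPolynomial σ k)} {a l : MvPolynomial σ k}
    (hl : l ∈ Ideal.span (Set.range (X : σ → MvPolynomial σ k))) (h : ∀ j, X j * a ∈ I) :
    l * a ∈ I := by
  induction hl using Submodule.span_induction with
  | mem x hx => obtain ⟨j, rfl⟩ := hx; exact h j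
  | zero => simp
  | add x y _ _ hx hy => rw [add_mul]; exact add_mem hx hy
  | smul c x _ hx => rw [smul_eq_mul, mul_assoc]; exact Ideal.mul_mem_left _ _ hx

theorem HasSocle.exchange {R I I' : Ideal (MvPolynomial σ k)} {l z : MvPolynomial σ k} {d s : ℕ}
    (hR : IsGraded R) (hz : z.IsHomogeneous d)
    (hl : l ∈ Ideal.span (Set.range (X : σ → MvPolynomial σ k)))
    (hI : ∀ p, p ∈ I ↔ ∃ a, p - a * z ∈ R) (hI' : ∀ p, p ∈ I' ↔ ∃ a, p - a * l ∈ R)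
    (hzR : ∀ a, a * z ∈ R → a ∈ R) (hlR : ∀ a, a * l ∈ R → a ∈ R) (hlh : l.IsHomogeneous 1)
    (hd : 1 ≤ d) (h : HasSocle I' s) : HasSocle I (s + (d - 1)) := by
  have key : ∀ i, ∀ a : MvPolynomial σ k, a.IsHomogeneous i → (∀ j, X j * a ∈ I) →
      ∃ a' : MvPolynomial σ k, a'.IsHomogeneous (i + 1 - d) ∧ (l * a - a' * z ∈ R) ∧
        (i + 1 < d → a' = 0) ∧ ∀ j, X j * a' ∈ I' := by
    intro i a ha hX
    obtain ⟨a', ha'⟩ := (hI _).1 (mul_mem_of_forall_X_mul_mem hl hX)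
    have hla : (l * a).IsHomogeneous (i + 1) := by
      have := hlh.mul ha
      rwa [add_comm] at this
    obtain ⟨a', hh, ha', h0⟩ := hR.exists_homogeneous_sub_mul_mem hz hla ha'
    refine ⟨a', hh, ha', h0, fun j => ?_⟩
    obtain ⟨b, hb⟩ := (hI _).1 (hX j)
    rw [hI']
    refine ⟨b, hzR _ ?_⟩
    have e : (X j * a' - b * l) * z = l * (X j * a - b * z) - X j * (l * a - a' * z) := by ring
    rw [e]
    exact sub_mem (Ideal.mul_mem_left _ _ hb) (Ideal.mul_mem_left _ _ ha')
  have lift : ∀ a a' : MvPolynomial σ k, l * a - a' * z ∈ R → a' ∈ I' → a ∈ I := by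
    intro a a' h1 h2
    obtain ⟨c, hc⟩ := (hI' _).1 h2
    rw [hI]
    refine ⟨c, hlR _ ?_⟩
    have e : (a - c * z) * l = (l * a - a' * z) + z * (a' - c * l) := by ring
    rw [e]
    exact add_mem h1 (Ideal.mul_mem_left _ _ hc)
  refine ⟨fun i a ha hX hi => ?_, fun a b ha hb hXa hXb => ?_⟩
  · obtain ⟨a', hh, h1, h0, hX'⟩ := key i a ha hX
    refine lift a a' h1 ?_
    rcases lt_or_ge (i + 1) d with hlt | hge
    · rw [h0 hlt]; exact zero_mem _
    · exact h.1 _ a' hh hX' (by omega)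
  · obtain ⟨a', hah, ha1, -, haX⟩ := key _ a ha hXa
    obtain ⟨b', hbh, hb1, -, hbX⟩ := key _ b hb hXb
    have hs : s + (d - 1) + 1 - d = s := by omega
    rw [hs] at hah hbh
    obtain ⟨α, β, hne, hmem⟩ := h.2 a' b' hah hbh haX hbX
    refine ⟨α, β, hne, lift _ _ ?_ hmem⟩
    have e : l * (C α * a + C β * b) - (C α * a' + C β * b') * z =
      C α * (l * a - a' * z) + C β * (l * b - b' * z) := by ring
    rw [e]
    exact add_mem (Ideal.mul_mem_left _ _ ha1) (Ideal.mul_mem_left _ _ hb1)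

end Socle

section Nullstellensatz

variable {σ k : Type*} [Field k]

theorem mem_span_X_pow_of_isHomogeneous {p : MvPolynomial σ k} {e : ℕ} (hp : p.IsHomogeneous e) :
    p ∈ Ideal.span (Set.range (X : σ → MvPolynomial σ k)) ^ e := by
  rw [Ideal.mem_span_pow_iff_exists_isHomogeneous]
  exact ⟨map C p, hp.map _, by rw [eval_map, eval₂_eta]⟩

theorem mem_span_X_of_isHomogeneous_one {p : MvPolynomial σ k} (hp : p.IsHomogeneous 1) :
    p ∈ Ideal.span (Set.range (X : σ → MvPolynomial σ k)) := by
  simpa using mem_span_X_pow_of_isHomogeneous hp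

theorem exists_forall_isHomogeneous_mem [IsAlgClosed k] [Finite σ] {ι : Type*}
    {y : ι → MvPolynomial σ k}
    (h0 : ∀ p : σ → k, (∀ i, eval p (y i) = 0) → p = 0) :
    ∃ N, ∀ e, N ≤ e → ∀ p : MvPolynomial σ k, p.IsHomogeneous e →
      p ∈ Ideal.span (Set.range y) := by
  have hle : Ideal.span (Set.range (X : σ → MvPolynomial σ k)) ≤
      (Ideal.span (Set.range y)).radical := by
    rw [← vanishingIdeal_zeroLocus_eq_radical (K := k), Ideal.span_le]
    rintro _ ⟨j, rfl⟩
    simp only [SetLike.mem_coe, mem_vanishingIdeal_iff, zeroLocus_span]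
    intro x hx
    have := h0 x (fun i => by simpa [aeval_eq_eval] using hx (y i) ⟨i, rfl⟩)
    simp [this]
  obtain ⟨N, hN⟩ := Ideal.exists_pow_le_of_le_radical_of_fg hle (IsNoetherian.noetherian _)
  exact ⟨N, fun e he p hp => hN (Ideal.pow_le_pow_right he (mem_span_X_pow_of_isHomogeneous hp))⟩

variable [IsAlgClosed k] [Finite σ] {ι : Type*}

/-- The fibre over `(0, …, 1, …, 0)` of a homogeneous system of parameters is finite. -/
theorem finite_fibre {y : ι → MvPolynomial σ k} {d : ι → ℕ}
    (hy : ∀ i, (y i).IsHomogeneous (d i)) {i₀ : ι} (hd : 1 ≤ d i₀)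
    (h0 : ∀ p : σ → k, (∀ i, eval p (y i) = 0) → p = 0) :
    Set.Finite {p : σ → k | (∀ i ≠ i₀, eval p (y i) = 0) ∧ eval p (y i₀) = 1} := by
  classical
  obtain ⟨N, hN⟩ := exists_forall_isHomogeneous_mem h0
  set T : Set ι := {i | i ≠ i₀} with hT
  set J : Ideal (MvPolynomial σ k) := Ideal.span (y '' T) ⊔ Ideal.span {y i₀ - 1} with hJ
  have hgr := isGraded_span_image hy T
  have hr : Set.range y = y '' insert i₀ T := by
    rw [← Set.image_univ]; congr 1; ext i; simp [hT, em]
  set V : Submodule k (MvPolynomial σ k ⧸ J) :=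
    ⨆ e : Fin N, (homogeneousSubmodule σ k e).map (Ideal.Quotient.mkₐ k J).toLinearMap with hV
  have hVfg : V.FG := Submodule.fg_iSup _ fun e => (homogeneousSubmodule_fg σ k e).map _
  have hmem : ∀ e, ∀ p : MvPolynomial σ k, p.IsHomogeneous e → Ideal.Quotient.mkₐ k J p ∈ V := by
    intro e
    induction e using Nat.strong_induction_on with
    | _ e ih =>
    intro p hp
    rcases lt_or_ge e N with h | h
    · exact Submodule.mem_iSup_of_mem (⟨e, h⟩ : Fin N) ⟨p, hp, rfl⟩
    · have h1 := hN e h p hp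
      rw [hr] at h1
      obtain ⟨b, hb⟩ := mem_span_image_insert.1 h1
      obtain ⟨b, hbh, hb, hb0⟩ := hgr.exists_homogeneous_sub_mul_mem (hy i₀) hp hb
      have h2 : Ideal.Quotient.mkₐ k J p = Ideal.Quotient.mkₐ k J b := by
        rw [Ideal.Quotient.mkₐ_eq_mk, Ideal.Quotient.eq]
        have e : p - b = (p - b * y i₀) + b * (y i₀ - 1) := by ring
        rw [e]
        exact add_mem (Ideal.mem_sup_left hb)
          (Ideal.mem_sup_right (Ideal.mul_mem_left _ _ (Ideal.mem_span_singleton_self _)))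
      rw [h2]
      rcases lt_or_ge e (d i₀) with h3 | h3
      · rw [hb0 h3, map_zero]; exact zero_mem _
      · exact ih _ (by omega) b hbh
  have htop : V = ⊤ := by
    rw [eq_top_iff]
    rintro x -
    obtain ⟨p, rfl⟩ := Ideal.Quotient.mkₐ_surjective k J x
    rw [← sum_homogeneousComponent p, map_sum]
    exact Submodule.sum_mem _ fun i _ => hmem i _ (homogeneousComponent_isHomogeneous _ _)
  have : Module.Finite k (MvPolynomial σ k ⧸ J) := ⟨htop ▸ hVfg⟩
  set Z : Set (σ → k) := {p | (∀ i ≠ i₀, eval p (y i) = 0) ∧ eval p (y i₀) = 1} with hZ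
  have hker : ∀ p : Z, ∀ a ∈ J, aeval (R := k) (p : σ → k) a = 0 := by
    intro p a ha
    have : J ≤ RingHom.ker (aeval (R := k) (p : σ → k)) := by
      refine sup_le (Ideal.span_le.2 ?_) (Ideal.span_le.2 ?_)
      · rintro _ ⟨i, hi, rfl⟩
        simpa [aeval_eq_eval] using p.2.1 i hi
      · rintro _ rfl
        simp [aeval_eq_eval, p.2.2]
    exact this ha
  have : Finite Z := by
    refine Finite.of_injective (β := (MvPolynomial σ k ⧸ J) →ₐ[k] k)
      (fun p => Ideal.Quotient.liftₐ J (aeval (p : σ → k)) (hker p)) ?_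
    intro p p' h
    ext j
    have := congrArg (fun f : (MvPolynomial σ k ⧸ J) →ₐ[k] k => f (Ideal.Quotient.mk J (X j))) h
    simpa using this
  exact Set.toFinite Z

theorem exists_linear_exchange [Fintype σ] {y : ι → MvPolynomial σ k} {d : ι → ℕ}
    (hy : ∀ i, (y i).IsHomogeneous (d i)) {i₀ : ι} (hd : 1 ≤ d i₀)
    (h0 : ∀ p : σ → k, (∀ i, eval p (y i) = 0) → p = 0) :
    ∃ l : MvPolynomial σ k, l.IsHomogeneous 1 ∧
      ∀ p : σ → k, (∀ i ≠ i₀, eval p (y i) = 0) → eval p l = 0 → p = 0 := by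
  classical
  have hfin := finite_fibre hy hd h0
  set Z : Set (σ → k) := {p | (∀ i ≠ i₀, eval p (y i) = 0) ∧ eval p (y i₀) = 1} with hZ
  have : Finite Z := hfin
  have : Infinite k := IsAlgClosed.instInfinite
  have hz : ∀ p : Z, (p : σ → k) ≠ 0 := by
    rintro ⟨p, hp, hp1⟩ h
    simp only at h
    have h2 := eval_smul_of_isHomogeneous (hy i₀) 0 p
    rw [zero_smul, zero_pow (by omega), zero_mul, ← h, hp1] at h2
    exact one_ne_zero h2
  obtain ⟨φ, hφ⟩ := Module.exists_dual_forall_apply_ne_zero (K := k) (fun p : Z => (p : σ → k)) hz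
  refine ⟨∑ i, C (φ (Pi.single i 1)) * X i, IsHomogeneous.sum _ _ _ fun i _ => by
    simpa using (isHomogeneous_C σ (φ (Pi.single i 1))).mul (isHomogeneous_X k i), ?_⟩
  intro p hp hlp
  have hφp : ∀ p : σ → k, eval p (∑ i, C (φ (Pi.single i 1)) * X i) = φ p := by
    intro p
    conv_rhs => rw [LinearMap.pi_apply_eq_sum_univ φ p]
    simp [mul_comm, eq_comm, Pi.single]
    refine Finset.sum_congr rfl fun i _ => ?_
    congr 2
    funext j
    simp [Function.update_apply, eq_comm]
  rw [hφp] at hlp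
  by_cases hc : eval p (y i₀) = 0
  · exact h0 p fun i => by
      by_cases h : i = i₀
      · rw [h, hc]
      · exact hp i h
  · exfalso
    obtain ⟨r, hr⟩ := IsAlgClosed.exists_pow_nat_eq ((eval p (y i₀))⁻¹) (n := d i₀) (by omega)
    refine hφ ⟨r • p, fun i hi => ?_, ?_⟩ ?_
    · rw [eval_smul_of_isHomogeneous (hy i), hp i hi, mul_zero]
    · rw [eval_smul_of_isHomogeneous (hy i₀), hr, inv_mul_cancel₀ hc]
    · simp [hlp]

end Nullstellensatz

theorem isReg_X {σ k : Type*} [Field k] : IsReg (X : σ → MvPolynomial σ k) := by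
  classical
  intro T j hj a ha
  rw [mem_ideal_span_X_image] at ha ⊢
  intro m hm
  obtain ⟨i, hi, h⟩ := ha (m + Finsupp.single j 1) (by
    rw [mem_support_iff] at hm ⊢
    rwa [coeff_mul_X])
  refine ⟨i, hi, ?_⟩
  have : j ≠ i := fun h => hj (h ▸ hi)
  simpa [Finsupp.single_apply, this] using h

section Linear

variable {n k : Type*} [Field k] [Fintype n]

/-- The linear form with coefficient vector `c`. -/
def lin (c : n → k) : MvPolynomial n k := ∑ i, C (c i) * X i

theorem lin_isHomogeneous (c : n → k) : (lin c).IsHomogeneous 1 :=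
  IsHomogeneous.sum _ _ _ fun i _ => by
    simpa using (isHomogeneous_C n (c i)).mul (isHomogeneous_X k i)

theorem eval_lin (c p : n → k) : eval p (lin c) = c ⬝ᵥ p := by
  simp [lin, dotProduct]

theorem exists_eq_lin {l : MvPolynomial n k} (hl : l.IsHomogeneous 1) : ∃ c, l = lin c := by
  have h : l ∈ homogeneousSubmodule n k 1 := hl
  rw [homogeneousSubmodule_one_eq_span_X, Submodule.mem_span_range_iff_exists_fun] at h
  obtain ⟨c, rfl⟩ := h
  exact ⟨c, by simp [lin, smul_eq_C_mul]⟩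

theorem lin_add (c c' : n → k) : lin (c + c') = lin c + lin c' := by
  simp [lin, add_mul, Finset.sum_add_distrib]

theorem lin_smul (r : k) (c : n → k) : lin (r • c) = C r * lin c := by
  simp [lin, Finset.mul_sum, mul_assoc]

theorem lin_single [DecidableEq n] (i : n) : lin (Pi.single i (1 : k)) = X i := by
  simp [lin, Pi.single_apply]

theorem isReg_and_hasSocle_of_linear [DecidableEq n] {y : n → MvPolynomial n k}
    (hy : ∀ i, (y i).IsHomogeneous 1)
    (h0 : ∀ p : n → k, (∀ i, eval p (y i) = 0) → p = 0) :
    IsReg y ∧ HasSocle (Ideal.span (Set.range y)) 0 := by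
  choose c hc using fun i => exists_eq_lin (hy i)
  have hunit : IsUnit (Matrix.of c) := by
    rw [← Matrix.mulVec_injective_iff_isUnit]
    intro p p' h
    rw [← sub_eq_zero]
    apply h0
    intro i
    have := congrFun h i
    rw [hc, eval_lin, dotProduct_sub, sub_eq_zero]
    exact this
  set M : Matrix n n k := Matrix.of c with hM
  have hdet : IsUnit M.det := (Matrix.isUnit_iff_isUnit_det _).1 hunit
  have hy' : ∀ i, y i = ∑ j, C (M i j) * X j := hc
  have comp : ∀ (A B : Matrix n n k), B * A = 1 → ∀ i,
      (aeval (R := k) (fun i => ∑ j, C (A i j) * (X j : MvPolynomial n k)))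
        (∑ j, C (B i j) * (X j : MvPolynomial n k)) = X i := by
    intro A B hBA i
    simp only [map_sum, map_mul, aeval_X, algHom_C, algebraMap_eq, Finset.mul_sum]
    rw [Finset.sum_comm]
    have : ∀ l, ∑ j, C (B i j) * (C (A j l) * (X l : MvPolynomial n k)) =
        C ((B * A) i l) * X l := by
      intro l
      rw [Matrix.mul_apply, map_sum, Finset.sum_mul]
      exact Finset.sum_congr rfl fun j _ => by rw [map_mul, mul_assoc]
    simp only [this, hBA, Matrix.one_apply]
    simp
  let φ : MvPolynomial n k ≃ₐ[k] MvPolynomial n k := AlgEquiv.ofAlgHom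
    (aeval fun i => ∑ j, C (M i j) * X j) (aeval fun i => ∑ j, C (M⁻¹ i j) * X j)
    (algHom_ext fun i => by
      simpa using comp M M⁻¹ (Matrix.nonsing_inv_mul _ hdet) i)
    (algHom_ext fun i => by
      simpa using comp M⁻¹ M (Matrix.mul_nonsing_inv _ hdet) i)
  have hφ : ∀ i, φ (X i) = y i := fun i => by
    rw [hy' i]
    exact aeval_X _ _
  have hmap : ∀ T : Set n, Ideal.span (y '' T) = (Ideal.span (X '' T)).map φ := by
    intro T
    rw [Ideal.map_span, ← Set.image_comp]
    congr 1
    exact Set.image_congr fun i _ => (hφ i).symm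
  have hmem : ∀ (T : Set n) a, a ∈ Ideal.span (y '' T) ↔ φ.symm a ∈ Ideal.span (X '' T) := by
    intro T a
    rw [hmap, Ideal.mem_map_of_equiv]
    constructor
    · rintro ⟨x, hx, rfl⟩
      simpa using hx
    · intro h
      exact ⟨_, h, by simp⟩
  refine ⟨?_, ?_⟩
  · intro T j hj a ha
    rw [hmem] at ha ⊢
    rw [map_mul, ← hφ, AlgEquiv.symm_apply_apply] at ha
    exact isReg_X T j hj _ ha
  · have hX : ∀ j, (X j : MvPolynomial n k) ∈ Ideal.span (Set.range y) := by
      intro j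
      rw [← comp M M⁻¹ (Matrix.nonsing_inv_mul _ hdet) j, map_sum]
      refine Ideal.sum_mem _ fun i _ => ?_
      rw [map_mul, aeval_X]
      refine Ideal.mul_mem_left _ _ ?_
      rw [← hy']
      exact Ideal.subset_span ⟨i, rfl⟩
    have hle : Ideal.span (Set.range (X : n → MvPolynomial n k)) ≤ Ideal.span (Set.range y) :=
      Ideal.span_le.2 (by rintro _ ⟨j, rfl⟩; exact hX j)
    refine ⟨fun i a ha _ hi => ?_, fun a b ha hb _ _ => ?_⟩
    · exact hle (Ideal.pow_le_self hi (mem_span_X_pow_of_isHomogeneous ha))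
    · have hC : ∀ p : MvPolynomial n k, p.IsHomogeneous 0 → ∃ α, p = C α := fun p hp =>
        ⟨_, totalDegree_eq_zero_iff_eq_C.1 ((totalDegree_zero_iff_isHomogeneous _).2 hp)⟩
      obtain ⟨α, rfl⟩ := hC a ha
      obtain ⟨β, rfl⟩ := hC b hb
      by_cases h : α = 0
      · exact ⟨1, 0, Or.inl one_ne_zero, by simp [h]⟩
      · refine ⟨-β, α, Or.inr h, ?_⟩
        rw [← map_mul, ← map_mul, ← map_add]
        simp [mul_comm]

end Linear

section CompleteIntersection

variable {n k : Type*} [Field k] [Fintype n] [DecidableEq n] [IsAlgClosed k]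

/-- Homogeneous polynomials, as many as variables, without nontrivial common zeros form a regular
sequence in any order, and the quotient is Gorenstein with socle degree `∑ (dᵢ - 1)`. -/
theorem isReg_and_hasSocle {y : n → MvPolynomial n k} {d : n → ℕ}
    (hy : ∀ i, (y i).IsHomogeneous (d i)) (hd : ∀ i, 1 ≤ d i)
    (h0 : ∀ p : n → k, (∀ i, eval p (y i) = 0) → p = 0) :
    IsReg y ∧ HasSocle (Ideal.span (Set.range y)) (∑ i, (d i - 1)) := by
  induction hs : ∑ i, (d i - 1) using Nat.strong_induction_on generalizing y d with
  | _ s ih =>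
  by_cases hlin : ∀ i, d i = 1
  · have : s = 0 := by rw [← hs]; simp [hlin]
    rw [this]
    exact isReg_and_hasSocle_of_linear (fun i => by rw [← hlin i]; exact hy i) h0
  push Not at hlin
  obtain ⟨i₀, hi₀⟩ := hlin
  have hi₁ := hd i₀
  obtain ⟨l, hl, hl0⟩ := exists_linear_exchange hy (hd i₀) h0
  have hsum : ∑ i, (Function.update d i₀ 1 i - 1) + (d i₀ - 1) = s := by
    rw [← hs, ← Finset.add_sum_erase _ _ (Finset.mem_univ i₀),
      ← Finset.add_sum_erase _ (fun i => d i - 1) (Finset.mem_univ i₀)]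
    rw [Finset.sum_congr rfl (g := fun i => d i - 1) (fun i hi => by
      rw [Function.update_of_ne (Finset.ne_of_mem_erase hi)])]
    simp
    omega
  have hyu : ∀ i ≠ i₀, Function.update y i₀ l i = y i := fun i hi => Function.update_of_ne hi _ _
  obtain ⟨hreg, hsoc⟩ := ih (∑ i, (Function.update d i₀ 1 i - 1)) (by omega)
    (y := Function.update y i₀ l) (d := Function.update d i₀ 1) (fun i => by
      by_cases h : i = i₀
      · subst h; simpa using hl
      · simpa [h] using hy i) (fun i => by
      by_cases h : i = i₀
      · subst h; simp
      · simpa [h] using hd i) (fun p hp => by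
      refine hl0 p (fun i hi => ?_) ?_
      · simpa [hi] using hp i
      · simpa using hp i₀) rfl
  obtain ⟨N, hN⟩ := exists_forall_isHomogeneous_mem h0
  have hreg' : IsReg y := hreg.exchange hy hd hyu (N := N) (by
    refine hN N le_rfl _ ?_
    simpa using hl.pow N)
  refine ⟨hreg', ?_⟩
  rw [← hsum]
  set T : Set n := {i | i ≠ i₀} with hT
  have hr : ∀ z : n → MvPolynomial n k, Set.range z = z '' insert i₀ T := by
    intro z
    rw [← Set.image_univ]; congr 1; ext i; simp [hT, em]
  have himg : Function.update y i₀ l '' T = y '' T :=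
    Set.image_congr fun i hi => hyu i hi
  refine HasSocle.exchange (R := Ideal.span (y '' T)) (I' := Ideal.span
    (Set.range (Function.update y i₀ l))) (l := l) (z := y i₀) (isGraded_span_image hy T) (hy i₀)
    (mem_span_X_of_isHomogeneous_one hl) (fun p => ?_) (fun p => ?_) (fun a => ?_) (fun a => ?_)
    hl hi₁ hsoc
  · rw [hr, mem_span_image_insert]
  · rw [hr, mem_span_image_insert, himg]
    simp
  · exact hreg' T i₀ (by simp [hT]) a
  · have := hreg T i₀ (by simp [hT]) a
    rw [himg] at this
    simpa using this

end CompleteIntersection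

section Sections

theorem isHomogeneous_of_mem_span {n k ι : Type*} [Field k] {d : ℕ} {u : ι → MvPolynomial n k}
    (hu : ∀ i, (u i).IsHomogeneous d) {y : MvPolynomial n k}
    (hy : y ∈ Submodule.span k (Set.range u)) : y.IsHomogeneous d := by
  have : Submodule.span k (Set.range u) ≤ homogeneousSubmodule n k d :=
    Submodule.span_le.2 (by rintro _ ⟨i, rfl⟩; exact hu i)
  exact this hy

theorem IsReg.of_comp_equiv {σ ι κ k : Type*} [Field k] {z : κ → MvPolynomial σ k} (e : ι ≃ κ)
    (h : IsReg (z ∘ e)) : IsReg z := by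
  intro T j hj a ha
  have himg : (z ∘ e) '' (e ⁻¹' T) = z '' T := by
    rw [Set.image_comp, e.image_preimage]
  have := h (e ⁻¹' T) (e.symm j) (by simpa using hj) a
  rw [himg] at this
  exact this (by simpa using ha)

variable {n k : Type*} [Field k] [IsAlgClosed k]

theorem exists_fewer {m r d : ℕ} (hd : 1 ≤ d) {u : Fin (m + 1) → MvPolynomial n k}
    (hu : ∀ i, (u i).IsHomogeneous d) (g : (Fin r → k) →ₗ[k] (n → k)) (hr : r ≤ m)
    (h0 : ∀ v, (∀ i, eval (g v) (u i) = 0) → v = 0) :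
    ∃ u' : Fin m → MvPolynomial n k, (∀ j, u' j ∈ Submodule.span k (Set.range u)) ∧
      ∀ v, (∀ j, eval (g v) (u' j) = 0) → v = 0 := by
  classical
  have : Infinite k := IsAlgClosed.instInfinite
  set w : Fin (m + 1) → MvPolynomial (Fin r) k := fun i =>
    aeval (fun a => lin fun b => g (Pi.single b 1) a) (u i) with hw
  have hwe : ∀ v i, eval v (w i) = eval (g v) (u i) := by
    intro v i
    have h1 : (eval v).comp ((aeval (R := k) (fun a => lin fun b => g (Pi.single b 1) a)) :
        MvPolynomial n k →ₐ[k] MvPolynomial (Fin r) k).toRingHom = eval (g v) := by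
      refine ringHom_ext (fun c => by simp) fun a => ?_
      simp only [RingHom.comp_apply, AlgHom.toRingHom_eq_coe, RingHom.coe_coe, aeval_X, eval_X,
        eval_lin]
      rw [LinearMap.pi_apply_eq_sum_univ g v]
      simp only [dotProduct, Finset.sum_apply, Pi.smul_apply, smul_eq_mul]
      refine Finset.sum_congr rfl fun b _ => ?_
      rw [mul_comm]
      have : (Pi.single b 1 : Fin r → k) = fun j => if b = j then 1 else 0 := by
        funext j
        simp [Pi.single_apply, eq_comm]
      rw [this]
    exact congrArg (fun f : MvPolynomial n k →+* k => f (u i)) h1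
  have hdep : ¬ AlgebraicIndependent k w := by
    intro h
    have h1 := h.lift_cardinalMk_le_trdeg
    rw [MvPolynomial.trdeg_of_isDomain] at h1
    simp only [Cardinal.mk_fin, Cardinal.lift_natCast] at h1
    have := Nat.cast_le.1 h1
    omega
  rw [algebraicIndependent_iff] at hdep
  push Not at hdep
  obtain ⟨F, hF, hF0⟩ := hdep
  obtain ⟨lam, hlam⟩ : ∃ lam, eval lam F ≠ 0 := by
    by_contra! h
    exact hF0 (MvPolynomial.funext fun x => by rw [h x, map_zero])
  have hFv : ∀ v, eval (fun i => eval (g v) (u i)) F = 0 := by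
    intro v
    have h1 := congrArg (eval v) hF
    rw [map_zero, ← aeval_eq_eval, ← AlgHom.comp_apply, comp_aeval] at h1
    simpa [aeval_eq_eval, hwe] using h1
  have hu0 : ∀ i, eval 0 (u i) = 0 := by
    intro i
    have := eval_smul_of_isHomogeneous (hu i) 0 0
    rwa [zero_smul, zero_pow (by omega), zero_mul] at this
  obtain ⟨i₀, hi₀⟩ : ∃ i, lam i ≠ 0 := by
    by_contra! h
    refine hlam ?_
    have := hFv 0
    rw [map_zero] at this
    have e : lam = fun i => eval 0 (u i) := _root_.funext fun i => by rw [h i, hu0 i]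
    rwa [e]
  refine ⟨fun j => lam i₀ • u (i₀.succAbove j) - lam (i₀.succAbove j) • u i₀, fun j => ?_, ?_⟩
  · exact sub_mem (Submodule.smul_mem _ _ (Submodule.subset_span ⟨_, rfl⟩))
      (Submodule.smul_mem _ _ (Submodule.subset_span ⟨_, rfl⟩))
  · intro v hv
    have hprop : ∀ i, lam i₀ * eval (g v) (u i) = lam i * eval (g v) (u i₀) := by
      intro i
      by_cases h : i = i₀
      · rw [h]
      · obtain ⟨j, rfl⟩ := Fin.exists_succAbove_eq h
        have := hv j
        rw [map_sub, smul_eval, smul_eval, sub_eq_zero] at this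
        exact this
    by_cases h : eval (g v) (u i₀) = 0
    · refine h0 v fun i => ?_
      have := hprop i
      rw [h, mul_zero] at this
      exact (mul_eq_zero.1 this).resolve_left hi₀
    · exfalso
      obtain ⟨t, ht⟩ := IsAlgClosed.exists_pow_nat_eq (lam i₀ * (eval (g v) (u i₀))⁻¹) (n := d)
        (by omega)
      apply hlam
      have := hFv (t • v)
      have e : lam = fun i => eval (g (t • v)) (u i) := _root_.funext fun i => by
        rw [map_smul, eval_smul_of_isHomogeneous (hu i), ht, mul_right_comm, hprop i]
        field_simp
      rwa [e]

theorem exists_subfamily {m r d : ℕ} (hd : 1 ≤ d) (g : (Fin r → k) →ₗ[k] (n → k)) (hr : r ≤ m)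
    {u : Fin m → MvPolynomial n k} (hu : ∀ i, (u i).IsHomogeneous d)
    (h0 : ∀ v, (∀ i, eval (g v) (u i) = 0) → v = 0) :
    ∃ u' : Fin r → MvPolynomial n k, (∀ j, u' j ∈ Submodule.span k (Set.range u)) ∧
      ∀ v, (∀ j, eval (g v) (u' j) = 0) → v = 0 := by
  induction m, hr using Nat.le_induction with
  | base => exact ⟨u, fun j => Submodule.subset_span ⟨j, rfl⟩, h0⟩
  | succ m hm ih =>
    obtain ⟨u', hu', h0'⟩ := exists_fewer hd hu g hm h0
    obtain ⟨u'', hmem_u, h0''⟩ := ih (fun i => isHomogeneous_of_mem_span hu (hu' i)) h0'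
    refine ⟨u'', fun j => ?_, h0''⟩
    have hle : Submodule.span k (Set.range u') ≤ Submodule.span k (Set.range u) :=
      Submodule.span_le.2 (by rintro _ ⟨i, rfl⟩; exact hu' i)
    exact hle (hmem_u j)

/-- Linear sections of a complete intersection of quadrics: independent linear forms can be
completed by linear combinations of the quadrics to a complete intersection. -/
theorem exists_section [Fintype n] [DecidableEq n] {q : n → MvPolynomial n k}
    (hq : ∀ i, (q i).IsHomogeneous 2)
    (h0 : ∀ p : n → k, (∀ i, eval p (q i) = 0) → p = 0) {e r : ℕ} (her : e + r = Fintype.card n)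
    {c : Fin e → n → k} (hc : LinearIndependent k c) :
    ∃ Q : Fin r → MvPolynomial n k, (∀ j, Q j ∈ Submodule.span k (Set.range q)) ∧
      (∀ p : n → k, (∀ i, eval p (Sum.elim (fun i => lin (c i)) Q i) = 0) → p = 0) ∧
      IsReg (Sum.elim (fun i => lin (c i)) Q) ∧
      HasSocle (Ideal.span (Set.range (Sum.elim (fun i => lin (c i)) Q))) r := by
  set M : Matrix (Fin e) n k := Matrix.of c with hM
  have hrank : M.rank = e := by
    have := LinearIndependent.rank_matrix (M := M) hc
    simpa using this
  have hker : Module.finrank k (LinearMap.ker M.mulVecLin) = Module.finrank k (Fin r → k) := by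
    have h1 := LinearMap.finrank_range_add_finrank_ker M.mulVecLin
    rw [← Matrix.rank, hrank, Module.finrank_fintype_fun_eq_card] at h1
    rw [Module.finrank_fin_fun]
    omega
  let E := LinearEquiv.ofFinrankEq _ _ hker
  let g : (Fin r → k) →ₗ[k] (n → k) := (LinearMap.ker M.mulVecLin).subtype ∘ₗ E.symm.toLinearMap
  obtain ⟨Q, hQ, hQ0⟩ := exists_subfamily (m := Fintype.card n) (d := 2) one_le_two g (by omega)
    (u := q ∘ (Fintype.equivFin n).symm) (fun i => hq _) (fun v hv => by
      have h1 : g v = 0 := h0 _ fun i => by simpa using hv (Fintype.equivFin n i)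
      simpa [g] using h1)
  have hrange : Set.range (q ∘ (Fintype.equivFin n).symm) = Set.range q :=
    (Fintype.equivFin n).symm.surjective.range_comp q
  rw [hrange] at hQ
  have hzero : ∀ p : n → k, (∀ i, eval p (Sum.elim (fun i => lin (c i)) Q i) = 0) → p = 0 := by
    intro p hp
    have hpk : p ∈ LinearMap.ker M.mulVecLin := by
      rw [LinearMap.mem_ker]
      funext i
      have := hp (Sum.inl i)
      simp only [Sum.elim_inl, eval_lin] at this
      exact this
    have hgp : g (E ⟨p, hpk⟩) = p := by simp [g]
    have := hQ0 (E ⟨p, hpk⟩) fun j => by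
      rw [hgp]; exact hp (Sum.inr j)
    rw [← hgp, this, map_zero]
  refine ⟨Q, hQ, hzero, ?_⟩
  let φ : n ≃ Fin e ⊕ Fin r :=
    (Fintype.equivFin n).trans ((finCongr her.symm).trans finSumFinEquiv.symm)
  set z : Fin e ⊕ Fin r → MvPolynomial n k := Sum.elim (fun i => lin (c i)) Q with hz
  set d : Fin e ⊕ Fin r → ℕ := Sum.elim (fun _ => 1) (fun _ => 2) with hd
  have hzd : ∀ i, (z i).IsHomogeneous (d i) := by
    rintro (i | j)
    · exact lin_isHomogeneous _
    · exact isHomogeneous_of_mem_span hq (hQ j)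
  obtain ⟨h1, h2⟩ := isReg_and_hasSocle (y := z ∘ φ) (d := d ∘ φ) (fun i => hzd _) (fun i => by
      simp only [Function.comp_apply]
      rcases φ i with _ | _ <;> simp [hd]) (fun p hp => hzero p fun i => by
        simpa using hp (φ.symm i))
  refine ⟨h1.of_comp_equiv, ?_⟩
  have hsum : ∑ i, ((d ∘ φ) i - 1) = r := by
    have := Equiv.sum_comp φ (fun i => d i - 1)
    simp only [Function.comp_apply]
    rw [this]
    simp [hd]
  rw [hsum, φ.surjective.range_comp] at h2
  exact h2

end Sections

section SocleConsequences

variable {σ k : Type*} [Field k] {I : Ideal (MvPolynomial σ k)} {s : ℕ}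

theorem HasSocle.mem_of_lt (h : HasSocle I s) {N : ℕ}
    (hN : ∀ e, N ≤ e → ∀ p : MvPolynomial σ k, p.IsHomogeneous e → p ∈ I) {e : ℕ} (he : s < e)
    {p : MvPolynomial σ k} (hp : p.IsHomogeneous e) : p ∈ I := by
  induction hm : N - e generalizing e p with
  | zero => exact hN e (by omega) p hp
  | succ m ih =>
    refine h.1 e p hp (fun j => ih (e := e + 1) (by omega) ?_ (by omega)) (by omega)
    have := (isHomogeneous_X k j).mul hp
    rwa [add_comm] at this

theorem HasSocle.exists_mul_notMem (h : HasSocle I s) {i : ℕ} (hi : i ≤ s) {a : MvPolynomial σ k}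
    (ha : a.IsHomogeneous i) (haI : a ∉ I) :
    ∃ b : MvPolynomial σ k, b.IsHomogeneous (s - i) ∧ b * a ∉ I := by
  induction hm : s - i generalizing i a with
  | zero => exact ⟨1, isHomogeneous_one _ _, by simpa using haI⟩
  | succ m ih =>
    obtain ⟨j, hj⟩ : ∃ j, X j * a ∉ I := by
      by_contra! hX
      exact haI (h.1 i a ha hX (by omega))
    have hXa : (X j * a).IsHomogeneous (i + 1) := by
      have := (isHomogeneous_X k j).mul ha
      rwa [add_comm] at this
    obtain ⟨b, hb, hba⟩ := ih (by omega) hXa hj (by omega)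
    refine ⟨b * X j, hb.mul (isHomogeneous_X k j), by rwa [mul_assoc]⟩

theorem HasSocle.exists_combination_mem (h : HasSocle I s) {N : ℕ}
    (hN : ∀ e, N ≤ e → ∀ p : MvPolynomial σ k, p.IsHomogeneous e → p ∈ I)
    {a b : MvPolynomial σ k} (ha : a.IsHomogeneous s) (hb : b.IsHomogeneous s) :
    ∃ α β : k, (α ≠ 0 ∨ β ≠ 0) ∧ C α * a + C β * b ∈ I := by
  have hX : ∀ (p : MvPolynomial σ k), p.IsHomogeneous s → ∀ j, X j * p ∈ I := fun p hp j =>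
    h.mem_of_lt hN (Nat.lt_succ_self s) (by
      have := (isHomogeneous_X k j).mul hp
      rwa [add_comm] at this)
  exact h.2 a b ha hb (hX a ha) (hX b hb)

end SocleConsequences

section FiveQuadrics

variable {k : Type*} [Field k]

theorem eq_zero_of_isHomogeneous_one_of_mem {n : Type*} {q : Fin 5 → MvPolynomial n k}
    (hq : ∀ i, (q i).IsHomogeneous 2) {p : MvPolynomial n k} (hp : p.IsHomogeneous 1)
    (h : p ∈ Ideal.span (Set.range q)) : p = 0 := by
  rw [Ideal.mem_span_range_iff_exists_fun] at h
  obtain ⟨c, hc⟩ := h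
  rw [← homogeneousComponent_eq_self hp, ← hc, map_sum]
  exact Finset.sum_eq_zero fun i _ => homogeneousComponent_mul_of_not_le (hq i) (by omega) _

theorem homogeneousComponent_mem_span {n ι : Type*} [Fintype ι] {q : ι → MvPolynomial n k}
    {d : ℕ} (hq : ∀ i, (q i).IsHomogeneous d) {p : MvPolynomial n k} (hp : p.IsHomogeneous d)
    (h : p ∈ Ideal.span (Set.range q)) : p ∈ Submodule.span k (Set.range q) := by
  rw [Ideal.mem_span_range_iff_exists_fun] at h
  obtain ⟨c, hc⟩ := h
  rw [← homogeneousComponent_eq_self hp, ← hc, map_sum]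
  refine Submodule.sum_mem _ fun i _ => ?_
  rw [homogeneousComponent_mul_of_le (hq i) le_rfl, Nat.sub_self, homogeneousComponent_zero,
    ← smul_eq_C_mul]
  exact Submodule.smul_mem _ _ (Submodule.subset_span ⟨i, rfl⟩)

theorem exists_mul_add_mul_of_mem_span {n : Type*} {l m p : MvPolynomial n k} {e : ℕ}
    (hl : l.IsHomogeneous 1) (hm : m.IsHomogeneous 1) (hp : p.IsHomogeneous (e + 1))
    (h : p ∈ Ideal.span {l, m}) :
    ∃ u v : MvPolynomial n k, u.IsHomogeneous e ∧ v.IsHomogeneous e ∧ p = l * u + m * v := by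
  obtain ⟨a, b, hab⟩ := Ideal.mem_span_pair.1 h
  refine ⟨homogeneousComponent e a, homogeneousComponent e b, homogeneousComponent_isHomogeneous _ _,
    homogeneousComponent_isHomogeneous _ _, ?_⟩
  rw [← homogeneousComponent_eq_self hp, ← hab, map_add,
    homogeneousComponent_mul_of_le hl (by omega), homogeneousComponent_mul_of_le hm (by omega),
    Nat.add_sub_cancel]
  ring

theorem one_notMem_span {n ι : Type*} {y : ι → MvPolynomial n k} {d : ι → ℕ}
    (hy : ∀ i, (y i).IsHomogeneous (d i)) (hd : ∀ i, 1 ≤ d i) :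
    (1 : MvPolynomial n k) ∉ Ideal.span (Set.range y) := by
  intro h
  have hle : Ideal.span (Set.range y) ≤ RingHom.ker (eval (0 : n → k)) := by
    rw [Ideal.span_le]
    rintro _ ⟨i, rfl⟩
    have := eval_smul_of_isHomogeneous (hy i) 0 0
    have hdi := hd i
    rw [zero_smul, zero_pow (by omega), zero_mul] at this
    exact this
  have := hle h
  simp at this

theorem IsReg.linearIndependent_mod {n ι κ : Type*} [Fintype ι] {z : κ ⊕ ι → MvPolynomial n k}
    (hz : IsReg z) (h1 : (1 : MvPolynomial n k) ∉ Ideal.span (Set.range z)) (γ : ι → k)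
    (h : ∑ j, γ j • z (Sum.inr j) ∈ Ideal.span (Set.range (z ∘ Sum.inl))) : γ = 0 := by
  classical
  by_contra hne
  obtain ⟨j, hj⟩ := Function.ne_iff.1 hne
  have hmono : Ideal.span (Set.range (z ∘ Sum.inl)) ≤ Ideal.span (z '' {Sum.inr j}ᶜ) := by
    refine Ideal.span_mono ?_
    rintro _ ⟨i, rfl⟩
    exact ⟨Sum.inl i, by simp, rfl⟩
  have hmem : C (γ j) * z (Sum.inr j) ∈ Ideal.span (z '' {Sum.inr j}ᶜ) := by
    have := hmono h
    rw [← Finset.add_sum_erase _ _ (Finset.mem_univ j)] at this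
    rw [← smul_eq_C_mul]
    refine (add_mem_cancel_right ?_).1 this
    refine Ideal.sum_mem _ fun i hi => ?_
    rw [smul_eq_C_mul]
    exact Ideal.mul_mem_left _ _ (Ideal.subset_span ⟨Sum.inr i, by
      simpa using Finset.ne_of_mem_erase hi, rfl⟩)
  have := hz {Sum.inr j}ᶜ (Sum.inr j) (by simp) _ hmem
  refine h1 (Ideal.span_mono (Set.image_subset_range z {Sum.inr j}ᶜ) ?_)
  have h2 := Ideal.mul_mem_left _ (C (γ j)⁻¹) this
  rwa [← map_mul, inv_mul_cancel₀ hj, map_one] at h2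

variable [IsAlgClosed k] {q : Fin 5 → MvPolynomial (Fin 5) k}

theorem isReg_and_hasSocle_quadrics (hq : ∀ i, (q i).IsHomogeneous 2)
    (h0 : ∀ p : Fin 5 → k, (∀ i, eval p (q i) = 0) → p = 0) :
    IsReg q ∧ HasSocle (Ideal.span (Set.range q)) 5 := by
  simpa using isReg_and_hasSocle hq (fun _ => one_le_two) h0

theorem linearIndependent_quadrics (hq : ∀ i, (q i).IsHomogeneous 2)
    (h0 : ∀ p : Fin 5 → k, (∀ i, eval p (q i) = 0) → p = 0) : LinearIndependent k q := by
  have hreg : IsReg (Sum.elim Empty.elim q) :=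
    IsReg.of_comp_equiv (Equiv.emptySum Empty (Fin 5)).symm (by
      convert (isReg_and_hasSocle_quadrics hq h0).1; rfl)
  rw [Fintype.linearIndependent_iff]
  intro γ hγ i
  refine congrFun (hreg.linearIndependent_mod ?_ γ ?_) i
  · refine one_notMem_span (d := fun _ => 2) ?_ (fun _ => one_le_two)
    rintro (i | i)
    · exact i.elim
    · exact hq i
  · simp [hγ]

/-- A form of degree `i` killed by more than `i` independent linear forms modulo a complete
intersection of five quadrics is zero. -/
theorem mem_of_lin_mul_mem (hq : ∀ i, (q i).IsHomogeneous 2)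
    (h0 : ∀ p : Fin 5 → k, (∀ i, eval p (q i) = 0) → p = 0) {e i : ℕ} (he : e ≤ 5) (hi : i < e)
    {c : Fin e → Fin 5 → k} (hc : LinearIndependent k c) {a : MvPolynomial (Fin 5) k}
    (ha : a.IsHomogeneous i) (hca : ∀ j, lin (c j) * a ∈ Ideal.span (Set.range q)) :
    a ∈ Ideal.span (Set.range q) := by
  obtain ⟨Q, hQ, hQ0, -, hsoc⟩ := exists_section hq h0 (r := 5 - e) (by simp; omega) hc
  obtain ⟨N, hN⟩ := exists_forall_isHomogeneous_mem hQ0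
  by_contra hna
  obtain ⟨b, hb, hba⟩ := (isReg_and_hasSocle_quadrics hq h0).2.exists_mul_notMem
    (by omega) ha hna
  have hbJ := hsoc.mem_of_lt hN (by omega) hb
  apply hba
  clear hb hba
  induction hbJ using Submodule.span_induction with
  | mem x hx =>
    obtain ⟨(j | j), rfl⟩ := hx
    · exact hca j
    · refine Ideal.mul_mem_right _ _ ?_
      have hle : Submodule.span k (Set.range q) ≤
          (Ideal.span (Set.range q)).restrictScalars k :=
        Submodule.span_le.2 Ideal.subset_span
      exact hle (hQ j)
  | zero => simp
  | add x y _ _ hx hy => rw [add_mul]; exact add_mem hx hy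
  | smul c x _ hx => rw [smul_eq_mul, mul_assoc]; exact Ideal.mul_mem_left _ _ hx

/-- Two independent linear forms killing a nonzero quadratic class span a pencil whose section
ideal is generated by three of the quadrics. -/
theorem exists_section_of_lin_mul_mem (hq : ∀ i, (q i).IsHomogeneous 2)
    (h0 : ∀ p : Fin 5 → k, (∀ i, eval p (q i) = 0) → p = 0)
    {c : Fin 2 → Fin 5 → k} (hc : LinearIndependent k c) {f : MvPolynomial (Fin 5) k}
    (hf : f.IsHomogeneous 2) (hfI : f ∉ Ideal.span (Set.range q))
    (hcf : ∀ j, lin (c j) * f ∈ Ideal.span (Set.range q)) :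
    ∃ Q : Fin 3 → MvPolynomial (Fin 5) k, (∀ j, Q j ∈ Submodule.span k (Set.range q)) ∧
      IsReg (Sum.elim (fun i => lin (c i)) Q) ∧
      HasSocle (Ideal.span (Set.range (Sum.elim (fun i => lin (c i)) Q))) 3 ∧
      Ideal.span (Set.range q) ≤ Ideal.span (Set.range (Sum.elim (fun i => lin (c i)) Q)) := by
  obtain ⟨Q, hQ, hQ0, hreg, hsoc⟩ := exists_section hq h0 (r := 3) (by simp) hc
  refine ⟨Q, hQ, hreg, hsoc, ?_⟩
  obtain ⟨N, hN⟩ := exists_forall_isHomogeneous_mem hQ0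
  set J := Ideal.span (Set.range (Sum.elim (fun i => lin (c i)) Q)) with hJ
  have hJf : ∀ p ∈ J, p * f ∈ Ideal.span (Set.range q) := by
    intro p hp
    induction hp using Submodule.span_induction with
    | mem x hx =>
      obtain ⟨(j | j), rfl⟩ := hx
      · exact hcf j
      · refine Ideal.mul_mem_right _ _ ?_
        have hle : Submodule.span k (Set.range q) ≤
            (Ideal.span (Set.range q)).restrictScalars k :=
          Submodule.span_le.2 Ideal.subset_span
        exact hle (hQ j)
    | zero => simp
    | add x y _ _ hx hy => rw [add_mul]; exact add_mem hx hy
    | smul c x _ hx => rw [smul_eq_mul, mul_assoc]; exact Ideal.mul_mem_left _ _ hx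
  rw [Ideal.span_le]
  rintro _ ⟨i, rfl⟩
  by_contra hqi
  obtain ⟨b, hb, hbq⟩ := hsoc.exists_mul_notMem (by omega) (hq i) hqi
  obtain ⟨g, hg, hgf⟩ := (isReg_and_hasSocle_quadrics hq h0).2.exists_mul_notMem (by omega) hf hfI
  obtain ⟨α, β, hne, hmem⟩ := hsoc.exists_combination_mem hN hg (hb.mul (hq i))
  have hα : α ≠ 0 := by
    intro hα
    have hβ : β ≠ 0 := hne.resolve_left (not_not.2 hα)
    apply hbq
    rw [hα, map_zero, zero_mul, zero_add] at hmem
    have := Ideal.mul_mem_left _ (C β⁻¹) hmem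
    rwa [← mul_assoc, ← map_mul, inv_mul_cancel₀ hβ, map_one, one_mul] at this
  apply hgf
  have h1 := hJf _ hmem
  have h2 : C α * g * f ∈ Ideal.span (Set.range q) := by
    have e : C α * g * f = (C α * g + C β * (b * q i)) * f - C β * b * f * q i := by ring
    rw [e]
    exact sub_mem h1 (Ideal.mul_mem_left _ _ (Ideal.subset_span ⟨i, rfl⟩))
  have := Ideal.mul_mem_left _ (C α⁻¹) h2
  rwa [mul_assoc, ← mul_assoc, ← map_mul, inv_mul_cancel₀ hα, map_one, one_mul] at this

/-- The quadrics in the ideal that are divisible by the pencil form a two-dimensional space. -/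
theorem finrank_inf_pencil (hq : ∀ i, (q i).IsHomogeneous 2)
    (h0 : ∀ p : Fin 5 → k, (∀ i, eval p (q i) = 0) → p = 0)
    {c : Fin 2 → Fin 5 → k} {Q : Fin 3 → MvPolynomial (Fin 5) k}
    (hQ : ∀ j, Q j ∈ Submodule.span k (Set.range q))
    (hreg : IsReg (Sum.elim (fun i => lin (c i)) Q))
    (hle : Ideal.span (Set.range q) ≤
      Ideal.span (Set.range (Sum.elim (fun i => lin (c i)) Q))) :
    Module.finrank k ↥(Submodule.span k (Set.range q) ⊓
      (Ideal.span {lin (c 0), lin (c 1)}).restrictScalars k) = 2 := by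
  set E := Submodule.span k (Set.range q) ⊓
      (Ideal.span {lin (c 0), lin (c 1)}).restrictScalars k with hE
  set U := Submodule.span k (Set.range Q) with hU
  have hQh : ∀ j, (Q j).IsHomogeneous 2 := fun j => isHomogeneous_of_mem_span hq (hQ j)
  have hUq : U ≤ Submodule.span k (Set.range q) :=
    Submodule.span_le.2 (by rintro _ ⟨j, rfl⟩; exact hQ j)
  have hone : (1 : MvPolynomial (Fin 5) k) ∉
      Ideal.span (Set.range (Sum.elim (fun i => lin (c i)) Q)) := by
    refine one_notMem_span (d := Sum.elim (fun _ => 1) fun _ => 2) ?_ ?_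
    · rintro (i | i)
      · exact lin_isHomogeneous _
      · exact hQh i
    · rintro (i | i) <;> simp
  have hW : Ideal.span (Set.range (Sum.elim (fun i => lin (c i)) Q ∘ Sum.inl)) =
      Ideal.span {lin (c 0), lin (c 1)} := by
    congr 1
    ext x
    simp [Set.mem_range, Fin.exists_fin_two, eq_comm]
  have hmod : ∀ γ : Fin 3 → k, ∑ j, γ j • Q j ∈ Ideal.span {lin (c 0), lin (c 1)} → γ = 0 := by
    intro γ hγ
    refine hreg.linearIndependent_mod hone γ ?_
    rw [hW]
    exact hγ
  have hli : LinearIndependent k Q := by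
    rw [Fintype.linearIndependent_iff]
    intro γ hγ i
    exact congrFun (hmod γ (by rw [hγ]; exact zero_mem _)) i
  have hUE : U ⊓ E = ⊥ := by
    rw [eq_bot_iff]
    rintro x ⟨hx, -, hx2⟩
    obtain ⟨γ, rfl⟩ := (Submodule.mem_span_range_iff_exists_fun k).1 hx
    have := hmod γ hx2
    simp [this]
  have hsup : U ⊔ E = Submodule.span k (Set.range q) := by
    refine le_antisymm (sup_le hUq inf_le_left) ?_
    intro x hx
    have hxI : x ∈ Ideal.span (Set.range q) := by
      have hle : Submodule.span k (Set.range q) ≤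
          (Ideal.span (Set.range q)).restrictScalars k :=
        Submodule.span_le.2 Ideal.subset_span
      exact hle hx
    have hxh : x.IsHomogeneous 2 := isHomogeneous_of_mem_span hq hx
    have hxJ := hle hxI
    have hJ : Ideal.span (Set.range (Sum.elim (fun i => lin (c i)) Q)) =
        Ideal.span {lin (c 0), lin (c 1)} ⊔ Ideal.span (Set.range Q) := by
      rw [Set.Sum.elim_range, Ideal.span_union, ← hW]
      rfl
    rw [hJ] at hxJ
    obtain ⟨a, ha, b, hb, rfl⟩ := Submodule.mem_sup.1 hxJ
    have hgr1 : IsGraded (Ideal.span {lin (c 0), lin (c 1)}) := isGraded_span (by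
      rintro p (rfl | rfl) <;> exact ⟨1, lin_isHomogeneous _⟩)
    have hgr2 : IsGraded (Ideal.span (Set.range Q)) := isGraded_span (by
      rintro _ ⟨j, rfl⟩; exact ⟨2, hQh j⟩)
    have h1 := hgr1 a ha 2
    have h2 := homogeneousComponent_mem_span hQh (homogeneousComponent_isHomogeneous 2 b)
      (hgr2 b hb 2)
    have h3 : a + b = homogeneousComponent 2 a + homogeneousComponent 2 b := by
      rw [← map_add, homogeneousComponent_eq_self hxh]
    rw [h3]
    refine Submodule.mem_sup.2 ⟨_, h2, _, ⟨?_, h1⟩, add_comm _ _⟩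
    rw [h3] at hx
    exact (add_mem_cancel_right (hUq h2)).1 hx
  have hfq : Module.finrank k (Submodule.span k (Set.range q)) = 5 := by
    rw [finrank_span_eq_card (linearIndependent_quadrics hq h0)]
    simp
  have hfQ : Module.finrank k U = 3 := by
    rw [hU, finrank_span_eq_card hli]
    simp
  have : FiniteDimensional k (Submodule.span k (Set.range q)) :=
    FiniteDimensional.span_of_finite k (Set.finite_range q)
  have : FiniteDimensional k U := FiniteDimensional.span_of_finite k (Set.finite_range Q)
  have : FiniteDimensional k E := Submodule.finiteDimensional_of_le (S₂ := Submodule.span k (Set.range q)) inf_le_left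
  have := Submodule.finrank_sup_add_finrank_inf_eq U E
  rw [hUE, hsup, hfq, hfQ, finrank_bot] at this
  omega

end FiveQuadrics

section Abstract

variable {k A : Type*} [Field k] [CommRing A] [Algebra k A]

/-- The products of the pencil `⟨l, m⟩` with the elements of `V`. -/
def pencilMul (V : Submodule k A) (l m : A) : Submodule k A :=
  V.map (LinearMap.mulLeft k l) ⊔ V.map (LinearMap.mulLeft k m)

theorem mem_pencilMul {V : Submodule k A} {l m x : A} :
    x ∈ pencilMul V l m ↔ ∃ a ∈ V, ∃ b ∈ V, x = l * a + m * b := by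
  simp only [pencilMul, Submodule.mem_sup, Submodule.mem_map, LinearMap.mulLeft_apply]
  constructor
  · rintro ⟨_, ⟨a, ha, rfl⟩, _, ⟨b, hb, rfl⟩, rfl⟩
    exact ⟨a, ha, b, hb, rfl⟩
  · rintro ⟨a, ha, b, hb, rfl⟩
    exact ⟨_, ⟨a, ha, rfl⟩, _, ⟨b, hb, rfl⟩, rfl⟩

/-- Properties of a pencil of linear forms that kills a nonzero quadratic class. -/
structure PencilData (V : Submodule k A) (l m : A) : Prop where
  exists_rel : ∃ u ∈ V, ∃ v ∈ V, ∃ u' ∈ V, ∃ v' ∈ V, l * u + m * v = 0 ∧ l * u' + m * v' = 0 ∧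
    ∀ α β γ : k, α • u + β • u' + γ • m = 0 → α • v + β • v' - γ • l = 0 → α = 0 ∧ β = 0
  dep : ∀ w ∈ V, ∀ v ∈ V, ∀ v' ∈ V, w ∉ Submodule.span k {l, m} → w * v ∈ pencilMul V l m →
    w * v' ∈ pencilMul V l m →
    ∃ α β : k, (α ≠ 0 ∨ β ≠ 0) ∧ α • v + β • v' ∈ Submodule.span k {l, m}
  rel_dep : ∀ u v : Fin 4 → A, (∀ i, u i ∈ V) → (∀ i, v i ∈ V) →
    (∀ i, l * u i + m * v i = 0) →
    ∃ α : Fin 4 → k, α ≠ 0 ∧ ∑ i, α i • u i = 0 ∧ ∑ i, α i • v i = 0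

/-- Properties of the graded pieces of a complete intersection of five quadrics. -/
structure QuadricData (G : ℕ → Submodule k A) : Prop where
  mul_mem : ∀ {i j : ℕ} {a b : A}, a ∈ G i → b ∈ G j → a * b ∈ G (i + j)
  finite : ∀ i, FiniteDimensional k (G i)
  finrank_one : Module.finrank k (G 1) = 5
  finrank_two : Module.finrank k (G 2) ≤ 10
  finrank_five : Module.finrank k (G 5) ≤ 1
  soc : ∀ {i : ℕ} {a : A}, i ≠ 5 → a ∈ G i → (∀ x ∈ G 1, x * a = 0) → a = 0
  kill_two : ∀ {a l m : A}, a ∈ G 1 → l ∈ G 1 → m ∈ G 1 → l * a = 0 → m * a = 0 →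
    LinearIndependent k ![l, m] → a = 0
  kill_three : ∀ {a l m p : A}, a ∈ G 2 → l ∈ G 1 → m ∈ G 1 → p ∈ G 1 → l * a = 0 → m * a = 0 →
    p * a = 0 → LinearIndependent k ![l, m, p] → a = 0
  pencil : ∀ {f l m : A}, f ∈ G 2 → f ≠ 0 → l ∈ G 1 → m ∈ G 1 → l * f = 0 → m * f = 0 →
    LinearIndependent k ![l, m] → PencilData (G 1) l m

end Abstract

section Quotient

variable {k : Type*} [Field k]

/-- The graded pieces of a quotient of a polynomial ring. -/
def piece {n : ℕ} (I : Ideal (MvPolynomial (Fin n) k)) (i : ℕ) :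
    Submodule k (MvPolynomial (Fin n) k ⧸ I) :=
  (homogeneousSubmodule (Fin n) k i).map (Ideal.Quotient.mkₐ k I).toLinearMap

theorem mem_piece {n : ℕ} {I : Ideal (MvPolynomial (Fin n) k)} {i : ℕ}
    {a : MvPolynomial (Fin n) k ⧸ I} :
    a ∈ piece I i ↔ ∃ p : MvPolynomial (Fin n) k, p.IsHomogeneous i ∧ Ideal.Quotient.mk I p = a :=
  Iff.rfl

/-- The linear map sending a coefficient vector to the class of its linear form. -/
def linClass {n : ℕ} (I : Ideal (MvPolynomial (Fin n) k)) :
    (Fin n → k) →ₗ[k] MvPolynomial (Fin n) k ⧸ I where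
  toFun c := Ideal.Quotient.mk I (lin c)
  map_add' c c' := by rw [lin_add, map_add]
  map_smul' r c := by
    rw [lin_smul, ← smul_eq_C_mul]
    exact map_smul (Ideal.Quotient.mkₐ k I) r (lin c)

theorem mem_piece_one {n : ℕ} {I : Ideal (MvPolynomial (Fin n) k)}
    {a : MvPolynomial (Fin n) k ⧸ I} : a ∈ piece I 1 ↔ ∃ c, linClass I c = a := by
  constructor
  · rintro ⟨p, hp, rfl⟩
    obtain ⟨c, rfl⟩ := exists_eq_lin hp
    exact ⟨c, rfl⟩
  · rintro ⟨c, rfl⟩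
    exact ⟨lin c, lin_isHomogeneous c, rfl⟩

theorem piece_one_eq_range {n : ℕ} (I : Ideal (MvPolynomial (Fin n) k)) :
    piece I 1 = LinearMap.range (linClass I) := by
  ext a
  rw [mem_piece_one, LinearMap.mem_range]

theorem lin_eq_zero {n : ℕ} {c : Fin n → k} (h : lin c = 0) : c = 0 := by
  funext i
  have := congrArg (eval (Pi.single i 1)) h
  rwa [eval_lin, dotProduct_single, mul_one, map_zero] at this

theorem finrank_homogeneousSubmodule_two_le :
    Module.finrank k (homogeneousSubmodule (Fin 5) k 2) ≤ 15 := by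
  let g : Sym2 (Fin 5) → MvPolynomial (Fin 5) k :=
    Sym2.lift ⟨fun i j => X i * X j, fun i j => mul_comm _ _⟩
  have hle : homogeneousSubmodule (Fin 5) k 2 ≤ Submodule.span k (Set.range g) := by
    rw [← homogeneousSubmodule_one_pow, homogeneousSubmodule_one_eq_span_X, pow_two,
      Submodule.span_mul_span]
    refine Submodule.span_mono ?_
    rintro _ ⟨_, ⟨i, rfl⟩, _, ⟨j, rfl⟩, rfl⟩
    exact ⟨s(i, j), rfl⟩
  have : FiniteDimensional k (Submodule.span k (Set.range g)) :=
    FiniteDimensional.span_of_finite k (Set.finite_range g)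
  refine (Submodule.finrank_mono hle).trans ((finrank_range_le_card g).trans ?_)
  rw [Sym2.card]
  decide

theorem finite_piece {n : ℕ} (I : Ideal (MvPolynomial (Fin n) k)) (i : ℕ) :
    FiniteDimensional k (piece I i) :=
  Module.Finite.iff_fg.2 ((homogeneousSubmodule_fg (Fin n) k i).map _)

variable {q : Fin 5 → MvPolynomial (Fin 5) k}

theorem injective_linClass (hq : ∀ i, (q i).IsHomogeneous 2) :
    Function.Injective (linClass (Ideal.span (Set.range q))) := by
  rw [injective_iff_map_eq_zero]
  intro c hc
  exact lin_eq_zero (eq_zero_of_isHomogeneous_one_of_mem hq (lin_isHomogeneous c)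
    (Ideal.Quotient.eq_zero_iff_mem.1 hc))

variable [IsAlgClosed k]

theorem finrank_piece_two (hq : ∀ i, (q i).IsHomogeneous 2)
    (h0 : ∀ p : Fin 5 → k, (∀ i, eval p (q i) = 0) → p = 0) :
    Module.finrank k (piece (Ideal.span (Set.range q)) 2) ≤ 10 := by
  set I := Ideal.span (Set.range q) with hI
  have hfin : FiniteDimensional k (homogeneousSubmodule (Fin 5) k 2) :=
    Module.Finite.iff_fg.2 (homogeneousSubmodule_fg (Fin 5) k 2)
  let φ : homogeneousSubmodule (Fin 5) k 2 →ₗ[k] MvPolynomial (Fin 5) k ⧸ I :=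
    (Ideal.Quotient.mkₐ k I).toLinearMap ∘ₗ (homogeneousSubmodule (Fin 5) k 2).subtype
  have hrange : LinearMap.range φ = piece I 2 := by
    rw [LinearMap.range_comp, Submodule.range_subtype]
    rfl
  have h1 := LinearMap.finrank_range_add_finrank_ker φ
  rw [hrange] at h1
  have h15 := finrank_homogeneousSubmodule_two_le (k := k)
  let g : Fin 5 → LinearMap.ker φ := fun i => ⟨⟨q i, hq i⟩, by
    rw [LinearMap.mem_ker]
    exact Ideal.Quotient.eq_zero_iff_mem.2 (Ideal.subset_span ⟨i, rfl⟩)⟩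
  have hg : LinearIndependent k g := by
    refine LinearIndependent.of_comp
      ((homogeneousSubmodule (Fin 5) k 2).subtype ∘ₗ (LinearMap.ker φ).subtype) ?_
    exact linearIndependent_quadrics hq h0
  have h5 := hg.fintype_card_le_finrank
  simp only [Fintype.card_fin] at h5
  omega

theorem pencilData (hq : ∀ i, (q i).IsHomogeneous 2)
    (h0 : ∀ p : Fin 5 → k, (∀ i, eval p (q i) = 0) → p = 0)
    {c : Fin 2 → Fin 5 → k} (hc : LinearIndependent k c) {f : MvPolynomial (Fin 5) k}
    (hf : f.IsHomogeneous 2) (hfI : f ∉ Ideal.span (Set.range q))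
    (hcf : ∀ j, lin (c j) * f ∈ Ideal.span (Set.range q)) :
    PencilData (piece (Ideal.span (Set.range q)) 1)
      (linClass (Ideal.span (Set.range q)) (c 0)) (linClass (Ideal.span (Set.range q)) (c 1)) := by
  obtain ⟨Q, hQ, hreg, hsoc, hle⟩ := exists_section_of_lin_mul_mem hq h0 hc hf hfI hcf
  have hrank := finrank_inf_pencil hq h0 hQ hreg hle
  have hinj := injective_linClass hq
  set I := Ideal.span (Set.range q) with hI
  set E := Submodule.span k (Set.range q) ⊓
      (Ideal.span {lin (c 0), lin (c 1)}).restrictScalars k with hE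
  have hqI : Submodule.span k (Set.range q) ≤ I.restrictScalars k :=
    Submodule.span_le.2 Ideal.subset_span
  have : FiniteDimensional k (Submodule.span k (Set.range q)) :=
    FiniteDimensional.span_of_finite k (Set.finite_range q)
  have hEfin : FiniteDimensional k E :=
    Submodule.finiteDimensional_of_le (S₂ := Submodule.span k (Set.range q)) inf_le_left
  have hlh : ∀ i, (lin (c i)).IsHomogeneous 1 := fun i => lin_isHomogeneous _
  have hl0 : linClass I (c 0) = Ideal.Quotient.mk I (lin (c 0)) := rfl
  have hl1 : linClass I (c 1) = Ideal.Quotient.mk I (lin (c 1)) := rfl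
  set J := Ideal.span (Set.range (Sum.elim (fun i => lin (c i)) Q)) with hJ
  have hcJ : ∀ i, lin (c i) ∈ J := fun i => Ideal.subset_span ⟨Sum.inl i, rfl⟩
  refine ⟨?_, ?_, ?_⟩
  · have b := Module.finBasisOfFinrankEq k E hrank
    have hmem : ∀ i, ∃ u v : Fin 5 → k, ((b i : E) : MvPolynomial (Fin 5) k) =
        lin (c 0) * lin u + lin (c 1) * lin v := by
      intro i
      obtain ⟨u, v, hu, hv, h⟩ := exists_mul_add_mul_of_mem_span (e := 1) (hlh 0) (hlh 1)
        (isHomogeneous_of_mem_span hq (b i).2.1) (b i).2.2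
      obtain ⟨u, rfl⟩ := exists_eq_lin hu
      obtain ⟨v, rfl⟩ := exists_eq_lin hv
      exact ⟨u, v, h⟩
    choose u v huv using hmem
    have hrel : ∀ i, linClass I (c 0) * linClass I (u i) + linClass I (c 1) * linClass I (v i) =
        0 := by
      intro i
      change Ideal.Quotient.mk I (lin (c 0)) * Ideal.Quotient.mk I (lin (u i)) +
        Ideal.Quotient.mk I (lin (c 1)) * Ideal.Quotient.mk I (lin (v i)) = 0
      rw [← map_mul, ← map_mul, ← map_add, ← huv, Ideal.Quotient.eq_zero_iff_mem]
      exact hqI (b i).2.1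
    refine ⟨_, mem_piece_one.2 ⟨u 0, rfl⟩, _, mem_piece_one.2 ⟨v 0, rfl⟩, _,
      mem_piece_one.2 ⟨u 1, rfl⟩, _, mem_piece_one.2 ⟨v 1, rfl⟩, hrel 0, hrel 1, ?_⟩
    intro α β γ h1 h2
    rw [← map_smul, ← map_smul, ← map_smul, ← map_add, ← map_add] at h1
    rw [← map_smul, ← map_smul, ← map_smul, ← map_add, ← map_sub] at h2
    have h1' := congrArg lin (hinj (h1.trans (map_zero _).symm))
    have h2' := congrArg lin (hinj (h2.trans (map_zero _).symm))
    rw [sub_eq_add_neg, ← neg_smul] at h2'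
    simp only [lin_add, lin_smul, map_neg] at h1' h2'
    have hlin0 : lin (0 : Fin 5 → k) = 0 := by simp [lin]
    rw [hlin0] at h1' h2'
    have h3 : α • b 0 + β • b 1 = 0 := by
      apply Subtype.ext
      simp only [Submodule.coe_add, Submodule.coe_smul, huv, smul_eq_C_mul, Submodule.coe_zero]
      linear_combination lin (c 0) * h1' + lin (c 1) * h2'
    have := Fintype.linearIndependent_iff.1 b.linearIndependent ![α, β]
      (by simpa [Fin.sum_univ_two] using h3)
    exact ⟨this 0, this 1⟩
  · intro w hw v hv v' hv' hwW hwv hwv'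
    obtain ⟨w, rfl⟩ := mem_piece_one.1 hw
    obtain ⟨v, rfl⟩ := mem_piece_one.1 hv
    obtain ⟨v', rfl⟩ := mem_piece_one.1 hv'
    by_contra! hcon
    have hspan : ∀ x y : k, ∀ a : Fin 5 → k, linClass I a = x • linClass I (c 0) +
        y • linClass I (c 1) → linClass I a ∈
          Submodule.span k {linClass I (c 0), linClass I (c 1)} := fun x y a h =>
      Submodule.mem_span_pair.2 ⟨x, y, h.symm⟩
    have hJmul : ∀ v, linClass I w * linClass I v ∈
        pencilMul (piece I 1) (linClass I (c 0)) (linClass I (c 1)) → lin w * lin v ∈ J := by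
      intro v hv
      obtain ⟨a, ⟨a, -, rfl⟩, b, ⟨b, -, rfl⟩, hab⟩ := mem_pencilMul.1 hv
      have : lin w * lin v - (lin (c 0) * a + lin (c 1) * b) ∈ I := by
        rw [← Ideal.Quotient.eq_zero_iff_mem, map_sub, sub_eq_zero]
        simp only [map_add, map_mul]
        exact hab
      have h2 := add_mem (hle this)
        (add_mem (Ideal.mul_mem_right a _ (hcJ 0)) (Ideal.mul_mem_right b _ (hcJ 1)))
      rwa [sub_add_cancel] at h2
    have hli : LinearIndependent k ![c 0, c 1, v, v'] := by
      rw [Fintype.linearIndependent_iff]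
      intro g hg
      simp only [Fin.sum_univ_four, Matrix.cons_val] at hg
      have h2 : ¬ (g 2 ≠ 0 ∨ g 3 ≠ 0) := by
        intro h
        refine hcon (g 2) (g 3) h (Submodule.mem_span_pair.2 ⟨-g 0, -g 1, ?_⟩)
        have := congrArg (linClass I) hg
        simp only [map_add, map_smul, map_zero] at this
        simp only [neg_smul]
        linear_combination -this
      push Not at h2
      rw [h2.1, h2.2, zero_smul, zero_smul, add_zero, add_zero] at hg
      have := Fintype.linearIndependent_iff.1 hc ![g 0, g 1]
        (by simpa [Fin.sum_univ_two] using hg)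
      intro i
      fin_cases i
      · exact this 0
      · exact this 1
      · exact h2.1
      · exact h2.2
    obtain ⟨Q', hQ', hQ0', -, hsoc'⟩ := exists_section hq h0 (r := 1) (by simp) hli
    obtain ⟨N, hN⟩ := exists_forall_isHomogeneous_mem hQ0'
    have hwJ : lin w ∉ J := by
      intro h
      apply hwW
      have hJe : J = Ideal.span (Set.range fun i => lin (c i)) ⊔ Ideal.span (Set.range Q) := by
        rw [hJ, Set.Sum.elim_range, Ideal.span_union]
      rw [hJe] at h
      obtain ⟨a, ha, b, hb, hab⟩ := Submodule.mem_sup.1 h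
      have hgr1 : IsGraded (Ideal.span (Set.range fun i => lin (c i))) := isGraded_span (by
        rintro _ ⟨i, rfl⟩; exact ⟨1, lin_isHomogeneous _⟩)
      have h1 := homogeneousComponent_mem_span (fun i => lin_isHomogeneous (c i))
        (homogeneousComponent_isHomogeneous 1 a) (hgr1 a ha 1)
      have h2 : homogeneousComponent 1 b = 0 := by
        rw [Ideal.mem_span_range_iff_exists_fun] at hb
        obtain ⟨g, rfl⟩ := hb
        rw [map_sum]
        exact Finset.sum_eq_zero fun i _ => homogeneousComponent_mul_of_not_le
          (isHomogeneous_of_mem_span hq (hQ i)) (by omega) _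
      obtain ⟨g, hg⟩ := (Submodule.mem_span_range_iff_exists_fun k).1 h1
      have hw' : lin w = lin (g 0 • c 0 + g 1 • c 1) := by
        rw [← homogeneousComponent_eq_self (lin_isHomogeneous w), ← hab, map_add, h2, add_zero,
          ← hg, Fin.sum_univ_two, lin_add, lin_smul, lin_smul, smul_eq_C_mul, smul_eq_C_mul]
      refine hspan (g 0) (g 1) _ ?_
      rw [← map_smul, ← map_smul, ← map_add]
      change Ideal.Quotient.mk I (lin w) = Ideal.Quotient.mk I _
      rw [hw']
    obtain ⟨b, hb, hbw⟩ := hsoc.exists_mul_notMem (by omega) (lin_isHomogeneous w) hwJ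
    have hbmem := hsoc'.mem_of_lt hN (by omega) hb
    apply hbw
    clear hbw hb
    induction hbmem using Submodule.span_induction with
    | mem x hx =>
      obtain ⟨(j | j), rfl⟩ := hx
      · simp only [Sum.elim_inl]
        fin_cases j
        · exact Ideal.mul_mem_right _ _ (hcJ 0)
        · exact Ideal.mul_mem_right _ _ (hcJ 1)
        · rw [mul_comm]; exact hJmul _ hwv
        · rw [mul_comm]; exact hJmul _ hwv'
      · exact Ideal.mul_mem_right _ _ (hle (hqI (hQ' j)))
    | zero => simp
    | add x y _ _ hx hy => rw [add_mul]; exact add_mem hx hy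
    | smul c x _ hx => rw [smul_eq_mul, mul_assoc]; exact Ideal.mul_mem_left _ _ hx
  · intro u v hu hv huv
    choose u' hu' using fun i => mem_piece_one.1 (hu i)
    choose v' hv' using fun i => mem_piece_one.1 (hv i)
    by_contra! hcon
    let Φ : (Fin 4 → k) →ₗ[k] MvPolynomial (Fin 5) k :=
      Fintype.linearCombination k fun i => lin (c 0) * lin (u' i) + lin (c 1) * lin (v' i)
    have hΦ : ∀ α, Φ α = lin (c 0) * lin (∑ i, α i • u' i) + lin (c 1) * lin (∑ i, α i • v' i) := by
      intro α
      have hs : ∀ w : Fin 4 → Fin 5 → k, lin (∑ i, α i • w i) = ∑ i, C (α i) * lin (w i) := by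
        intro w
        simp only [Fin.sum_univ_four, lin_add, lin_smul]
      rw [hs, hs, Fintype.linearCombination_apply, Finset.mul_sum, Finset.mul_sum,
        ← Finset.sum_add_distrib]
      refine Finset.sum_congr rfl fun i _ => ?_
      rw [smul_eq_C_mul]
      ring
    have hrangeE : LinearMap.range Φ ≤ E := by
      rw [Fintype.range_linearCombination, Submodule.span_le]
      rintro _ ⟨i, rfl⟩
      have hI : lin (c 0) * lin (u' i) + lin (c 1) * lin (v' i) ∈ I := by
        rw [← Ideal.Quotient.eq_zero_iff_mem, map_add, map_mul, map_mul, ← huv i, ← hu', ← hv']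
        rfl
      refine ⟨homogeneousComponent_mem_span hq ?_ hI, ?_⟩
      · exact ((hlh 0).mul (lin_isHomogeneous _)).add ((hlh 1).mul (lin_isHomogeneous _))
      · exact Ideal.mem_span_pair.2 ⟨lin (u' i), lin (v' i), by ring⟩
    have hr : Module.finrank k (LinearMap.range Φ) ≤ 2 := hrank ▸ Submodule.finrank_mono hrangeE
    have hrk := LinearMap.finrank_range_add_finrank_ker Φ
    rw [Module.finrank_fin_fun] at hrk
    have hker : ∀ α ∈ LinearMap.ker Φ, ∃ t : k, ∑ i, α i • u' i = t • c 1 ∧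
        ∑ i, α i • v' i = -(t • c 0) := by
      intro α hα
      rw [LinearMap.mem_ker, hΦ] at hα
      have h1 := hreg {Sum.inl 1} (Sum.inl 0) (by simp) (lin (∑ i, α i • u' i)) (by
        simp only [Set.image_singleton, Sum.elim_inl, Ideal.mem_span_singleton]
        exact ⟨-lin (∑ i, α i • v' i), by linear_combination hα⟩)
      simp only [Set.image_singleton, Sum.elim_inl, Ideal.mem_span_singleton] at h1
      obtain ⟨g, hg⟩ := h1
      have hg2 := congrArg (homogeneousComponent 1) hg
      rw [mul_comm, homogeneousComponent_mul_of_le (hlh 1) le_rfl, Nat.sub_self,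
        homogeneousComponent_zero, homogeneousComponent_eq_self (lin_isHomogeneous _),
        ← lin_smul] at hg2
      have hlinj : ∀ a b : Fin 5 → k, lin a = lin b → a = b := fun a b h =>
        hinj (congrArg (Ideal.Quotient.mk I) h)
      refine ⟨coeff 0 g, hlinj _ _ hg2, hlinj _ _ ?_⟩
      have hne : lin (c 1) ≠ 0 := fun h => hc.ne_zero 1 (lin_eq_zero h)
      apply mul_left_cancel₀ hne
      rw [hg2] at hα
      rw [← neg_smul, lin_smul, map_neg]
      rw [lin_smul] at hα
      linear_combination hα
    have hdim : 2 ≤ Module.finrank k (LinearMap.ker Φ) := by omega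
    obtain ⟨b, hb⟩ := exists_linearIndependent_of_le_finrank hdim
    choose t ht using fun i => hker (b i) (b i).2
    have hcomb : ∀ x y : k, x * t 0 + y * t 1 = 0 → x = 0 ∧ y = 0 := by
      intro x y hxy
      have hz : (x • (b 0 : Fin 4 → k) + y • (b 1 : Fin 4 → k)) = 0 := by
        by_contra hne
        refine hcon _ hne ?_ ?_
        · have : ∑ i, (x • (b 0 : Fin 4 → k) + y • (b 1 : Fin 4 → k)) i • u' i = 0 := by
            simp only [Pi.add_apply, Pi.smul_apply, smul_eq_mul, add_smul, mul_smul,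
              Finset.sum_add_distrib, ← Finset.smul_sum, (ht 0).1, (ht 1).1]
            rw [← mul_smul, ← mul_smul, ← add_smul, hxy, zero_smul]
          simp only [← hu', ← map_smul, ← map_sum, this, map_zero]
        · have : ∑ i, (x • (b 0 : Fin 4 → k) + y • (b 1 : Fin 4 → k)) i • v' i = 0 := by
            simp only [Pi.add_apply, Pi.smul_apply, smul_eq_mul, add_smul, mul_smul,
              Finset.sum_add_distrib, ← Finset.smul_sum, (ht 0).2, (ht 1).2]
            rw [smul_neg, smul_neg, ← neg_add, ← mul_smul, ← mul_smul, ← add_smul, hxy, zero_smul,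
              neg_zero]
          simp only [← hv', ← map_smul, ← map_sum, this, map_zero]
      have := Fintype.linearIndependent_iff.1 hb ![x, y] (by
        apply Subtype.ext
        simpa [Fin.sum_univ_two] using hz)
      exact ⟨this 0, this 1⟩
    have h1 := hcomb (t 1) (-t 0) (by ring)
    have h2 := hcomb 1 0 (by rw [neg_eq_zero.1 h1.2]; ring)
    exact one_ne_zero h2.1

/-- The quotient by five quadrics without nontrivial common zeros satisfies `QuadricData`. -/
theorem quadricData (hq : ∀ i, (q i).IsHomogeneous 2)
    (h0 : ∀ p : Fin 5 → k, (∀ i, eval p (q i) = 0) → p = 0) :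
    QuadricData (piece (Ideal.span (Set.range q))) := by
  have hsoc := (isReg_and_hasSocle_quadrics hq h0).2
  have hinj := injective_linClass hq
  have hker := fun {e i : ℕ} he hi c hc a ha => mem_of_lin_mul_mem hq h0 (e := e) (i := i) he hi
    (c := c) hc (a := a) ha
  have hpen := fun {c} hc {f} hf => pencilData hq h0 (c := c) hc (f := f) hf
  obtain ⟨N, hN⟩ := exists_forall_isHomogeneous_mem h0
  have hcomb := fun a b ha hb => hsoc.exists_combination_mem hN (a := a) (b := b) ha hb
  set I := Ideal.span (Set.range q) with hI
  refine ⟨?_, finite_piece I, ?_, finrank_piece_two hq h0, ?_, ?_, ?_, ?_, ?_⟩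
  · rintro i j _ _ ⟨a, ha, rfl⟩ ⟨b, hb, rfl⟩
    exact ⟨a * b, IsHomogeneous.mul ha hb, map_mul (Ideal.Quotient.mkₐ k I) a b⟩
  · rw [piece_one_eq_range, LinearMap.finrank_range_of_inj hinj, Module.finrank_fin_fun]
  · have := finite_piece I 5
    rw [finrank_le_one_iff]
    by_cases h : ∀ x : piece I 5, x = 0
    · exact ⟨0, fun w => ⟨0, by rw [h w, smul_zero]⟩⟩
    · push Not at h
      obtain ⟨⟨x, p, hp, rfl⟩, hx⟩ := h
      refine ⟨⟨_, p, hp, rfl⟩, ?_⟩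
      rintro ⟨_, r, hr, rfl⟩
      obtain ⟨α, β, hne, hmem⟩ := hcomb p r hp hr
      have hmem' : α • Ideal.Quotient.mkₐ k I p + β • Ideal.Quotient.mkₐ k I r = 0 := by
        rw [← map_smul, ← map_smul, ← map_add, smul_eq_C_mul, smul_eq_C_mul]
        exact Ideal.Quotient.eq_zero_iff_mem.2 hmem
      have hβ : β ≠ 0 := by
        rintro rfl
        have hα : α ≠ 0 := by simpa using hne
        rw [zero_smul, add_zero] at hmem'
        exact hx (Subtype.ext ((smul_eq_zero.1 hmem').resolve_left hα))
      refine ⟨-(β⁻¹ * α), Subtype.ext ?_⟩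
      change -(β⁻¹ * α) • Ideal.Quotient.mkₐ k I p = Ideal.Quotient.mkₐ k I r
      rw [neg_smul, mul_smul, neg_eq_iff_add_eq_zero]
      have := congrArg (β⁻¹ • ·) hmem'
      simpa [smul_add, smul_smul, inv_mul_cancel₀ hβ] using this
  · rintro i _ hi ⟨p, hp, rfl⟩ hx
    refine Ideal.Quotient.eq_zero_iff_mem.2 (hsoc.1 i p hp (fun j => ?_) hi)
    rw [← Ideal.Quotient.eq_zero_iff_mem, map_mul]
    exact hx _ ⟨X j, isHomogeneous_X k j, rfl⟩
  · rintro _ _ _ ⟨a, ha, rfl⟩ hl hm h1 h2 hli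
    obtain ⟨l, rfl⟩ := mem_piece_one.1 hl
    obtain ⟨m, rfl⟩ := mem_piece_one.1 hm
    refine Ideal.Quotient.eq_zero_iff_mem.2 (hker (e := 2) (by omega) one_lt_two ![l, m] ?_ a ha ?_)
    · refine LinearIndependent.of_comp (linClass I) ?_
      have e : ⇑(linClass I) ∘ ![l, m] = ![linClass I l, linClass I m] := by
        funext i
        fin_cases i <;> rfl
      rw [e]
      exact hli
    · intro j
      rw [← Ideal.Quotient.eq_zero_iff_mem, map_mul]
      fin_cases j
      · exact h1
      · exact h2
  · rintro _ _ _ _ ⟨a, ha, rfl⟩ hl hm hp h1 h2 h3 hli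
    obtain ⟨l, rfl⟩ := mem_piece_one.1 hl
    obtain ⟨m, rfl⟩ := mem_piece_one.1 hm
    obtain ⟨p, rfl⟩ := mem_piece_one.1 hp
    refine Ideal.Quotient.eq_zero_iff_mem.2
      (hker (e := 3) (by omega) (by omega) ![l, m, p] ?_ a ha ?_)
    · refine LinearIndependent.of_comp (linClass I) ?_
      have e : ⇑(linClass I) ∘ ![l, m, p] = ![linClass I l, linClass I m, linClass I p] := by
        funext i
        fin_cases i <;> rfl
      rw [e]
      exact hli
    · intro j
      rw [← Ideal.Quotient.eq_zero_iff_mem, map_mul]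
      fin_cases j
      · exact h1
      · exact h2
      · exact h3
  · rintro _ _ _ ⟨f, hf, rfl⟩ hf0 hl hm h1 h2 hli
    obtain ⟨l, rfl⟩ := mem_piece_one.1 hl
    obtain ⟨m, rfl⟩ := mem_piece_one.1 hm
    refine hpen (c := ![l, m]) ?_ hf (fun h => hf0 (Ideal.Quotient.eq_zero_iff_mem.2 h)) ?_
    · refine LinearIndependent.of_comp (linClass I) ?_
      have e : ⇑(linClass I) ∘ ![l, m] = ![linClass I l, linClass I m] := by
        funext i
        fin_cases i <;> rfl
      rw [e]
      exact hli
    · intro j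
      rw [← Ideal.Quotient.eq_zero_iff_mem, map_mul]
      fin_cases j
      · exact h1
      · exact h2

end Quotient

section LinearAlgebra

variable {k A : Type*} [Field k] [AddCommGroup A] [Module k A]

theorem exists_eq_smul_of_not_linearIndependent {l m : A} (hl : l ≠ 0)
    (h : ¬ LinearIndependent k ![l, m]) : ∃ c : k, m = c • l := by
  rw [LinearIndependent.pair_iff' hl] at h
  push Not at h
  obtain ⟨c, hc⟩ := h
  exact ⟨c, hc.symm⟩

theorem exists_linearIndependent_mod (V W : Submodule k A) [FiniteDimensional k V]
    [FiniteDimensional k W] {r : ℕ} (h : r + Module.finrank k W ≤ Module.finrank k V) :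
    ∃ g : Fin r → A, (∀ i, g i ∈ V) ∧ ∀ α : Fin r → k, ∑ i, α i • g i ∈ W → α = 0 := by
  have h1 := LinearMap.finrank_range_add_finrank_ker (W.mkQ ∘ₗ V.subtype)
  have h2 : Module.finrank k (LinearMap.ker (W.mkQ ∘ₗ V.subtype)) ≤ Module.finrank k W := by
    refine LinearMap.finrank_le_finrank_of_injective
      (f := (V.subtype ∘ₗ (LinearMap.ker (W.mkQ ∘ₗ V.subtype)).subtype).codRestrict W ?_) ?_
    · intro x
      have := x.2
      rwa [LinearMap.mem_ker, LinearMap.comp_apply, Submodule.mkQ_apply,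
        Submodule.Quotient.mk_eq_zero] at this
    · intro x y hxy
      exact Subtype.ext (Subtype.ext (congrArg (fun z : W => (z : A)) hxy))
  have h3 : r ≤ Module.finrank k (LinearMap.range (W.mkQ ∘ₗ V.subtype)) := by omega
  obtain ⟨b, hb⟩ := exists_linearIndependent_of_le_finrank h3
  choose g hg using fun i => (b i).2
  refine ⟨fun i => g i, fun i => (g i).2, fun α hα => ?_⟩
  funext i
  refine Fintype.linearIndependent_iff.1 hb α (Subtype.ext ?_) i
  have := (Submodule.Quotient.mk_eq_zero W).2 hα
  rw [← Submodule.mkQ_apply, map_sum] at this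
  simp only [map_smul] at this
  rw [Submodule.coe_sum, Submodule.coe_zero, ← this]
  refine Finset.sum_congr rfl fun i _ => ?_
  rw [Submodule.coe_smul, ← hg i]
  rfl

theorem finrank_span_pair_le (l m : A) : Module.finrank k (Submodule.span k {l, m}) ≤ 2 := by
  classical
  refine (finrank_span_le_card _).trans ?_
  rw [Set.toFinset_insert, Set.toFinset_singleton]
  exact Finset.card_le_two

theorem exists_functional_of_finrank_le_one (V : Submodule k A) [FiniteDimensional k V]
    (h : Module.finrank k V ≤ 1) : ∃ φ : A →ₗ[k] k, ∀ z ∈ V, φ z = 0 → z = 0 := by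
  rw [finrank_le_one_iff] at h
  obtain ⟨v, hv⟩ := h
  by_cases h0 : (v : A) = 0
  · refine ⟨0, fun z hz _ => ?_⟩
    obtain ⟨c, hc⟩ := hv ⟨z, hz⟩
    have := congrArg Subtype.val hc
    rw [Submodule.coe_smul, h0, smul_zero] at this
    exact this.symm
  · obtain ⟨φ, hφ⟩ := Module.Projective.exists_dual_eq_one k h0
    refine ⟨φ, fun z hz hz0 => ?_⟩
    obtain ⟨c, hc⟩ := hv ⟨z, hz⟩
    have hcz : c • (v : A) = z := congrArg Subtype.val hc
    rw [← hcz, map_smul, hφ, smul_eq_mul, mul_one] at hz0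
    rw [← hcz, hz0, zero_smul]

theorem finrank_range_flip {V W : Type*} [AddCommGroup V] [Module k V] [AddCommGroup W]
    [Module k W] [FiniteDimensional k V] [FiniteDimensional k W] (B : V →ₗ[k] W →ₗ[k] k) :
    Module.finrank k (LinearMap.range B.flip) = Module.finrank k (LinearMap.range B) := by
  have h : B.flip = B.dualMap ∘ₗ Module.Dual.eval k W := rfl
  rw [h, LinearMap.range_comp_of_range_eq_top, LinearMap.finrank_range_dualMap_eq_finrank_range]
  exact LinearMap.range_eq_top.2 (Module.evalEquiv k W).surjective

end LinearAlgebra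

section Derivations

variable {k A : Type*} [Field k] [CommRing A] [Algebra k A]

/-- A family of derivations indexed by linear forms and such that `D M L = M`. -/
structure GenericData (G : ℕ → Submodule k A) (D : A →ₗ[k] A →+ A) (L : A) : Prop where
  mem : L ∈ G 1
  leibniz : ∀ M a b, D M (a * b) = a * D M b + b * D M a
  map_mem : ∀ M {i : ℕ} {a : A}, a ∈ G i → D M a ∈ G i
  apply_self : ∀ M ∈ G 1, D M L = M
  smul : ∀ M (c : k), ∃ d : k, ∀ a, D M (c • a) = d • a + c • D M a
  exists_smul : ∃ c d : k, d ≠ 0 ∧ ∀ a, D L (c • a) = d • a + c • D L a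

variable {G : ℕ → Submodule k A} {D : A →ₗ[k] A →+ A} {L : A}

variable (k) in
theorem eq_zero_of_natCast_mul [CharZero k] {n : ℕ} (hn : n ≠ 0) {a : A} (h : (n : A) * a = 0) :
    a = 0 := by
  rw [← nsmul_eq_mul, ← Nat.cast_smul_eq_nsmul k] at h
  exact (smul_eq_zero.1 h).resolve_left (Nat.cast_ne_zero.2 hn)

/-- The linear map `M ↦ D M a`. -/
def derAt (D : A →ₗ[k] A →+ A) (a : A) : A →ₗ[k] A where
  toFun M := D M a
  map_add' M N := by rw [map_add]; rfl
  map_smul' c M := by rw [map_smul]; rfl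

theorem derAt_apply (D : A →ₗ[k] A →+ A) (a M : A) : derAt D a M = D M a := rfl

namespace GenericData

theorem ne_zero (hG : QuadricData G) (hD : GenericData G D L) : L ≠ 0 := by
  rintro rfl
  have h : G 1 = ⊥ := (Submodule.eq_bot_iff _).2 fun M hM => by
    rw [← hD.apply_self M hM, map_zero]
  have := hG.finrank_one
  rw [h, finrank_bot] at this
  omega

theorem mul_add_mul {f : A} (hD : GenericData G D L) (h : L * f = 0) {M : A} (hM : M ∈ G 1) :
    M * f + L * D M f = 0 := by
  have := congrArg (D M) h
  rw [hD.leibniz, hD.apply_self M hM, map_zero] at this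
  linear_combination this

theorem mul_self_eq_zero {f : A} (hG : QuadricData G) (hD : GenericData G D L) (hf : f ∈ G 2)
    (h : L * f = 0) : f * f = 0 := by
  refine hG.soc (i := 4) (by omega) (hG.mul_mem hf hf) fun M hM => ?_
  linear_combination f * hD.mul_add_mul h hM - D M f * h

variable [CharZero k] {f : A}

theorem eq_zero_of_mul_eq_zero (hG : QuadricData G) (hD : GenericData G D L) {a : A}
    (ha : a ∈ G 1) (h : L * a = 0) : a = 0 := by
  have hL := hD.ne_zero hG
  have haa : a * a = 0 := by
    refine hG.soc (i := 2) (by omega) (hG.mul_mem ha ha) fun M hM => ?_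
    have := congrArg (D M) h
    rw [hD.leibniz, hD.apply_self M hM, map_zero] at this
    linear_combination a * this - D M a * h
  by_contra ha0
  by_cases hli : LinearIndependent k ![L, a]
  · exact ha0 (hG.kill_two ha hD.mem ha h haa hli)
  obtain ⟨c, rfl⟩ := exists_eq_smul_of_not_linearIndependent hL hli
  have hc : c ≠ 0 := by
    rintro rfl
    exact ha0 (zero_smul k L)
  have hLL : L * L = 0 := by
    rw [mul_smul_comm] at h
    exact (smul_eq_zero.1 h).resolve_left hc
  refine hL (hG.soc (i := 1) (by omega) hD.mem fun M hM => ?_)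
  have := congrArg (D M) hLL
  rw [hD.leibniz, hD.apply_self M hM, map_zero] at this
  refine eq_zero_of_natCast_mul k two_ne_zero ?_
  push_cast
  linear_combination this

theorem mul_apply_eq_zero (hG : QuadricData G) (hD : GenericData G D L) (hf : f ∈ G 2)
    (h : L * f = 0) (M : A) : f * D M f = 0 := by
  have := congrArg (D M) (hD.mul_self_eq_zero hG hf h)
  rw [hD.leibniz, map_zero] at this
  refine eq_zero_of_natCast_mul k two_ne_zero ?_
  push_cast
  linear_combination this

theorem false_of_sq_mul (hG : QuadricData G) (hD : GenericData G D L) {a : A} (ha : a ∈ G 1)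
    (h : L * (L * a) = 0) (hW : ∀ K ∈ G 1, K * (L * a) = 0 → ∃ c : k, K = c • L)
    (hDa : D L a ≠ 0) : False := by
  have hfin := hG.finite 1
  have h1 : ∀ M ∈ G 1, 2 * (M * (L * a)) + L * L * D M a = 0 := by
    intro M hM
    have := congrArg (D M) h
    rw [hD.leibniz, hD.leibniz, hD.apply_self M hM, map_zero] at this
    linear_combination this
  have h2 : L * (a * a) = 0 := by
    refine hG.soc (i := 3) (by omega) (hG.mul_mem hD.mem (hG.mul_mem ha ha)) fun M hM => ?_
    refine eq_zero_of_natCast_mul k two_ne_zero ?_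
    push_cast
    linear_combination a * h1 M hM - D M a * h
  have h3 : a * (a * a) = 0 := by
    refine hG.soc (i := 3) (by omega) (hG.mul_mem ha (hG.mul_mem ha ha)) fun M hM => ?_
    have := congrArg (D M) h2
    rw [hD.leibniz, hD.leibniz, hD.apply_self M hM, map_zero] at this
    linear_combination a * this - 2 * D M a * h2
  have h4 : ∀ M, a * a * D M a = 0 := by
    intro M
    have := congrArg (D M) h3
    rw [hD.leibniz, hD.leibniz, map_zero] at this
    refine eq_zero_of_natCast_mul k three_ne_zero ?_
    push_cast
    linear_combination this
  let φ : G 1 →ₗ[k] G 1 := (derAt D a).restrict fun M _ => hD.map_mem M ha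
  have hφ : Function.Surjective φ := by
    rw [← LinearMap.injective_iff_surjective, injective_iff_map_eq_zero]
    rintro ⟨M, hM⟩ hφM
    have hMa : D M a = 0 := congrArg Subtype.val hφM
    have h5 := h1 M hM
    rw [hMa, mul_zero, add_zero] at h5
    obtain ⟨c, rfl⟩ := hW M hM (eq_zero_of_natCast_mul k two_ne_zero (by exact_mod_cast h5))
    rw [map_smul, AddMonoidHom.smul_apply, smul_eq_zero, or_iff_left hDa] at hMa
    subst hMa
    exact Subtype.ext (zero_smul k L)
  have h6 : a * a = 0 := by
    refine hG.soc (i := 2) (by omega) (hG.mul_mem ha ha) fun x hx => ?_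
    obtain ⟨M, hM⟩ := hφ ⟨x, hx⟩
    have hMx : D M a = x := congrArg Subtype.val hM
    rw [← hMx, mul_comm, h4]
  have h7 : a = 0 := by
    refine hG.soc (i := 1) (by omega) ha fun x hx => ?_
    obtain ⟨M, hM⟩ := hφ ⟨x, hx⟩
    have hMx : D M a = x := congrArg Subtype.val hM
    have := congrArg (D M) h6
    rw [hD.leibniz, hMx, map_zero] at this
    refine eq_zero_of_natCast_mul k two_ne_zero ?_
    push_cast
    linear_combination this
  exact hDa (by rw [h7, map_zero])

/-- The annihilator in degree two of a class `f` killed by `L` only. -/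
theorem exists_eq_of_mul_eq_zero (hG : QuadricData G) (hD : GenericData G D L) (hf : f ∈ G 2)
    (h : L * f = 0) (hW : ∀ K ∈ G 1, K * f = 0 → ∃ c : k, K = c • L)
    (hfL : ∀ a ∈ G 1, f ≠ L * a) {y : A} (hy : y ∈ G 2) (hfy : f * y = 0) :
    ∃ b ∈ G 1, ∃ c : k, y = L * b + c • f := by
  have hfin := hG.finite
  obtain ⟨φ, hφ⟩ := exists_functional_of_finrank_le_one (G 5) hG.finrank_five
  let B : G 1 →ₗ[k] G 2 →ₗ[k] k := ((LinearMap.mul k A).compr₂ (φ ∘ₗ LinearMap.mulLeft k f)).compl₁₂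
    (G 1).subtype (G 2).subtype
  have hB : ∀ x y, B x y = φ (f * (x * y)) := fun x y => rfl
  have hmem : ∀ x ∈ G 1, ∀ y ∈ G 2, f * (x * y) ∈ G 5 := fun x hx y hy =>
    hG.mul_mem hf (hG.mul_mem hx hy)
  have hker : LinearMap.ker B ≤ Submodule.span k {⟨L, hD.mem⟩} := by
    rintro ⟨x, hx⟩ hxB
    rw [LinearMap.mem_ker] at hxB
    have hz : ∀ y ∈ G 2, f * (x * y) = 0 := fun y hy =>
      hφ _ (hmem x hx y hy) (by rw [← hB ⟨x, hx⟩ ⟨y, hy⟩, hxB]; rfl)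
    have hxf : x * f = 0 := by
      refine hG.soc (i := 3) (by omega) (hG.mul_mem hx hf) fun z hz1 => ?_
      refine hG.soc (i := 4) (by omega) (hG.mul_mem hz1 (hG.mul_mem hx hf)) fun z' hz' => ?_
      linear_combination hz (z' * z) (hG.mul_mem hz' hz1)
    obtain ⟨c, hc⟩ := hW x hx hxf
    exact Submodule.mem_span_singleton.2 ⟨c, Subtype.ext hc.symm⟩
  have hker1 : Module.finrank k (LinearMap.ker B) ≤ 1 :=
    (Submodule.finrank_mono hker).trans ((finrank_span_le_card _).trans (by simp))
  have hrk := LinearMap.finrank_range_add_finrank_ker B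
  rw [hG.finrank_one, ← finrank_range_flip] at hrk
  have hrk2 := LinearMap.finrank_range_add_finrank_ker B.flip
  have h10 := hG.finrank_two
  let ψ : G 1 × k →ₗ[k] G 2 := LinearMap.coprod
    ((LinearMap.mulLeft k L).restrict fun x hx => hG.mul_mem hD.mem hx)
    (LinearMap.toSpanSingleton k (G 2) ⟨f, hf⟩)
  have hψ : ∀ b c, ((ψ (b, c) : G 2) : A) = L * b + c • f := fun b c => rfl
  have hψinj : Function.Injective ψ := by
    rw [injective_iff_map_eq_zero]
    rintro ⟨b, c⟩ hbc
    have h0 : L * (b : A) + c • f = 0 := by rw [← hψ, hbc]; rfl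
    have hc : c = 0 := by
      by_contra hc
      refine hfL (-(c⁻¹ • (b : A))) (neg_mem ((G 1).smul_mem _ b.2)) ?_
      have h1 := congrArg (c⁻¹ • ·) h0
      simp only [smul_add, inv_smul_smul₀ hc, smul_zero] at h1
      rw [mul_neg, mul_smul_comm]
      linear_combination h1
    subst hc
    rw [zero_smul, add_zero] at h0
    exact Prod.ext (Subtype.ext (hD.eq_zero_of_mul_eq_zero hG b.2 h0)) rfl
  have hle : LinearMap.range ψ ≤ LinearMap.ker B.flip := by
    rintro _ ⟨⟨b, c⟩, rfl⟩
    rw [LinearMap.mem_ker]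
    ext x
    rw [LinearMap.flip_apply, hB, hψ]
    have : f * ((x : A) * (L * b + c • f)) = 0 := by
      rw [Algebra.smul_def]
      linear_combination (x : A) * b * h + x * algebraMap k A c * hD.mul_self_eq_zero hG hf h
    rw [this, map_zero]
    rfl
  have hψrk := LinearMap.finrank_range_of_inj hψinj
  rw [Module.finrank_prod, hG.finrank_one, Module.finrank_self] at hψrk
  have heq := Submodule.eq_of_le_of_finrank_le hle (by omega)
  have hyk : (⟨y, hy⟩ : G 2) ∈ LinearMap.ker B.flip := by
    rw [LinearMap.mem_ker]
    ext x
    rw [LinearMap.flip_apply, hB]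
    have : f * ((x : A) * y) = 0 := by linear_combination (x : A) * hfy
    rw [this, map_zero]
    rfl
  rw [← heq] at hyk
  obtain ⟨⟨b, c⟩, hbc⟩ := hyk
  exact ⟨b, b.2, c, by rw [← hψ, hbc]⟩

theorem false_of_notMem (hG : QuadricData G) (hD : GenericData G D L) (hf : f ∈ G 2)
    (h : L * f = 0) (hW : ∀ K ∈ G 1, K * f = 0 → ∃ c : k, K = c • L)
    (hfL : ∀ a ∈ G 1, f ≠ L * a) : False := by
  have hfin := hG.finite
  have hff := hD.mul_self_eq_zero hG hf h
  have hfD := hD.mul_apply_eq_zero hG hf h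
  have hMf := fun M hM => hD.mul_add_mul h (M := M) hM
  choose b hb c hbc using fun M =>
    hD.exists_eq_of_mul_eq_zero hG hf h hW hfL (hD.map_mem M hf) (hfD M)
  have hsq : ∀ M ∈ G 1, M * f + L * L * b M = 0 := by
    intro M hM
    have := hMf M hM
    rw [hbc, Algebra.smul_def] at this
    linear_combination this - algebraMap k A (c M) * h
  have hprod : ∀ M N, D M f * D N f = L * L * b M * b N := by
    intro M N
    rw [hbc M, hbc N, Algebra.smul_def, Algebra.smul_def]
    linear_combination (algebraMap k A (c N) * b M + algebraMap k A (c M) * b N) * h +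
      algebraMap k A (c M) * algebraMap k A (c N) * hff
  have hcyc : ∀ M ∈ G 1, ∀ N ∈ G 1, ∀ P ∈ G 1,
      M * (D N f * D P f) + N * (D M f * D P f) + P * (D M f * D N f) = 0 := by
    intro M hM N hN P hP
    have h1 := congrArg (D N) (hMf M hM)
    rw [map_add, hD.leibniz, hD.leibniz, hD.apply_self N hN, map_zero] at h1
    have h2 := congrArg (D N) (hfD M)
    rw [hD.leibniz, map_zero] at h2
    linear_combination D P f * h1 - D N M * hfD P - D N (D M f) * hMf P hP + P * h2
  have hbL : ∀ P ∈ G 1, f * b P = 0 := by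
    intro P hP
    refine hG.soc (i := 3) (by omega) (hG.mul_mem hf (hb P)) fun N hN => ?_
    refine hG.soc (i := 4) (by omega) (hG.mul_mem hN (hG.mul_mem hf (hb P))) fun M hM => ?_
    refine eq_zero_of_natCast_mul k three_ne_zero ?_
    have := hcyc M hM N hN P hP
    rw [hprod, hprod, hprod] at this
    push_cast
    linear_combination -this + M * b P * hsq N hN + 2 * N * b P * hsq M hM +
      P * b M * hsq N hN - N * b M * hsq P hP
  have hspan : ∀ P ∈ G 1, D P f ∈ Submodule.span k {L * L, f} := by
    intro P hP
    obtain ⟨r, hr⟩ := hW (b P) (hb P) (by rw [mul_comm, hbL P hP])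
    refine Submodule.mem_span_pair.2 ⟨r, c P, ?_⟩
    rw [hbc P, hr, mul_smul_comm]
  have h1 : Module.finrank k (Submodule.span k {L}) ≤ 1 :=
    (finrank_span_le_card _).trans (by simp)
  obtain ⟨g, hg, hgL⟩ := exists_linearIndependent_mod (G 1) (Submodule.span k {L}) (r := 3)
    (by rw [hG.finrank_one]; omega)
  have hli : LinearIndependent k (fun i => (⟨D (g i) f, hspan _ (hg i)⟩ :
      Submodule.span k {L * L, f})) := by
    rw [Fintype.linearIndependent_iff]
    intro α hα i
    have hz : D (∑ i, α i • g i) f = 0 := by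
      have := congrArg Subtype.val hα
      simp only [Submodule.coe_sum, Submodule.coe_smul, Submodule.coe_zero] at this
      rw [← derAt_apply, map_sum, ← this]
      simp only [map_smul, derAt_apply]
    have hmem : ∑ i, α i • g i ∈ G 1 := sum_mem fun i _ => (G 1).smul_mem _ (hg i)
    have h2 := hMf _ hmem
    rw [hz, mul_zero, add_zero] at h2
    obtain ⟨r, hr⟩ := hW _ hmem h2
    exact congrFun (hgL α (Submodule.mem_span_singleton.2 ⟨r, hr.symm⟩)) i
  have : FiniteDimensional k (Submodule.span k {L * L, f}) :=
    FiniteDimensional.span_of_finite k (Set.toFinite _)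
  have h3 := hli.fintype_card_le_finrank
  have h4 := finrank_span_pair_le (k := k) (L * L) f
  rw [Fintype.card_fin] at h3
  omega

end GenericData

end Derivations

section Pencil

variable {k A : Type*} [Field k] [CommRing A] [Algebra k A]

theorem mul_mem_pencilMul {V : Submodule k A} {l m x y : A} (hx : x ∈ Submodule.span k {l, m})
    (hy : y ∈ V) : x * y ∈ pencilMul V l m := by
  obtain ⟨s, t, rfl⟩ := Submodule.mem_span_pair.1 hx
  refine mem_pencilMul.2 ⟨s • y, V.smul_mem s hy, t • y, V.smul_mem t hy, ?_⟩
  rw [add_mul, smul_mul_assoc, smul_mul_assoc, mul_smul_comm, mul_smul_comm]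

theorem PencilData.mem_of_mul_mem {V : Submodule k A} {l m : A} (h : PencilData V l m)
    {v M N : A} (hv : v ∈ V) (hM : M ∈ V) (hN : N ∈ V)
    (hMN : ∀ α β : k, α • M + β • N ∈ Submodule.span k {l, m} → α = 0 ∧ β = 0)
    (hvM : v * M ∈ pencilMul V l m) (hvN : v * N ∈ pencilMul V l m) :
    v ∈ Submodule.span k {l, m} := by
  by_contra hvW
  obtain ⟨α, β, hne, hmem⟩ := h.dep v hv M hM N hN hvW hvM hvN
  have := hMN α β hmem
  tauto

theorem exists_mul_add_mul_eq_zero {u v : A} {l m : A} (h : l * u + m * v = 0)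
    (hu : u ∈ Submodule.span k {l, m}) (hv : v ∈ Submodule.span k {l, m})
    (hne : ∀ γ : k, u + γ • m = 0 → v - γ • l = 0 → False) :
    ∃ a b c : k, (a ≠ 0 ∨ b ≠ 0 ∨ c ≠ 0) ∧
      a • (l * l) + b • (l * m) + c • (m * m) = 0 := by
  obtain ⟨x, y, rfl⟩ := Submodule.mem_span_pair.1 hu
  obtain ⟨z, w, rfl⟩ := Submodule.mem_span_pair.1 hv
  refine ⟨x, y + z, w, ?_, ?_⟩
  · by_contra! hc
    obtain ⟨rfl, hyz, rfl⟩ := hc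
    obtain rfl := eq_neg_of_add_eq_zero_right hyz
    exact hne (-y) (by module) (by module)
  · rw [← h]
    simp only [Algebra.smul_def, map_add]
    ring

theorem linearIndependent_add_smul {l m : A} (h : LinearIndependent k ![l, m]) (t : k) :
    LinearIndependent k ![l, m + t • l] := by
  rw [LinearIndependent.pair_iff] at h ⊢
  intro s r hsr
  have := h (s + r * t) r (by rw [← hsr]; module)
  refine ⟨?_, this.2⟩
  simpa [this.2] using this.1

variable {G : ℕ → Submodule k A} {D : A →ₗ[k] A →+ A} {L K : A}

theorem QuadricData.exists_pair_mod (hG : QuadricData G) (W : Submodule k A)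
    [FiniteDimensional k W] (hW : Module.finrank k W ≤ 3) :
    ∃ M ∈ G 1, ∃ N ∈ G 1, ∀ α β : k, α • M + β • N ∈ W → α = 0 ∧ β = 0 := by
  have := hG.finite 1
  obtain ⟨g, hg, h⟩ := exists_linearIndependent_mod (G 1) W (r := 2)
    (by rw [hG.finrank_one]; omega)
  refine ⟨g 0, hg 0, g 1, hg 1, fun α β hαβ => ?_⟩
  have := h ![α, β] (by simpa [Fin.sum_univ_two] using hαβ)
  exact ⟨congrFun this 0, congrFun this 1⟩

namespace GenericData

theorem mul_add_mem_pencilMul (hD : GenericData G D L) {u v M : A} (hu : u ∈ G 1) (hv : v ∈ G 1)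
    (h : L * u + K * v = 0) (hM : M ∈ G 1) :
    M * u + D M K * v ∈ pencilMul (G 1) L K := by
  have := congrArg (D M) h
  rw [map_add, hD.leibniz, hD.leibniz, hD.apply_self M hM, map_zero] at this
  refine mem_pencilMul.2 ⟨-D M u, neg_mem (hD.map_mem M hu), -D M v, neg_mem (hD.map_mem M hv), ?_⟩
  linear_combination this

theorem mem_of_forall_apply_mem (hG : QuadricData G) (hD : GenericData G D L)
    (hP : PencilData (G 1) L K) {u v : A} (hu : u ∈ G 1) (hv : v ∈ G 1) (h : L * u + K * v = 0)
    (hK : ∀ M ∈ G 1, D M K * v ∈ pencilMul (G 1) L K) : u ∈ Submodule.span k {L, K} := by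
  have : FiniteDimensional k (Submodule.span k {L, K}) :=
    FiniteDimensional.span_of_finite k (Set.toFinite _)
  obtain ⟨M, hM, N, hN, hMN⟩ := hG.exists_pair_mod (Submodule.span k {L, K})
    ((finrank_span_pair_le _ _).trans (by omega))
  have key : ∀ M ∈ G 1, u * M ∈ pencilMul (G 1) L K := by
    intro M hM
    have := sub_mem (hD.mul_add_mem_pencilMul hu hv h hM) (hK M hM)
    rwa [add_sub_cancel_right, mul_comm] at this
  exact hP.mem_of_mul_mem hu hM hN hMN (key M hM) (key N hN)

variable [CharZero k]

theorem false_of_forall_apply_mem (hG : QuadricData G) (hD : GenericData G D L) (hK : K ∈ G 1)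
    (hli : LinearIndependent k ![L, K]) (hP : PencilData (G 1) L K)
    (hDK : ∀ M ∈ G 1, D M K ∈ Submodule.span k {L, K}) : False := by
  have hfin := hG.finite
  have hK0 : K ≠ 0 := hli.ne_zero 1
  obtain ⟨v, hv, hLv⟩ : ∃ v ∈ G 1, L * L + K * v = 0 := by
    have key : ∀ u ∈ G 1, ∀ v ∈ G 1, L * u + K * v = 0 → ∃ x y : k, u = x • L + y • K := by
      intro u hu v hv h
      obtain ⟨x, y, h⟩ := Submodule.mem_span_pair.1 (hD.mem_of_forall_apply_mem hG hP hu hv h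
        fun M hM => mul_mem_pencilMul (hDK M hM) hv)
      exact ⟨x, y, h.symm⟩
    have fin : ∀ v ∈ G 1, ∀ x y : k, x ≠ 0 → L * (x • L + y • K) + K * v = 0 →
        ∃ v ∈ G 1, L * L + K * v = 0 := by
      intro v hv x y hx h
      refine ⟨x⁻¹ • (v + y • L),
        (G 1).smul_mem _ (add_mem hv ((G 1).smul_mem _ hD.mem)), ?_⟩
      have hx' : algebraMap k A x⁻¹ * algebraMap k A x = 1 := by
        rw [← map_mul, inv_mul_cancel₀ hx, map_one]
      simp only [Algebra.smul_def] at h ⊢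
      linear_combination algebraMap k A x⁻¹ * h - L * L * hx'
    obtain ⟨u, hu, v, hv, u', hu', v', hv', h, h', hind⟩ := hP.exists_rel
    obtain ⟨x, y, rfl⟩ := key u hu v hv h
    obtain ⟨x', y', rfl⟩ := key u' hu' v' hv' h'
    by_cases hx : x = 0
    · by_cases hx' : x' = 0
      · subst hx hx'
        refine absurd (hG.kill_two (l := v + y • L) (m := v' + y' • L) hK
          (add_mem hv ((G 1).smul_mem _ hD.mem)) (add_mem hv' ((G 1).smul_mem _ hD.mem))
          ?_ ?_ ?_) hK0
        · simp only [Algebra.smul_def, map_zero] at h ⊢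
          linear_combination h
        · simp only [Algebra.smul_def, map_zero] at h' ⊢
          linear_combination h'
        · rw [LinearIndependent.pair_iff]
          intro s t hst
          refine hind s t (-(s * y + t * y')) (by module) ?_
          rw [← hst]
          module
      · exact fin v' hv' x' y' hx' h'
    · exact fin v hv x y hx h
  have h1 : Module.finrank k (Submodule.span k {v}) ≤ 1 :=
    (finrank_span_le_card _).trans (by simp)
  obtain ⟨g, hg, hgv⟩ := exists_linearIndependent_mod (G 1) (Submodule.span k {v}) (r := 4)
    (by rw [hG.finrank_one]; omega)
  choose p r hpr using fun i => Submodule.mem_span_pair.1 (hDK (g i) (hg i))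
  obtain ⟨α, hα, hsum, -⟩ := hP.rel_dep (fun i => (2 : k) • g i + p i • v)
    (fun i => D (g i) v + r i • v)
    (fun i => add_mem ((G 1).smul_mem _ (hg i)) ((G 1).smul_mem _ hv))
    (fun i => add_mem (hD.map_mem _ hv) ((G 1).smul_mem _ hv)) (fun i => by
      have := congrArg (D (g i)) hLv
      rw [map_add, hD.leibniz, hD.leibniz, hD.apply_self _ (hg i), ← hpr i, map_zero] at this
      simp only [Algebra.smul_def, map_ofNat] at this ⊢
      linear_combination this)
  refine hα (hgv α (Submodule.mem_span_singleton.2 ⟨-(2⁻¹ * ∑ i, α i * p i), ?_⟩))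
  have h2 : (2 : k) ≠ 0 := two_ne_zero
  have hsum' : (2 : k) • ∑ i, α i • g i + (∑ i, α i * p i) • v = 0 := by
    rw [← hsum, Finset.smul_sum, Finset.sum_smul, ← Finset.sum_add_distrib]
    refine Finset.sum_congr rfl fun i _ => ?_
    module
  rw [neg_smul, mul_smul, neg_eq_iff_add_eq_zero, ← inv_smul_smul₀ h2 (∑ i, α i • g i), ← smul_add,
    add_comm, hsum', smul_zero]

theorem false_of_quadratic_relation (hG : QuadricData G) (hD : GenericData G D L) (hK : K ∈ G 1)
    (hli : LinearIndependent k ![L, K])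
    (hP : ∀ t : k, PencilData (G 1) L (K + t • L)) {a b c : k} (hne : a ≠ 0 ∨ b ≠ 0 ∨ c ≠ 0)
    (h : a • (L * L) + b • (L * K) + c • (K * K) = 0) : False := by
  have hpair := LinearIndependent.pair_iff.1 hli
  have hP0 : PencilData (G 1) L K := by simpa using hP 0
  by_cases hc : c = 0
  · subst hc
    have h1 : a • L + b • K = 0 := by
      refine hD.eq_zero_of_mul_eq_zero hG
        (add_mem ((G 1).smul_mem _ hD.mem) ((G 1).smul_mem _ hK)) ?_
      rw [mul_add, mul_smul_comm, mul_smul_comm]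
      simpa using h
    have := hpair a b h1
    simp [this] at hne
  have hdisc : 4 * a * c - b ^ 2 = 0 := by
    by_contra hdisc
    have : FiniteDimensional k (Submodule.span k {L, K}) :=
      FiniteDimensional.span_of_finite k (Set.toFinite _)
    obtain ⟨M, hM, N, hN, hMN⟩ := hG.exists_pair_mod (Submodule.span k {L, K})
      ((finrank_span_pair_le _ _).trans (by omega))
    have hrel : ∀ M ∈ G 1, ∃ x y z : k,
        L * ((2 * a) • M + b • D M K + x • L + y • K) +
          K * (b • M + (2 * c) • D M K + z • K) = 0 := by
      intro M hM
      obtain ⟨x, hx⟩ := hD.smul M a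
      obtain ⟨y, hy⟩ := hD.smul M b
      obtain ⟨z, hz⟩ := hD.smul M c
      refine ⟨x, y, z, ?_⟩
      have := congrArg (D M) h
      rw [map_add, map_add, hx, hy, hz, hD.leibniz, hD.leibniz, hD.leibniz, hD.apply_self M hM,
        map_zero] at this
      rw [← this]
      simp only [Algebra.smul_def, map_mul, map_ofNat]
      ring
    obtain ⟨x, y, z, hxyz⟩ := hrel M hM
    obtain ⟨x', y', z', hxyz'⟩ := hrel N hN
    have hL := hD.mem
    have hsm : ∀ (t : k) {w : A}, w ∈ G 1 → t • w ∈ G 1 := fun t w hw => (G 1).smul_mem t hw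
    obtain ⟨α, hα, hs1, hs2⟩ := hP0.rel_dep
      ![K, a • L + b • K, (2 * a) • M + b • D M K + x • L + y • K,
        (2 * a) • N + b • D N K + x' • L + y' • K]
      ![-L, c • K, b • M + (2 * c) • D M K + z • K, b • N + (2 * c) • D N K + z' • K]
      (by
        intro i
        have := hD.map_mem M hK
        have := hD.map_mem N hK
        fin_cases i
        · exact hK
        · exact add_mem (hsm _ hL) (hsm _ hK)
        · exact add_mem (add_mem (add_mem (hsm _ hM) (hsm _ ‹_›)) (hsm _ hL)) (hsm _ hK)
        · exact add_mem (add_mem (add_mem (hsm _ hN) (hsm _ ‹_›)) (hsm _ hL)) (hsm _ hK))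
      (by
        intro i
        have := hD.map_mem M hK
        have := hD.map_mem N hK
        fin_cases i
        · exact neg_mem hL
        · exact hsm _ hK
        · exact add_mem (add_mem (hsm _ hM) (hsm _ ‹_›)) (hsm _ hK)
        · exact add_mem (add_mem (hsm _ hN) (hsm _ ‹_›)) (hsm _ hK))
      (by
        intro i
        fin_cases i
        · change L * K + K * (-L) = 0
          ring
        · change L * (a • L + b • K) + K * (c • K) = 0
          rw [← h]
          simp only [Algebra.smul_def]
          ring
        · exact hxyz
        · exact hxyz')
    simp only [Fin.sum_univ_four, Matrix.cons_val] at hs1 hs2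
    have hMN' := hMN (α 2 * (4 * a * c - b ^ 2)) (α 3 * (4 * a * c - b ^ 2)) (by
      refine Submodule.mem_span_pair.2
        ⟨-(2 * c * (α 1 * a + α 2 * x + α 3 * x') + b * α 0),
          -(2 * c * (α 0 + α 1 * b + α 2 * y + α 3 * y') -
            b * (α 1 * c + α 2 * z + α 3 * z')), ?_⟩
      have h3 := congrArg ((2 * c) • ·) hs1
      have h4 := congrArg (b • ·) hs2
      simp only [smul_zero] at h3 h4
      rw [← sub_eq_zero, ← neg_eq_zero, ← sub_zero (0 : A)]
      nth_rewrite 2 [← h4]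
      rw [← h3]
      module)
    have h2 : α 2 = 0 := (mul_eq_zero.1 hMN'.1).resolve_right hdisc
    have h3 : α 3 = 0 := (mul_eq_zero.1 hMN'.2).resolve_right hdisc
    rw [h2, h3] at hs2
    have h01 := hpair (-α 0) (α 1 * c) (by rw [← hs2]; module)
    have h0 : α 0 = 0 := neg_eq_zero.1 h01.1
    have h1 : α 1 = 0 := (mul_eq_zero.1 h01.2).resolve_right hc
    apply hα
    funext i
    fin_cases i
    · exact h0
    · exact h1
    · exact h2
    · exact h3
  set t : k := b / (2 * c) with ht
  have hbt : b = 2 * c * t := by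
    rw [ht]
    field_simp
  have hat : a = c * t ^ 2 := by
    apply mul_left_cancel₀ (show 4 * c ≠ 0 by simp [hc])
    rw [hbt] at hdisc
    linear_combination hdisc
  set K' := K + t • L with hK'
  have hKK : K' * K' = 0 := by
    have : c • (K' * K') = 0 := by
      rw [← h, hbt, hat, hK']
      simp only [Algebra.smul_def, map_mul, map_pow, map_ofNat]
      ring
    exact (smul_eq_zero.1 this).resolve_left hc
  have hK'mem : K' ∈ G 1 := add_mem hK ((G 1).smul_mem _ hD.mem)
  have hli' : LinearIndependent k ![L, K'] := linearIndependent_add_smul hli t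
  have hK'0 : K' ≠ 0 := hli'.ne_zero 1
  refine hD.false_of_forall_apply_mem hG hK'mem hli' (hP t) fun M hM => ?_
  have hKM : D M K' * K' = 0 := by
    have := congrArg (D M) hKK
    rw [hD.leibniz, map_zero] at this
    refine eq_zero_of_natCast_mul k two_ne_zero ?_
    push_cast
    linear_combination this
  have hdep : ¬ LinearIndependent k ![K', D M K'] := fun hind =>
    hK'0 (hG.kill_two hK'mem hK'mem (hD.map_mem M hK'mem) hKK hKM hind)
  obtain ⟨s, hs⟩ := exists_eq_smul_of_not_linearIndependent hK'0 hdep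
  exact Submodule.mem_span_pair.2 ⟨0, s, by rw [hs, zero_smul, zero_add]⟩

/-- After changing the second generator of the pencil, some relation has a coefficient in the
pencil. -/
theorem exists_relation_of_pencil [IsAlgClosed k] (hG : QuadricData G) (hD : GenericData G D L)
    (hK : K ∈ G 1) (hP : PencilData (G 1) L K) :
    ∃ t : k, ∃ u ∈ G 1, ∃ v ∈ G 1, L * u + (K + t • L) * v = 0 ∧
      (∀ γ : k, u + γ • (K + t • L) = 0 → v - γ • L = 0 → False) ∧
      (u ∈ Submodule.span k {L, K} ∨ v ∈ Submodule.span k {L, K}) := by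
  have hfin := hG.finite 1
  have hLW : L ∈ Submodule.span k {L, K} := Submodule.subset_span (by simp)
  have hKW : K ∈ Submodule.span k {L, K} := Submodule.subset_span (by simp)
  obtain ⟨M, hM, s, t, w, hw, hwW, hst, hMs, hKt⟩ : ∃ M ∈ G 1, ∃ s t : k, ∃ w ∈ G 1,
      w ∉ Submodule.span k {L, K} ∧ (s = 0 ∧ t = 1 ∨ s = 1) ∧
      M - s • w ∈ Submodule.span k {L, K} ∧ D M K - t • w ∈ Submodule.span k {L, K} := by
    by_cases hKK : D K K ∈ Submodule.span k {L, K}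
    · by_cases hLK : D L K ∈ Submodule.span k {L, K}
      · set W' : Submodule k (G 1) := (Submodule.span k {L, K}).comap (G 1).subtype with hW'
        let κ : G 1 →ₗ[k] G 1 := (derAt D K).restrict fun M _ => hD.map_mem M hK
        have hκ : W' ≤ W'.comap κ := by
          rintro ⟨x, hx⟩ hxW
          obtain ⟨s, t, hst⟩ := Submodule.mem_span_pair.1 (show x ∈ Submodule.span k {L, K} from hxW)
          change derAt D K x ∈ Submodule.span k {L, K}
          rw [← hst, map_add, map_smul, map_smul]
          exact add_mem (Submodule.smul_mem _ _ hLK) (Submodule.smul_mem _ _ hKK)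
        have : FiniteDimensional k (Submodule.span k {L, K}) :=
          FiniteDimensional.span_of_finite k (Set.toFinite _)
        obtain ⟨N, hN, N', _, hNW⟩ := hG.exists_pair_mod (Submodule.span k {L, K})
          ((finrank_span_pair_le _ _).trans (by omega))
        have hNW' : N ∉ Submodule.span k {L, K} := fun h =>
          one_ne_zero (hNW 1 0 (by simpa using h)).1
        have : Nontrivial (G 1 ⧸ W') := by
          rw [Submodule.Quotient.nontrivial_iff]
          intro htop
          exact hNW' (show (⟨N, hN⟩ : G 1) ∈ W' by rw [htop]; trivial)
        obtain ⟨t, ht⟩ := Module.End.exists_eigenvalue (W'.mapQ W' κ hκ)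
        obtain ⟨x, hx⟩ := ht.exists_hasEigenvector
        obtain ⟨⟨M, hM⟩, rfl⟩ := W'.mkQ_surjective x
        refine ⟨M, hM, 1, t, M, hM, fun h => hx.2 ((Submodule.Quotient.mk_eq_zero W').2 h),
          Or.inr rfl, by simp, ?_⟩
        have h1 := hx.apply_eq_smul
        rw [Submodule.mkQ_apply, Submodule.mapQ_apply, ← Submodule.Quotient.mk_smul,
          Submodule.Quotient.eq] at h1
        exact h1
      · exact ⟨L, hD.mem, 0, 1, D L K, hD.map_mem L hK, hLK, Or.inl ⟨rfl, rfl⟩, by simpa using hLW,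
          by simp⟩
    · exact ⟨K, hK, 0, 1, D K K, hD.map_mem K hK, hKK, Or.inl ⟨rfl, rfl⟩, by simpa using hKW,
        by simp⟩
  have hwmul : ∀ u ∈ G 1, ∀ v ∈ G 1, L * u + K * v = 0 →
      w * (s • u + t • v) ∈ pencilMul (G 1) L K := by
    intro u hu v hv h
    have h1 := sub_mem (hD.mul_add_mem_pencilMul hu hv h hM)
      (add_mem (mul_mem_pencilMul hMs hu) (mul_mem_pencilMul hKt hv))
    convert h1 using 1
    simp only [Algebra.smul_def]
    ring
  obtain ⟨u, hu, v, hv, u', hu', v', hv', h, h', hind⟩ := hP.exists_rel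
  have hsm : ∀ (t : k) {w : A}, w ∈ G 1 → t • w ∈ G 1 := fun t w hw => (G 1).smul_mem t hw
  obtain ⟨α, β, hne, hmem⟩ := hP.dep w hw _ (add_mem (hsm s hu) (hsm t hv)) _
    (add_mem (hsm s hu') (hsm t hv')) hwW (hwmul u hu v hv h) (hwmul u' hu' v' hv' h')
  have hU : α • u + β • u' ∈ G 1 := add_mem (hsm _ hu) (hsm _ hu')
  have hV : α • v + β • v' ∈ G 1 := add_mem (hsm _ hv) (hsm _ hv')
  have hUV : L * (α • u + β • u') + K * (α • v + β • v') = 0 := by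
    simp only [Algebra.smul_def]
    linear_combination algebraMap k A α * h + algebraMap k A β * h'
  have hnt : ∀ γ : k, α • u + β • u' + γ • K = 0 → α • v + β • v' - γ • L = 0 → False := by
    intro γ h1 h2
    have := hind α β γ h1 h2
    tauto
  rcases hst with ⟨rfl, rfl⟩ | rfl
  · refine ⟨0, _, hU, _, hV, by simpa using hUV, by simpa using hnt, Or.inr ?_⟩
    simpa using hmem
  · refine ⟨-t, α • u + β • u' + t • (α • v + β • v'), add_mem hU (hsm _ hV), _, hV, ?_, ?_,
      Or.inl ?_⟩
    · rw [← hUV, neg_smul]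
      simp only [Algebra.smul_def]
      ring
    · intro γ h1 h2
      refine hnt γ ?_ h2
      rw [sub_eq_zero] at h2
      rw [← h1, h2]
      module
    · convert hmem using 1
      module

theorem false_of_relation (hG : QuadricData G) (hD : GenericData G D L)
    (hK : K ∈ G 1) (hli : LinearIndependent k ![L, K])
    (hP : ∀ t : k, PencilData (G 1) L (K + t • L)) {u v : A} (hu : u ∈ G 1) (hv : v ∈ G 1)
    (h : L * u + K * v = 0) (hne : ∀ γ : k, u + γ • K = 0 → v - γ • L = 0 → False)
    (hmem : u ∈ Submodule.span k {L, K} ∨ v ∈ Submodule.span k {L, K}) : False := by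
  have hP0 : PencilData (G 1) L K := by simpa using hP 0
  have hsm : ∀ (t : k) {w : A}, w ∈ G 1 → t • w ∈ G 1 := fun t w hw => (G 1).smul_mem t hw
  have hquad : ∀ {u v : A}, L * u + K * v = 0 → (∀ γ : k, u + γ • K = 0 → v - γ • L = 0 → False) →
      u ∈ Submodule.span k {L, K} → v ∈ Submodule.span k {L, K} → False := by
    intro u v h hne hu hv
    obtain ⟨a, b, c, habc, hrel⟩ := exists_mul_add_mul_eq_zero h hu hv hne
    exact hD.false_of_quadratic_relation hG hK hli hP habc hrel
  by_cases hvW : v ∈ Submodule.span k {L, K}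
  · refine hquad h hne (hD.mem_of_forall_apply_mem hG hP0 hu hv h fun M hM => ?_) hvW
    rw [mul_comm]
    exact mul_mem_pencilMul hvW (hD.map_mem M hK)
  have huW := hmem.resolve_right hvW
  have hDv : ∀ {u v : A}, u ∈ G 1 → v ∈ G 1 → L * u + K * v = 0 → u ∈ Submodule.span k {L, K} →
      ∀ M ∈ G 1, D M K * v ∈ pencilMul (G 1) L K := by
    intro u v hu hv h huW M hM
    have h1 := sub_mem (hD.mul_add_mem_pencilMul hu hv h hM) (mul_mem_pencilMul huW hM)
    rwa [mul_comm u M, add_sub_cancel_left] at h1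
  by_cases hZ : ∀ M ∈ G 1, D M K ∈ Submodule.span k {L, K}
  · exact hD.false_of_forall_apply_mem hG hK hli hP0 hZ
  push Not at hZ
  obtain ⟨M, hM, hMW⟩ := hZ
  have hrank : ∀ N ∈ G 1, ∃ c : k, D (N - c • M) K ∈ Submodule.span k {L, K} := by
    intro N hN
    obtain ⟨α, β, hαβ, h1⟩ := hP0.dep v hv _ (hD.map_mem M hK) _ (hD.map_mem N hK) hvW
      (by rw [mul_comm]; exact hDv hu hv h huW M hM) (by rw [mul_comm]; exact hDv hu hv h huW N hN)
    have hβ : β ≠ 0 := by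
      rintro rfl
      rw [zero_smul, add_zero] at h1
      have hα : α ≠ 0 := by simpa using hαβ
      exact hMW ((Submodule.smul_mem_iff _ hα).1 h1)
    refine ⟨-(β⁻¹ * α), ?_⟩
    rw [← Submodule.smul_mem_iff _ hβ, ← derAt_apply, ← map_smul]
    convert h1 using 1
    rw [← derAt_apply, ← derAt_apply, ← map_smul, ← map_smul, ← map_add]
    congr 1
    rw [neg_smul, sub_neg_eq_add, smul_add, mul_smul, smul_inv_smul₀ hβ, add_comm]
  have : FiniteDimensional k (Submodule.span k {L, K}) :=
    FiniteDimensional.span_of_finite k (Set.toFinite _)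
  have hfr : Module.finrank k (Submodule.span k {M}) ≤ 1 :=
    (finrank_span_le_card _).trans (by simp)
  have hfr2 := Submodule.finrank_add_le_finrank_add_finrank (Submodule.span k {L, K})
    (Submodule.span k {M})
  have hfr3 := finrank_span_pair_le (k := k) L K
  obtain ⟨N, hN, N', hN', hNN⟩ := hG.exists_pair_mod
    (Submodule.span k {L, K} ⊔ Submodule.span k {M}) (by omega)
  obtain ⟨c, hc⟩ := hrank N hN
  obtain ⟨c', hc'⟩ := hrank N' hN'
  have hall : ∀ {u v : A}, u ∈ G 1 → v ∈ G 1 → L * u + K * v = 0 →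
      u ∈ Submodule.span k {L, K} := by
    intro u v hu hv h
    have key : ∀ P ∈ G 1, D P K ∈ Submodule.span k {L, K} → u * P ∈ pencilMul (G 1) L K := by
      intro P hP hPK
      have h1 := sub_mem (hD.mul_add_mem_pencilMul hu hv h hP) (mul_mem_pencilMul hPK hv)
      rwa [add_sub_cancel_right, mul_comm] at h1
    have hm := sub_mem hN (hsm c hM)
    have hm' := sub_mem hN' (hsm c' hM)
    refine hP0.mem_of_mul_mem hu hm hm' (fun α β hαβ => hNN α β ?_) (key _ hm hc) (key _ hm' hc')
    refine Submodule.mem_sup.2 ⟨_, hαβ, (α * c + β * c') • M,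
      Submodule.smul_mem _ _ (Submodule.mem_span_singleton_self M), ?_⟩
    module
  obtain ⟨u, hu, v, hv, u', hu', v', hv', h, h', hind⟩ := hP0.exists_rel
  obtain ⟨α, β, hαβ, h1⟩ := hP0.dep _ (hD.map_mem M hK) v hv v' hv' hMW
    (hDv hu hv h (hall hu hv h) M hM) (hDv hu' hv' h' (hall hu' hv' h') M hM)
  refine hquad (u := α • u + β • u') (v := α • v + β • v') ?_ ?_ ?_ h1
  · simp only [Algebra.smul_def]
    linear_combination algebraMap k A α * h + algebraMap k A β * h'
  · intro γ h2 h3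
    have := hind α β γ h2 h3
    tauto
  · exact add_mem (Submodule.smul_mem _ _ (hall hu hv h)) (Submodule.smul_mem _ _ (hall hu' hv' h'))

theorem false_of_pencil [IsAlgClosed k] (hG : QuadricData G) (hD : GenericData G D L)
    (hK : K ∈ G 1) (hli : LinearIndependent k ![L, K])
    (hP : ∀ t : k, PencilData (G 1) L (K + t • L)) : False := by
  obtain ⟨t, u, hu, v, hv, h, hne, hmem⟩ :=
    hD.exists_relation_of_pencil hG hK (by simpa using hP 0)
  have hspan : Submodule.span k {L, K} ≤ Submodule.span k {L, K + t • L} := by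
    intro x hx
    obtain ⟨r, s, rfl⟩ := Submodule.mem_span_pair.1 hx
    exact Submodule.mem_span_pair.2 ⟨r - s * t, s, by module⟩
  refine hD.false_of_relation hG (add_mem hK ((G 1).smul_mem t hD.mem))
    (linearIndependent_add_smul hli t) (fun s => ?_) hu hv h hne
    (hmem.imp (fun h => hspan h) (fun h => hspan h))
  rw [add_assoc, ← add_smul]
  exact hP _

/-- Multiplication by the generic linear form is injective in degree two. -/
theorem eq_zero_of_mul_eq_zero_two [IsAlgClosed k] {f : A} (hG : QuadricData G)
    (hD : GenericData G D L) (hf : f ∈ G 2) (h : L * f = 0) : f = 0 := by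
  by_contra hf0
  have hL := hD.ne_zero hG
  by_cases hW : ∀ K ∈ G 1, K * f = 0 → ∃ c : k, K = c • L
  · by_cases hfL : ∀ a ∈ G 1, f ≠ L * a
    · exact hD.false_of_notMem hG hf h hW hfL
    push Not at hfL
    obtain ⟨a, ha, rfl⟩ := hfL
    by_cases hDa : D L a = 0
    · obtain ⟨c, d, hd, hcd⟩ := hD.exists_smul
      have ha0 : a ≠ 0 := fun h => hf0 (by rw [h, mul_zero])
      have hDca : D L (c • a) = d • a := by rw [hcd, hDa, smul_zero, add_zero]
      have hc : c ≠ 0 := by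
        rintro rfl
        rw [zero_smul, map_zero] at hDca
        exact (smul_ne_zero hd ha0) hDca.symm
      refine hD.false_of_sq_mul hG ((G 1).smul_mem c ha) ?_ (fun K hK hKa => hW K hK ?_) ?_
      · rw [mul_smul_comm, mul_smul_comm, h, smul_zero]
      · rw [mul_smul_comm, mul_smul_comm] at hKa
        exact (smul_eq_zero.1 hKa).resolve_left hc
      · rw [hDca]
        exact smul_ne_zero hd ha0
    · exact hD.false_of_sq_mul hG ha h hW hDa
  · push Not at hW
    obtain ⟨K, hK, hKf, hKL⟩ := hW
    have hli : LinearIndependent k ![L, K] :=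
      (LinearIndependent.pair_iff' hL).2 fun c hc => hKL c hc.symm
    refine hD.false_of_pencil hG hK hli fun t => hG.pencil hf hf0 hD.mem
      (add_mem hK ((G 1).smul_mem t hD.mem)) h ?_ (linearIndependent_add_smul hli t)
    rw [add_mul, hKf, smul_mul_assoc, h, smul_zero, add_zero]

end GenericData

end Pencil

section Derivations

theorem exists_derivation_extension (R S T : Type*) [CommRing R] [CommRing S] [CommRing T]
    [Algebra R S] [Algebra R T] [Algebra S T] [IsScalarTower R S T] [Algebra.FormallyEtale S T]
    (d : Derivation R S T) :
    ∃ d' : Derivation R T T, ∀ x : S, d' (algebraMap S T x) = d x := by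
  have hb := KaehlerDifferential.isBaseChange_of_formallyEtale R S T
  refine ⟨(hb.lift d.liftKaehlerDifferential).compDer (KaehlerDifferential.D R T), fun x => ?_⟩
  have := hb.lift_eq d.liftKaehlerDifferential (KaehlerDifferential.D R S x)
  rwa [KaehlerDifferential.map_D, Derivation.liftKaehlerDifferential_comp_D] at this

/-- An algebraically closed field containing generic coordinates, with derivations dual to them. -/
theorem exists_generic_field (k : Type) [Field k] [CharZero k] (n : ℕ) :
    ∃ (K : Type) (_ : Field K) (_ : Algebra k K) (t : Fin n → K)
      (d : Fin n → Derivation k K K), IsAlgClosed K ∧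
      AlgebraicIndependent k t ∧ ∀ i j, d i (t j) = (Pi.single i 1 : Fin n → K) j := by
  let P := MvPolynomial (Fin n) k
  let F := FractionRing P
  let K := AlgebraicClosure F
  have : Algebra.FormallyEtale F K := Algebra.FormallyEtale.of_isSeparable F K
  have : Algebra.FormallyEtale P K := Algebra.FormallyEtale.comp P F K
  have hinj : Function.Injective (algebraMap P K) := by
    rw [IsScalarTower.algebraMap_eq P F K]
    exact (algebraMap F K).injective.comp (IsFractionRing.injective P F)
  choose d hd using fun i : Fin n => exists_derivation_extension k P K
    (mkDerivation k (Pi.single i 1 : Fin n → K))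
  refine ⟨K, inferInstance, inferInstance, fun i => algebraMap P K (X i), d, inferInstance, ?_, ?_⟩
  · have : aeval (fun i => algebraMap P K (X i)) = IsScalarTower.toAlgHom k P K := by
      ext i
      rw [aeval_X]
      rfl
    rw [AlgebraicIndependent, this]
    exact hinj
  · intro i j
    rw [hd, mkDerivation_X]

end Derivations

section MapCoeff

variable {σ k K : Type*} [Field k] [Field K] [Algebra k K]

/-- Apply a derivation of the coefficient field to every coefficient of a polynomial. -/
def mapCoeff (d : Derivation k K K) (p : MvPolynomial σ K) : MvPolynomial σ K :=
  ∑ m ∈ p.support, monomial m (d (coeff m p))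

theorem coeff_mapCoeff (d : Derivation k K K) (p : MvPolynomial σ K) (m : σ →₀ ℕ) :
    coeff m (mapCoeff d p) = d (coeff m p) := by
  classical
  rw [mapCoeff, coeff_sum]
  simp only [coeff_monomial, Finset.sum_ite_eq', mem_support_iff]
  split_ifs with h
  · rfl
  · rw [not_not] at h
    rw [h, map_zero]

theorem mapCoeff_add (d : Derivation k K K) (p r : MvPolynomial σ K) :
    mapCoeff d (p + r) = mapCoeff d p + mapCoeff d r := by
  ext m
  simp only [coeff_mapCoeff, coeff_add, map_add]

theorem mapCoeff_mul (d : Derivation k K K) (p r : MvPolynomial σ K) :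
    mapCoeff d (p * r) = p * mapCoeff d r + r * mapCoeff d p := by
  classical
  rw [mul_comm r]
  ext m
  simp only [coeff_mapCoeff, coeff_add, coeff_mul, map_sum, Derivation.leibniz, smul_eq_mul,
    ← Finset.sum_add_distrib]
  exact Finset.sum_congr rfl fun x _ => by ring

theorem mapCoeff_C (d : Derivation k K K) (c : K) :
    mapCoeff d (C c : MvPolynomial σ K) = C (d c) := by
  classical
  ext m
  rw [coeff_mapCoeff, coeff_C, coeff_C]
  split_ifs
  · rfl
  · exact map_zero d

theorem mapCoeff_map (d : Derivation k K K) (p : MvPolynomial σ k) :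
    mapCoeff d (map (algebraMap k K) p) = 0 := by
  ext m
  rw [coeff_mapCoeff, coeff_map, Derivation.map_algebraMap, coeff_zero]

theorem mapCoeff_isHomogeneous (d : Derivation k K K) {p : MvPolynomial σ K} {e : ℕ}
    (hp : p.IsHomogeneous e) : (mapCoeff d p).IsHomogeneous e := by
  intro m hm
  refine hp fun h => hm ?_
  rw [coeff_mapCoeff, h, map_zero]

theorem mapCoeff_mem (d : Derivation k K K) {ι : Type*} {q : ι → MvPolynomial σ k}
    {p : MvPolynomial σ K}
    (hp : p ∈ Ideal.span (Set.range fun i => map (algebraMap k K) (q i))) :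
    mapCoeff d p ∈ Ideal.span (Set.range fun i => map (algebraMap k K) (q i)) := by
  induction hp using Submodule.span_induction with
  | mem x hx =>
    obtain ⟨i, rfl⟩ := hx
    simp only [mapCoeff_map, Submodule.zero_mem]
  | zero =>
    rw [show (0 : MvPolynomial σ K) = map (algebraMap k K) 0 by simp, mapCoeff_map]
    exact zero_mem _
  | add x y _ _ hx hy => rw [mapCoeff_add]; exact add_mem hx hy
  | smul c x hmem hx =>
    rw [smul_eq_mul, mapCoeff_mul]
    exact add_mem (Ideal.mul_mem_left _ _ hx) (Ideal.mul_mem_right _ _ hmem)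

/-- The coefficientwise action of a derivation on the quotient by an ideal defined over the field
of constants. -/
def quotientMapCoeff {ι : Type*} (q : ι → MvPolynomial σ k) (d : Derivation k K K) :
    (MvPolynomial σ K ⧸ Ideal.span (Set.range fun i => map (algebraMap k K) (q i))) →+
      MvPolynomial σ K ⧸ Ideal.span (Set.range fun i => map (algebraMap k K) (q i)) :=
  QuotientAddGroup.map _ _ (AddMonoidHom.mk' (mapCoeff d) (mapCoeff_add d))
    fun _ hp => mapCoeff_mem d hp

theorem quotientMapCoeff_mk {ι : Type*} (q : ι → MvPolynomial σ k) (d : Derivation k K K)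
    (p : MvPolynomial σ K) :
    quotientMapCoeff q d (Ideal.Quotient.mk _ p) = Ideal.Quotient.mk _ (mapCoeff d p) :=
  rfl

theorem quotientMapCoeff_mul {ι : Type*} (q : ι → MvPolynomial σ k) (d : Derivation k K K)
    (a b : MvPolynomial σ K ⧸ Ideal.span (Set.range fun i => map (algebraMap k K) (q i))) :
    quotientMapCoeff q d (a * b) = a * quotientMapCoeff q d b + b * quotientMapCoeff q d a := by
  obtain ⟨p, rfl⟩ := Ideal.Quotient.mk_surjective a
  obtain ⟨r, rfl⟩ := Ideal.Quotient.mk_surjective b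
  rw [← map_mul, quotientMapCoeff_mk, mapCoeff_mul, map_add, map_mul, map_mul]
  rfl

theorem quotientMapCoeff_smul {ι : Type*} (q : ι → MvPolynomial σ k) (d : Derivation k K K) (c : K)
    (a : MvPolynomial σ K ⧸ Ideal.span (Set.range fun i => map (algebraMap k K) (q i))) :
    quotientMapCoeff q d (c • a) = d c • a + c • quotientMapCoeff q d a := by
  have h : ∀ (r : K) (b : MvPolynomial σ K ⧸
      Ideal.span (Set.range fun i => map (algebraMap k K) (q i))),
      r • b = Ideal.Quotient.mk _ (C r) * b := fun r b => Algebra.smul_def r b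
  rw [h, h, h, quotientMapCoeff_mul, quotientMapCoeff_mk, mapCoeff_C, add_comm, mul_comm a]

theorem quotientMapCoeff_linClass {n : ℕ} {ι : Type*} (q : ι → MvPolynomial (Fin n) k)
    (d : Derivation k K K) (c : Fin n → K) :
    quotientMapCoeff q d (linClass _ c) = linClass _ fun i => d (c i) := by
  change Ideal.Quotient.mk _ (mapCoeff d (lin c)) = Ideal.Quotient.mk _ (lin _)
  congr 1
  let F : MvPolynomial (Fin n) K →+ MvPolynomial (Fin n) K :=
    AddMonoidHom.mk' (mapCoeff d) (mapCoeff_add d)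
  change F (lin c) = _
  rw [lin, map_sum, lin]
  refine Finset.sum_congr rfl fun i _ => ?_
  change mapCoeff d _ = _
  have hX : (X i : MvPolynomial (Fin n) K) = map (algebraMap k K) (X i) := by simp
  rw [mapCoeff_mul, mapCoeff_C, hX, mapCoeff_map, mul_zero, zero_add, mul_comm]

end MapCoeff

section Generic

variable {k K : Type*} [Field k] [Field K] [Algebra k K]
  {q : Fin 5 → MvPolynomial (Fin 5) k}

theorem eq_zero_of_forall_eval_map [IsAlgClosed k]
    (h0 : ∀ p : Fin 5 → k, (∀ i, eval p (q i) = 0) → p = 0)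
    (p : Fin 5 → K) (hp : ∀ i, eval p (map (algebraMap k K) (q i)) = 0) : p = 0 := by
  obtain ⟨N, hN⟩ := exists_forall_isHomogeneous_mem h0
  funext j
  have hmem := hN N le_rfl (X j ^ N) (by simpa using (isHomogeneous_X k j).pow N)
  have hle : Ideal.span (Set.range q) ≤ RingHom.ker (eval₂Hom (algebraMap k K) p) := by
    rw [Ideal.span_le]
    rintro _ ⟨i, rfl⟩
    have := hp i
    rwa [eval_map] at this
  have := hle hmem
  rw [RingHom.mem_ker, map_pow, eval₂Hom_X'] at this
  exact eq_zero_of_pow_eq_zero this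

theorem genericData (hq : ∀ i, (q i).IsHomogeneous 2) {t : Fin 5 → K}
    (ht : AlgebraicIndependent k t) {d : Fin 5 → Derivation k K K}
    (hd : ∀ i j, d i (t j) = (Pi.single i 1 : Fin 5 → K) j) :
    ∃ D : (MvPolynomial (Fin 5) K ⧸ Ideal.span (Set.range fun i => map (algebraMap k K) (q i)))
        →ₗ[K] (MvPolynomial (Fin 5) K ⧸
          Ideal.span (Set.range fun i => map (algebraMap k K) (q i))) →+
        (MvPolynomial (Fin 5) K ⧸ Ideal.span (Set.range fun i => map (algebraMap k K) (q i))),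
      GenericData (piece (Ideal.span (Set.range fun i => map (algebraMap k K) (q i)))) D
        (linClass _ t) := by
  obtain ⟨g, hg⟩ := LinearMap.exists_leftInverse_of_injective _ (LinearMap.ker_eq_bot.2
    (injective_linClass fun i => (hq i).map (algebraMap k K)))
  have hg' : ∀ c, g (linClass _ c) = c := fun c => LinearMap.congr_fun hg c
  let D := ∑ i, (LinearMap.toSpanSingleton K _ (quotientMapCoeff q (d i))) ∘ₗ
    LinearMap.proj i ∘ₗ g
  have hD : ∀ M a, D M a = ∑ i, g M i • quotientMapCoeff q (d i) a := by
    intro M a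
    simp [D, LinearMap.sum_apply]
  have hsmul : ∀ M (c : K) a, D M (c • a) = (∑ i, g M i * d i c) • a + c • D M a := by
    intro M c a
    simp only [hD, quotientMapCoeff_smul, smul_add, Finset.sum_add_distrib, Finset.sum_smul,
      Finset.smul_sum, mul_smul]
    congr 1
    exact Finset.sum_congr rfl fun i _ => smul_comm _ _ _
  refine ⟨D, ?_, ?_, ?_, ?_, fun M c => ⟨_, hsmul M c⟩, ?_⟩
  · exact mem_piece_one.2 ⟨t, rfl⟩
  · intro M a b
    simp only [hD, quotientMapCoeff_mul, smul_add, Finset.sum_add_distrib, Finset.mul_sum,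
      mul_smul_comm]
  · intro M i a ha
    rw [hD]
    refine sum_mem fun j _ => Submodule.smul_mem _ _ ?_
    obtain ⟨p, hp, rfl⟩ := mem_piece.1 ha
    exact mem_piece.2 ⟨_, mapCoeff_isHomogeneous (d j) hp, rfl⟩
  · intro M hM
    obtain ⟨c, rfl⟩ := mem_piece_one.1 hM
    rw [hD, hg']
    simp only [quotientMapCoeff_linClass, hd]
    rw [← Finset.sum_congr rfl fun i _ => map_smul (linClass _) (c i) _, ← map_sum]
    congr 1
    ext j
    simp [Finset.sum_apply, Pi.single_apply]
  · refine ⟨t 0, _, ?_, hsmul _ _⟩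
    simp only [hg', hd]
    rw [Finset.sum_eq_single 0 (fun i _ hi => by simp [hi.symm]) (by simp)]
    simpa using ht.ne_zero 0

variable [IsAlgClosed k] [IsAlgClosed K] [CharZero K]

theorem generic_eq_zero_of_mul_eq_zero (hq : ∀ i, (q i).IsHomogeneous 2)
    (h0 : ∀ p : Fin 5 → k, (∀ i, eval p (q i) = 0) → p = 0) {t : Fin 5 → K}
    (ht : AlgebraicIndependent k t) {d : Fin 5 → Derivation k K K}
    (hd : ∀ i j, d i (t j) = (Pi.single i 1 : Fin 5 → K) j)
    {v : MvPolynomial (Fin 5) K ⧸ Ideal.span (Set.range fun i => map (algebraMap k K) (q i))}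
    (hv : v ∈ piece _ 2) (h : linClass _ t * v = 0) : v = 0 := by
  obtain ⟨D, hD⟩ := genericData hq ht hd
  exact hD.eq_zero_of_mul_eq_zero_two
    (quadricData (fun i => (hq i).map (algebraMap k K)) (eq_zero_of_forall_eval_map h0)) hv h

end Generic

section Duality

variable {k A : Type*} [Field k] [CommRing A] [Algebra k A] {G : ℕ → Submodule k A}

theorem QuadricData.eq_zero_of_forall_mul_eq_zero (hG : QuadricData G) {i j : ℕ}
    (hij : i + (j + 1) = 5) {a : A} (ha : a ∈ G i) (h : ∀ b ∈ G (j + 1), b * a = 0) : a = 0 := by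
  induction j generalizing i a with
  | zero => exact hG.soc (by omega) ha h
  | succ j ih =>
    refine hG.soc (by omega) ha fun x hx => ih (i := 1 + i) (by omega) (hG.mul_mem hx ha) ?_
    intro b hb
    rw [← mul_assoc]
    exact h _ (hG.mul_mem hb hx)

theorem QuadricData.finrank_le (hG : QuadricData G) {i j : ℕ} (hij : i + (j + 1) = 5) :
    Module.finrank k (G i) ≤ Module.finrank k (G (j + 1)) := by
  have := hG.finite i
  have := hG.finite (j + 1)
  have := hG.finite 5
  obtain ⟨φ, hφ⟩ := exists_functional_of_finrank_le_one (G 5) hG.finrank_five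
  let F : G i →ₗ[k] Module.Dual k (G (j + 1)) :=
    ((LinearMap.mul k A).compr₂ φ).compl₁₂ (G i).subtype (G (j + 1)).subtype
  have hF : ∀ a b, F a b = φ (a * b) := fun a b => rfl
  have hinj : Function.Injective F := by
    rw [injective_iff_map_eq_zero]
    intro a ha
    refine Subtype.ext (hG.eq_zero_of_forall_mul_eq_zero hij a.2 fun b hb => ?_)
    refine hφ _ ?_ ?_
    · have := hG.mul_mem hb a.2
      rwa [add_comm, hij] at this
    · rw [mul_comm]
      exact LinearMap.congr_fun ha ⟨b, hb⟩
  rw [← Subspace.dual_finrank_eq (K := k) (V := G (j + 1))]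
  exact LinearMap.finrank_le_finrank_of_injective hinj

theorem QuadricData.finrank_two_eq_three (hG : QuadricData G) :
    Module.finrank k (G 2) = Module.finrank k (G 3) :=
  le_antisymm (hG.finrank_le (i := 2) (j := 2) rfl) (hG.finrank_le (i := 3) (j := 1) rfl)

theorem QuadricData.eq_zero_of_mul_eq_zero_of_succ (hG : QuadricData G) {L : A} {i : ℕ}
    (hi : i ≠ 5) (h : ∀ v ∈ G (i + 1), L * v = 0 → v = 0) {v : A} (hv : v ∈ G i)
    (hLv : L * v = 0) : v = 0 := by
  refine hG.soc hi hv fun x hx => h _ ?_ ?_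
  · have := hG.mul_mem hx hv
    rwa [add_comm] at this
  · rw [mul_left_comm, hLv, mul_zero]

theorem exists_mul_eq_of_injective_of_finrank_eq {V W : Submodule k A} [FiniteDimensional k V]
    [FiniteDimensional k W] (h : Module.finrank k V = Module.finrank k W) {L : A}
    (hL : ∀ v ∈ V, L * v ∈ W) (hinj : ∀ v ∈ V, L * v = 0 → v = 0) :
    ∀ w ∈ W, ∃ v ∈ V, L * v = w := by
  let F : V →ₗ[k] W := (LinearMap.mulLeft k L).restrict hL
  have hF : Function.Injective F := by
    rw [injective_iff_map_eq_zero]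
    intro v hv
    exact Subtype.ext (hinj v v.2 (congrArg Subtype.val hv))
  intro w hw
  obtain ⟨v, hv⟩ := (LinearMap.injective_iff_surjective_of_finrank_eq_finrank h).1 hF ⟨w, hw⟩
  exact ⟨v, v.2, congrArg Subtype.val hv⟩

end Duality

section Pieces

variable {k : Type*} [Field k] {n : ℕ} {I : Ideal (MvPolynomial (Fin n) k)}

theorem exists_mul_eq_succ {L : MvPolynomial (Fin n) k ⧸ I} {i : ℕ}
    (h : ∀ w ∈ piece I (i + 1), ∃ v ∈ piece I i, L * v = w) :
    ∀ w ∈ piece I (i + 2), ∃ v ∈ piece I (i + 1), L * v = w := by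
  intro w hw
  obtain ⟨p, hp, rfl⟩ := mem_piece.1 hw
  rw [← mem_homogeneousSubmodule, ← homogeneousSubmodule_one_pow, pow_succ,
    homogeneousSubmodule_one_pow] at hp
  clear hw
  induction hp using Submodule.mul_induction_on' with
  | mem_mul_mem m hm l hl =>
    obtain ⟨v, hv, hLv⟩ := h _ (mem_piece.2 ⟨m, hm, rfl⟩)
    obtain ⟨r, hr, rfl⟩ := mem_piece.1 hv
    refine ⟨_, mem_piece.2 ⟨r * l, hr.mul hl, rfl⟩, ?_⟩
    rw [map_mul, map_mul, ← mul_assoc, hLv]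
  | add x _ y _ hx hy =>
    obtain ⟨v, hv, hLv⟩ := hx
    obtain ⟨v', hv', hLv'⟩ := hy
    exact ⟨v + v', add_mem hv hv', by rw [mul_add, hLv, hLv', map_add]⟩

theorem linClass_eq_sum [DecidableEq (Fin n)] (c : Fin n → k) :
    linClass I c = ∑ i, c i • linClass I (Pi.single i 1) := by
  rw [← Finset.sum_congr rfl fun i _ => map_smul (linClass I) (c i) _, ← map_sum]
  congr 1
  ext j
  simp [Finset.sum_apply, Pi.single_apply]

end Pieces

section BaseChange

variable {σ ι k : Type*} (K : Type*) [Field k] [Field K] [Algebra k K]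
  (q : ι → MvPolynomial σ k)

/-- Extension of scalars on the quotient of a polynomial ring. -/
def extendScalars : (MvPolynomial σ k ⧸ Ideal.span (Set.range q)) →+*
    MvPolynomial σ K ⧸ Ideal.span (Set.range fun i => map (algebraMap k K) (q i)) :=
  Ideal.quotientMap _ (map (algebraMap k K)) <| by
    rw [Ideal.span_le]
    rintro _ ⟨i, rfl⟩
    exact Ideal.subset_span ⟨i, rfl⟩

theorem extendScalars_mk (p : MvPolynomial σ k) :
    extendScalars K q (Ideal.Quotient.mk _ p) = Ideal.Quotient.mk _ (map (algebraMap k K) p) :=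
  rfl

theorem extendScalars_smul (c : k) (a : MvPolynomial σ k ⧸ Ideal.span (Set.range q)) :
    extendScalars K q (c • a) = algebraMap k K c • extendScalars K q a := by
  obtain ⟨p, rfl⟩ := Ideal.Quotient.mk_surjective a
  have h : c • Ideal.Quotient.mk (Ideal.span (Set.range q)) p = Ideal.Quotient.mk _ (c • p) := rfl
  rw [h, extendScalars_mk, extendScalars_mk, smul_eq_C_mul, map_mul, map_C, ← smul_eq_C_mul]
  rfl

theorem exists_extended_functional [Finite ι]
    (l : (MvPolynomial σ k ⧸ Ideal.span (Set.range q)) →ₗ[k] k) :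
    ∃ Λ : MvPolynomial σ K →ₗ[K] K,
      (∀ p ∈ Ideal.span (Set.range fun i => map (algebraMap k K) (q i)), Λ p = 0) ∧
      ∀ p, Λ (map (algebraMap k K) p) = algebraMap k K (l (Ideal.Quotient.mk _ p)) := by
  have := Fintype.ofFinite ι
  let l' : MvPolynomial σ k →ₗ[k] k := l ∘ₗ (Ideal.Quotient.mkₐ k _).toLinearMap
  let Λ : MvPolynomial σ K →ₗ[K] K :=
    (basisMonomials σ K).constr K fun m => algebraMap k K (l' (monomial m 1))
  have hΛm : ∀ m, Λ (monomial m 1) = algebraMap k K (l' (monomial m 1)) := by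
    intro m
    have := (basisMonomials σ K).constr_basis K (fun m => algebraMap k K (l' (monomial m 1))) m
    rwa [coe_basisMonomials] at this
  have hΛ : ∀ p, Λ (map (algebraMap k K) p) = algebraMap k K (l' p) := by
    intro p
    induction p using MvPolynomial.induction_on' with
    | monomial m c =>
      have h : monomial m c = c • monomial m (1 : k) := by
        rw [smul_monomial, smul_eq_mul, mul_one]
      have h' : monomial m (algebraMap k K c) = algebraMap k K c • monomial m (1 : K) := by
        rw [smul_monomial, smul_eq_mul, mul_one]
      rw [map_monomial, h', map_smul, hΛm, h, map_smul, smul_eq_mul, smul_eq_mul, map_mul]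
    | add p r hp hr => rw [map_add, map_add, hp, hr, map_add, map_add]
  refine ⟨Λ, fun p hp => ?_, hΛ⟩
  obtain ⟨r, rfl⟩ := Ideal.mem_span_range_iff_exists_fun.1 hp
  rw [map_sum]
  refine Finset.sum_eq_zero fun i _ => ?_
  have hzero : Λ ∘ₗ LinearMap.mulRight K (map (algebraMap k K) (q i)) = 0 := by
    refine (basisMonomials σ K).ext fun m => ?_
    rw [coe_basisMonomials, LinearMap.comp_apply, LinearMap.mulRight_apply, LinearMap.zero_apply]
    change Λ (monomial m (1 : K) * _) = 0
    rw [show monomial m (1 : K) = map (algebraMap k K) (monomial m 1) by simp, ← map_mul, hΛ]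
    have : l' (monomial m 1 * q i) = 0 := by
      have h : Ideal.Quotient.mk (Ideal.span (Set.range q)) (monomial m 1 * q i) = 0 :=
        Ideal.Quotient.eq_zero_iff_mem.2 (Ideal.mul_mem_left _ _ (Ideal.subset_span ⟨i, rfl⟩))
      change l (Ideal.Quotient.mk _ _) = 0
      rw [h, map_zero]
    rw [this, map_zero]
  exact LinearMap.congr_fun hzero (r i)

theorem linearIndependent_extendScalars [Finite ι] {κ : Type*} [Fintype κ]
    {b : κ → MvPolynomial σ k ⧸ Ideal.span (Set.range q)} (hb : LinearIndependent k b) :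
    LinearIndependent K fun j => extendScalars K q (b j) := by
  classical
  obtain ⟨g, hg⟩ := LinearMap.exists_leftInverse_of_injective (Fintype.linearCombination k b)
    (LinearMap.ker_eq_bot.2 (linearIndependent_iff_injective_fintypeLinearCombination.1 hb))
  have hg' : ∀ j, g (b j) = Pi.single j 1 := by
    intro j
    have := LinearMap.congr_fun hg (Pi.single j 1)
    rwa [LinearMap.comp_apply, Fintype.linearCombination_apply_single, one_smul] at this
  choose p hp using fun j => Ideal.Quotient.mk_surjective (b j)
  rw [Fintype.linearIndependent_iff]
  intro w hw i
  obtain ⟨Λ, hΛ0, hΛ⟩ := exists_extended_functional K q (LinearMap.proj i ∘ₗ g)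
  have hmem : ∑ j, w j • map (algebraMap k K) (p j) ∈
      Ideal.span (Set.range fun i => map (algebraMap k K) (q i)) := by
    rw [← Ideal.Quotient.eq_zero_iff_mem, ← hw, map_sum]
    refine Finset.sum_congr rfl fun j _ => ?_
    rw [← hp, extendScalars_mk]
    exact map_smul (Ideal.Quotient.mkₐ K _) (w j) _
  have := hΛ0 _ hmem
  rw [map_sum, Finset.sum_eq_single i ?_ (by simp)] at this
  · rwa [map_smul, hΛ, hp, LinearMap.comp_apply, hg', LinearMap.proj_apply, Pi.single_eq_same,
      map_one, smul_eq_mul, mul_one] at this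
  · intro j _ hj
    rw [map_smul, hΛ, hp, LinearMap.comp_apply, hg', LinearMap.proj_apply,
      Pi.single_eq_of_ne hj.symm, map_zero, smul_zero]

theorem extendScalars_mem_piece {n : ℕ} (q : ι → MvPolynomial (Fin n) k) {i : ℕ}
    {a : MvPolynomial (Fin n) k ⧸ Ideal.span (Set.range q)} (ha : a ∈ piece _ i) :
    extendScalars K q a ∈ piece _ i := by
  obtain ⟨p, hp, rfl⟩ := mem_piece.1 ha
  exact mem_piece.2 ⟨_, hp.map _, rfl⟩

theorem extendScalars_linClass_single {n : ℕ} (q : ι → MvPolynomial (Fin n) k) (i : Fin n) :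
    extendScalars K q (linClass _ (Pi.single i 1)) = linClass _ (Pi.single i 1) := by
  change Ideal.Quotient.mk _ (map (algebraMap k K) (lin _)) = Ideal.Quotient.mk _ (lin _)
  rw [lin_single, lin_single, map_X]

end BaseChange

section Main

variable {k : Type} [Field k] [IsAlgClosed k] [CharZero k] {q : Fin 5 → MvPolynomial (Fin 5) k}

theorem exists_forall_eq_zero_of_mul_eq_zero (hq : ∀ i, (q i).IsHomogeneous 2)
    (h0 : ∀ p : Fin 5 → k, (∀ i, eval p (q i) = 0) → p = 0) :
    ∃ f : MvPolynomial (Fin 5) k, f ≠ 0 ∧ ∀ c, eval c f ≠ 0 →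
      ∀ v ∈ piece (Ideal.span (Set.range q)) 2, linClass _ c * v = 0 → v = 0 := by
  have hG := quadricData hq h0
  have := hG.finite 2
  have := hG.finite 3
  let B := Module.finBasis k (piece (Ideal.span (Set.range q)) 2)
  let B' := (Module.finBasis k (piece (Ideal.span (Set.range q)) 3)).reindex
    (finCongr hG.finrank_two_eq_three.symm)
  have hmem : ∀ i j, linClass (Ideal.span (Set.range q)) (Pi.single i 1) * B j ∈
      piece (Ideal.span (Set.range q)) 3 := fun i j =>
    hG.mul_mem (i := 1) (j := 2) (mem_piece_one.2 ⟨_, rfl⟩) (B j).2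
  let M := fun i l j => B'.repr ⟨_, hmem i j⟩ l
  have hM : ∀ i j, linClass (Ideal.span (Set.range q)) (Pi.single i 1) * B j =
      ∑ l, M i l j • (B' l : MvPolynomial (Fin 5) k ⧸ Ideal.span (Set.range q)) := by
    intro i j
    have := congrArg Subtype.val (B'.sum_repr ⟨_, hmem i j⟩)
    rw [Submodule.coe_sum] at this
    exact this.symm
  have hB' : LinearIndependent k
      fun l => (B' l : MvPolynomial (Fin 5) k ⧸ Ideal.span (Set.range q)) :=
    B'.linearIndependent.map' (Submodule.subtype _) (Submodule.ker_subtype _)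
  have hB : LinearIndependent k
      fun l => (B l : MvPolynomial (Fin 5) k ⧸ Ideal.span (Set.range q)) :=
    B.linearIndependent.map' (Submodule.subtype _) (Submodule.ker_subtype _)
  let N : Matrix (Fin _) (Fin _) (MvPolynomial (Fin 5) k) :=
    Matrix.of fun l j => ∑ i, X i * C (M i l j)
  refine ⟨N.det, ?_, ?_⟩
  · obtain ⟨K, _, _, t, d, _, ht, hd⟩ := exists_generic_field k 5
    have : CharZero K := charZero_of_injective_algebraMap (algebraMap k K).injective
    intro hdet
    have hdet' : ((aeval t).mapMatrix N).det = 0 := by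
      rw [← AlgHom.map_det, hdet, map_zero]
    obtain ⟨w, hw0, hw⟩ := Matrix.exists_mulVec_eq_zero_iff.2 hdet'
    apply hw0
    have hv : ∑ j, w j • extendScalars K q (B j) = 0 := by
      refine generic_eq_zero_of_mul_eq_zero hq h0 ht hd
        (sum_mem fun j _ => Submodule.smul_mem _ _ (extendScalars_mem_piece K q (B j).2)) ?_
      have hj : ∀ j, linClass _ t * extendScalars K q (B j) =
          ∑ l, ((aeval t).mapMatrix N) l j • extendScalars K q (B' l) := by
        intro j
        simp only [linClass_eq_sum t, ← extendScalars_linClass_single K q, Finset.sum_mul,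
          smul_mul_assoc, ← map_mul, hM, map_sum, extendScalars_smul, Finset.smul_sum]
        rw [Finset.sum_comm]
        refine Finset.sum_congr rfl fun l _ => ?_
        simp [N, Finset.sum_smul, mul_smul]
      simp only [Finset.mul_sum, mul_smul_comm, hj, Finset.smul_sum]
      rw [Finset.sum_comm]
      refine Finset.sum_eq_zero fun l _ => ?_
      have := congrFun hw l
      simp only [smul_smul, ← Finset.sum_smul]
      rw [Finset.sum_congr rfl fun j _ => mul_comm (w j) _]
      rw [Matrix.mulVec, dotProduct, Pi.zero_apply] at this
      rw [this, zero_smul]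
    funext j
    exact Fintype.linearIndependent_iff.1 (linearIndependent_extendScalars K q hB) w hv j
  · intro c hc v hv hcv
    rw [RingHom.map_det] at hc
    have hj : ∀ j, linClass (Ideal.span (Set.range q)) c * B j =
        ∑ l, ((eval c).mapMatrix N) l j •
          (B' l : MvPolynomial (Fin 5) k ⧸ Ideal.span (Set.range q)) := by
      intro j
      simp only [linClass_eq_sum c, Finset.sum_mul, smul_mul_assoc, hM, Finset.smul_sum]
      rw [Finset.sum_comm]
      refine Finset.sum_congr rfl fun l _ => ?_
      simp [N, Finset.sum_smul, mul_smul]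
    let w := fun j => B.repr ⟨v, hv⟩ j
    have hw : v = ∑ j, w j • (B j : MvPolynomial (Fin 5) k ⧸ Ideal.span (Set.range q)) := by
      have := congrArg Subtype.val (B.sum_repr ⟨v, hv⟩)
      rw [Submodule.coe_sum] at this
      exact this.symm
    have hw0 : w = 0 := by
      refine Matrix.eq_zero_of_mulVec_eq_zero hc ?_
      funext l
      refine Fintype.linearIndependent_iff.1 hB' _ ?_ l
      rw [← hcv, hw]
      simp only [Finset.mul_sum, mul_smul_comm, hj, Finset.smul_sum]
      rw [Finset.sum_comm]
      refine Finset.sum_congr rfl fun l _ => ?_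
      rw [Matrix.mulVec, dotProduct, Finset.sum_smul]
      exact Finset.sum_congr rfl fun j _ => by rw [smul_smul, mul_comm]
    rw [hw, hw0]
    exact Finset.sum_eq_zero fun j _ => zero_smul k _

end Main

end QuadricCI

/-- an artinian complete intersection `A = ℂ[x₀,…,x₄]/I` of 5 quadrics has the
Weak Lefschetz Property: for a general linear form `L` (i.e. for all `L` with coefficient
vector outside the zero locus of some nonzero polynomial `f`) and every `k ≥ 0`, the
multiplication `μ_L : A_k → A_{k+1}` has maximal rank (is injective or surjective). -/
theorem stmt19 (q : Fin 5 → MvPolynomial (Fin 5) ℂ)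
    (hhom : ∀ i, (q i).IsHomogeneous 2)
    (hci : ∀ p : Fin 5 → ℂ, (∀ i, MvPolynomial.eval p (q i) = 0) → p = 0) :
    ∃ f : MvPolynomial (Fin 5) ℂ, f ≠ 0 ∧
      ∀ c : Fin 5 → ℂ, MvPolynomial.eval c f ≠ 0 →
        ∀ k : ℕ,
          (∀ v ∈ gradedPiece (Ideal.span (Set.range q)) k,
              Ideal.Quotient.mkₐ ℂ (Ideal.span (Set.range q)) (linform c) * v = 0 → v = 0) ∨
          Submodule.map
              (LinearMap.mulLeft ℂ (Ideal.Quotient.mkₐ ℂ (Ideal.span (Set.range q)) (linform c)))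
              (gradedPiece (Ideal.span (Set.range q)) k)
            = gradedPiece (Ideal.span (Set.range q)) (k + 1) := by
  have hG := QuadricCI.quadricData hhom hci
  obtain ⟨f, hf, h⟩ := QuadricCI.exists_forall_eq_zero_of_mul_eq_zero hhom hci
  refine ⟨f, hf, fun c hc k => ?_⟩
  have hinj := h c hc
  rcases lt_or_ge k 3 with hk | hk
  · left
    have hinj' := fun v hv => hG.eq_zero_of_mul_eq_zero_of_succ (v := v) (by decide) hinj hv
    interval_cases k
    · exact fun v hv => hG.eq_zero_of_mul_eq_zero_of_succ (by decide) hinj' hv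
    · exact hinj'
    · exact hinj
  · right
    have := hG.finite 2
    have := hG.finite 3
    have hmul : ∀ {i v}, v ∈ QuadricCI.piece (Ideal.span (Set.range q)) i →
        QuadricCI.linClass _ c * v ∈ QuadricCI.piece (Ideal.span (Set.range q)) (i + 1) := by
      intro i v hv
      have := hG.mul_mem (QuadricCI.mem_piece_one.2 ⟨c, rfl⟩) hv
      rwa [add_comm] at this
    have hsurj : ∀ i, ∀ w ∈ QuadricCI.piece (Ideal.span (Set.range q)) (i + 3),
        ∃ v ∈ QuadricCI.piece (Ideal.span (Set.range q)) (i + 2),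
          QuadricCI.linClass _ c * v = w := by
      intro i
      induction i with
      | zero =>
        exact QuadricCI.exists_mul_eq_of_injective_of_finrank_eq hG.finrank_two_eq_three
          (fun v hv => hmul hv) hinj
      | succ i ih => exact QuadricCI.exists_mul_eq_succ ih
    refine le_antisymm ?_ fun w hw => ?_
    · rintro _ ⟨v, hv, rfl⟩
      exact hmul hv
    · obtain ⟨i, rfl⟩ := Nat.exists_eq_add_of_le' (show 2 ≤ k by omega)
      obtain ⟨v, hv, rfl⟩ := hsurj i w hw
      exact ⟨v, hv, rfl⟩
end
end
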